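/- Let m ≥ 1 be an integer and let u be a classical m-equivariant solution of CSS on I = (−1,0) such that ‖u(t,·)‖_{L²}² = 8π(m+1) for all t ∈ (−1,0) and ‖∂_r u(t,·)‖_{L²} → ∞ as t ↗ 0. Then for every R > 0 and every smooth φ : [0,∞) → [0,1] with φ = 1 on [0,1] and φ = 0 on [2,∞), one has lim_{t↗0} 2π·∫₀^∞ φ(r/R)²·r²·|u(t,r)|²·r dr = 0; that is, the localized weighted norm ‖φ(|x|/R)·|x|·u(t)‖_{L²} tends to 0 at the blowup time. -/

import Mathlib

open MeasureTheory Set Filter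

noncomputable section

/-- The Jackiw–Pi vortex `Q(r) = √8 (m+1) r^m / (1 + r^(2m+2))`. -/
def Q (m : ℕ) (r : ℝ) : ℝ :=
  Real.sqrt 8 * (m + 1) * r ^ m / (1 + r ^ (2 * m + 2))

/-- `A_θ[u](r) = -(1/2) ∫₀^r |u(r')|² r' dr'`. -/
def Atheta (u : ℝ → ℂ) (r : ℝ) : ℝ :=
  -(1 / 2) * ∫ s in (0:ℝ)..r, ‖u s‖ ^ 2 * s

/-- Bilinear version `A_θ[f,g](r) = -(1/2) ∫₀^r Re(conj f g) r' dr'`. -/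
def Atheta2 (f g : ℝ → ℂ) (r : ℝ) : ℝ :=
  -(1 / 2) * ∫ s in (0:ℝ)..r, ((starRingEnd ℂ) (f s) * g s).re * s

/-- `A_t[u](r) = -∫_r^∞ (m + A_θ[u](r')) |u(r')|² / r' dr'`. -/
def At (m : ℕ) (u : ℝ → ℂ) (r : ℝ) : ℝ :=
  -∫ s in Set.Ioi r, ((m : ℝ) + Atheta u s) * ‖u s‖ ^ 2 / s

/-- Squared (2D radial) `L²` norm: `‖u‖² = 2π ∫₀^∞ |u(r)|² r dr`. -/
def L2sq (u : ℝ → ℂ) : ℝ :=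
  2 * Real.pi * ∫ r in Set.Ioi (0:ℝ), ‖u r‖ ^ 2 * r

/-- Squared equivariant `Ḣ¹_m` norm. -/
def H1msq (m : ℕ) (u : ℝ → ℂ) : ℝ :=
  2 * Real.pi * ∫ r in Set.Ioi (0:ℝ), (‖deriv u r‖ ^ 2 + (m : ℝ) ^ 2 * ‖u r‖ ^ 2 / r ^ 2) * r

/-- The energy functional. -/
def Energy (m : ℕ) (u : ℝ → ℂ) : ℝ :=
  2 * Real.pi * ∫ r in Set.Ioi (0:ℝ),
    ((1 / 2) * ‖deriv u r‖ ^ 2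
      + (1 / 2) * (((m : ℝ) + Atheta u r) / r) ^ 2 * ‖u r‖ ^ 2
      - (1 / 4) * ‖u r‖ ^ 4) * r

/-- The Chern–Simons–Schrödinger equation at the point `(t, r)`:
`i ∂_t u - A_t[u] u + ∂_r² u + (1/r) ∂_r u - ((m + A_θ[u])/r)² u + |u|² u = 0`. -/
def CSSeq (m : ℕ) (u : ℝ → ℝ → ℂ) (t r : ℝ) : Prop :=
  Complex.I * deriv (fun s => u s r) t
    - (At m (u t) r : ℂ) * u t r
    + deriv (deriv (u t)) r
    + (1 / (r : ℂ)) * deriv (u t) r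
    - ((((m : ℝ) + Atheta (u t) r) / r : ℝ) : ℂ) ^ 2 * u t r
    + ((‖u t r‖ : ℝ) : ℂ) ^ 2 * u t r = 0

/-- A classical `m`-equivariant solution of CSS on the open interval `I`. -/
structure IsCSS (m : ℕ) (I : Set ℝ) (u : ℝ → ℝ → ℂ) : Prop where
  smooth : ContDiffOn ℝ (⊤ : ℕ∞) (fun p : ℝ × ℝ => u p.1 p.2) (I ×ˢ Set.Ioi (0:ℝ))
  integrable : ∀ t ∈ I, IntegrableOn (fun r => ‖u t r‖ ^ 2 * r) (Set.Ioi (0:ℝ))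
  equivariant : ∃ U : ℝ → ℝ × ℝ → ℂ,
    ContDiffOn ℝ (⊤ : ℕ∞) (fun p : ℝ × (ℝ × ℝ) => U p.1 p.2) (I ×ˢ (Set.univ : Set (ℝ × ℝ))) ∧
    ∀ t ∈ I, ∀ x : ℝ × ℝ, x ≠ 0 →
      U t x = u t (Real.sqrt (x.1 ^ 2 + x.2 ^ 2)) *
        (((x.1 : ℂ) + (x.2 : ℂ) * Complex.I) / ((Real.sqrt (x.1 ^ 2 + x.2 ^ 2) : ℝ) : ℂ)) ^ m
  bounded : ∀ J : Set ℝ, J ⊆ I → IsCompact J → ∃ C : ℝ, ∀ t ∈ J,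
    Real.sqrt (L2sq (u t)) + Real.sqrt (H1msq m (u t)) ≤ C
  eq : ∀ t ∈ I, ∀ r : ℝ, 0 < r → CSSeq m u t r

/-- Tightness: uniformly small mass near spatial infinity. -/
def Tight (I : Set ℝ) (u : ℝ → ℝ → ℂ) : Prop :=
  ∀ η : ℝ, 0 < η → ∃ R : ℝ, ∀ t ∈ I,
    2 * Real.pi * ∫ r in Set.Ioi R, ‖u t r‖ ^ 2 * r < η

/-- The real inner product `(f,g)_r = Re (2π ∫₀^∞ f conj(g) r dr)`. -/
def iprod (f g : ℝ → ℂ) : ℝ :=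
  2 * Real.pi * (∫ r in Set.Ioi (0:ℝ), f r * (starRingEnd ℂ) (g r) * (r : ℂ)).re

/-- `ΛQ = r Q' + Q`. -/
def LamQ (m : ℕ) (r : ℝ) : ℝ := r * deriv (Q m) r + Q m r

/-- The linearized Bogomol'nyi operator `L_Q`. -/
def LQ (m : ℕ) (f : ℝ → ℂ) (r : ℝ) : ℂ :=
  deriv f r - ((((m : ℝ) + Atheta (fun s => (Q m s : ℂ)) r) / r : ℝ) : ℂ) * f r
    - ((2 * Atheta2 (fun s => (Q m s : ℂ)) f r / r : ℝ) : ℂ) * (Q m r : ℂ)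

end

/-!
Completing the Bogomol'nyi square writes the conserved energy of a solution as the squared `L²` norm
of `∂ᵣu - (m + A_θ[u]) u / r`, so this quantity stays bounded while the gradient blows up. Its
boundedness makes the mass function `M(r) = -A_θ[u](r)` an approximate solution of the logistic
equation `r M' = M (2 (m + 1) - M)`, with an error `O(r)` uniform in time. If some small disc
carried little mass, the energy would control the gradient; hence near the blowup time every disc
carries a definite amount of mass, and logistic growth over many logarithmic scales pushes `M` to
its limit `2 (m + 1)` at every fixed radius. At the threshold mass this is all the mass there is, so
all of it concentrates at the origin.

Energy conservation is proved by doubling the time: up to a correction with explicit time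
derivative, the imaginary part of the pairing of `u(t + h)` with `u(t)` is `-h` times the energy to
first order in `h`. Its derivative in `t` involves only the difference of the two potentials and is
`o(h)`, so that no decay of `∂ₜu` or `∂ᵣ²u` is needed.
-/

open scoped Topology ComplexConjugate

/-! ### Integration on the half-line -/

lemma integrableOn_Ioi_of_norm_le {E : Type*} [NormedAddCommGroup E] {f : ℝ → E} {g : ℝ → ℝ}
    {a : ℝ} (hf : ContinuousOn f (Ioi a)) (hg : IntegrableOn g (Ioi a))
    (hfg : ∀ r, a < r → ‖f r‖ ≤ g r) : IntegrableOn f (Ioi a) :=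
  Integrable.mono' hg (hf.aestronglyMeasurable measurableSet_Ioi)
    ((ae_restrict_iff' measurableSet_Ioi).2 (Eventually.of_forall hfg))

lemma norm_integral_Ioi_le_of_norm_le {E : Type*} [NormedAddCommGroup E] [NormedSpace ℝ E]
    {f : ℝ → E} {g : ℝ → ℝ} {a : ℝ} (hg : IntegrableOn g (Ioi a))
    (hfg : ∀ r, a < r → ‖f r‖ ≤ g r) : ‖∫ r in Ioi a, f r‖ ≤ ∫ r in Ioi a, g r :=
  norm_integral_le_of_norm_le hg
    ((ae_restrict_iff' measurableSet_Ioi).2 (Eventually.of_forall hfg))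

section WeightedCauchySchwarz

variable {α : Type*} [MeasurableSpace α] {μ : Measure α} {f g w : α → ℝ}

lemma integrable_mul_mul_weight (hf : AEStronglyMeasurable f μ) (hg : AEStronglyMeasurable g μ)
    (hw : AEStronglyMeasurable w μ) (hw0 : 0 ≤ᵐ[μ] w) (hf2 : Integrable (fun x => f x ^ 2 * w x) μ)
    (hg2 : Integrable (fun x => g x ^ 2 * w x) μ) :
    Integrable (fun x => f x * g x * w x) μ := by
  refine Integrable.mono' (hf2.add hg2) ((hf.mul hg).mul hw) ?_
  filter_upwards [hw0] with x hx
  simp only [Pi.add_apply, Real.norm_eq_abs]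
  rw [abs_mul, abs_of_nonneg hx, ← add_mul]
  refine mul_le_mul_of_nonneg_right ?_ hx
  rw [abs_le]
  constructor <;> nlinarith [sq_nonneg (f x + g x), sq_nonneg (f x - g x)]

lemma sq_integral_mul_mul_weight_le (hf : AEStronglyMeasurable f μ)
    (hg : AEStronglyMeasurable g μ) (hw : AEStronglyMeasurable w μ) (hw0 : 0 ≤ᵐ[μ] w)
    (hf2 : Integrable (fun x => f x ^ 2 * w x) μ) (hg2 : Integrable (fun x => g x ^ 2 * w x) μ) :
    (∫ x, f x * g x * w x ∂μ) ^ 2 ≤ (∫ x, f x ^ 2 * w x ∂μ) * ∫ x, g x ^ 2 * w x ∂μ := by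
  have hfg := integrable_mul_mul_weight hf hg hw hw0 hf2 hg2
  have quadratic_nonneg : ∀ y : ℝ, 0 ≤ (∫ x, f x ^ 2 * w x ∂μ) * (y * y) +
      (-2 * ∫ x, f x * g x * w x ∂μ) * y + ∫ x, g x ^ 2 * w x ∂μ := by
    intro y
    have expand : ∫ x, (y * f x - g x) ^ 2 * w x ∂μ = (∫ x, f x ^ 2 * w x ∂μ) * (y * y) +
        (-2 * ∫ x, f x * g x * w x ∂μ) * y + ∫ x, g x ^ 2 * w x ∂μ := by
      have : (fun x => (y * f x - g x) ^ 2 * w x) = fun x =>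
          ((y * y) * (f x ^ 2 * w x) + (-2 * y) * (f x * g x * w x)) + g x ^ 2 * w x := by
        funext x; ring
      rw [this, integral_add (by exact (hf2.const_mul _).add (hfg.const_mul _)) hg2,
        integral_add (hf2.const_mul _) (hfg.const_mul _), integral_const_mul, integral_const_mul]
      ring
    rw [← expand]
    refine integral_nonneg_of_ae ?_
    filter_upwards [hw0] with x hx
    exact mul_nonneg (sq_nonneg _) hx
  have := discrim_le_zero quadratic_nonneg
  unfold discrim at this
  nlinarith

end WeightedCauchySchwarz

lemma ae_restrict_nonneg_of_subset_Ioi {S : Set ℝ} (hS : MeasurableSet S) (hS0 : S ⊆ Ioi 0) :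
    0 ≤ᵐ[volume.restrict S] fun r : ℝ => r :=
  (ae_restrict_iff' hS).2 (Eventually.of_forall fun _ hr => (mem_Ioi.1 (hS0 hr)).le)

section RadialCauchySchwarz

variable {E F : Type*} [NormedAddCommGroup E] [NormedAddCommGroup F] {S : Set ℝ}
  {f : ℝ → E} {g : ℝ → F}

lemma integrableOn_norm_mul_norm_mul_self (hS : MeasurableSet S) (hS0 : S ⊆ Ioi 0)
    (hf : Continuous f) (hg : Continuous g) (hf2 : IntegrableOn (fun r => ‖f r‖ ^ 2 * r) S)
    (hg2 : IntegrableOn (fun r => ‖g r‖ ^ 2 * r) S) :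
    IntegrableOn (fun r => ‖f r‖ * ‖g r‖ * r) S :=
  integrable_mul_mul_weight hf.norm.aestronglyMeasurable hg.norm.aestronglyMeasurable
    continuous_id.aestronglyMeasurable (ae_restrict_nonneg_of_subset_Ioi hS hS0) hf2 hg2

lemma setIntegral_sq_norm_mul_self_nonneg (hS : MeasurableSet S) (hS0 : S ⊆ Ioi 0) (f : ℝ → E) :
    0 ≤ ∫ r in S, ‖f r‖ ^ 2 * r :=
  setIntegral_nonneg hS fun _ hr => mul_nonneg (sq_nonneg _) (mem_Ioi.1 (hS0 hr)).le

lemma setIntegral_sq_norm_mul_self_le (hS0 : S ⊆ Ioi 0)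
    (hf2 : IntegrableOn (fun r => ‖f r‖ ^ 2 * r) (Ioi 0)) :
    ∫ r in S, ‖f r‖ ^ 2 * r ≤ ∫ r in Ioi (0 : ℝ), ‖f r‖ ^ 2 * r :=
  setIntegral_mono_set hf2 ((ae_restrict_iff' measurableSet_Ioi).2 (Eventually.of_forall
    fun _ hr => mul_nonneg (sq_nonneg _) (mem_Ioi.1 hr).le)) hS0.eventuallyLE

lemma setIntegral_norm_mul_norm_mul_self_le (hS : MeasurableSet S) (hS0 : S ⊆ Ioi 0)
    (hf : Continuous f) (hg : Continuous g) (hf2 : IntegrableOn (fun r => ‖f r‖ ^ 2 * r) S)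
    (hg2 : IntegrableOn (fun r => ‖g r‖ ^ 2 * r) S) {a b c : ℝ}
    (ha : ∫ r in S, ‖f r‖ ^ 2 * r ≤ a) (hb : ∫ r in S, ‖g r‖ ^ 2 * r ≤ b) (hc : 0 ≤ c)
    (hab : a * b ≤ c ^ 2) : ∫ r in S, ‖f r‖ * ‖g r‖ * r ≤ c := by
  refine (abs_le_of_sq_le_sq' ?_ hc).2
  calc (∫ r in S, ‖f r‖ * ‖g r‖ * r) ^ 2
      ≤ (∫ r in S, ‖f r‖ ^ 2 * r) * ∫ r in S, ‖g r‖ ^ 2 * r :=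
        sq_integral_mul_mul_weight_le hf.norm.aestronglyMeasurable hg.norm.aestronglyMeasurable
          continuous_id.aestronglyMeasurable (ae_restrict_nonneg_of_subset_Ioi hS hS0) hf2 hg2
    _ ≤ a * b := mul_le_mul ha hb (setIntegral_sq_norm_mul_self_nonneg hS hS0 g)
        ((setIntegral_sq_norm_mul_self_nonneg hS hS0 f).trans ha)
    _ ≤ c ^ 2 := hab

end RadialCauchySchwarz

/-- `f` is continuous and square integrable for the planar radial measure `r dr` on `(0, ∞)`, with
squared norm at most `A`. -/
structure IsRadialL2 (A : ℝ) (f : ℝ → ℂ) : Prop where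
  continuous : Continuous f
  integrable : IntegrableOn (fun r => ‖f r‖ ^ 2 * r) (Ioi 0)
  integral_le : ∫ r in Ioi (0 : ℝ), ‖f r‖ ^ 2 * r ≤ A

namespace IsRadialL2

variable {A A' : ℝ} {f g : ℝ → ℂ}

lemma mono (hf : IsRadialL2 A f) (hA : A ≤ A') : IsRadialL2 A' f :=
  ⟨hf.continuous, hf.integrable, hf.integral_le.trans hA⟩

lemma integrable_mul (hf : IsRadialL2 A f) (hg : IsRadialL2 A' g) :
    IntegrableOn (fun r => ‖f r‖ * ‖g r‖ * r) (Ioi 0) :=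
  integrableOn_norm_mul_norm_mul_self measurableSet_Ioi le_rfl hf.continuous hg.continuous
    hf.integrable hg.integrable

lemma integral_mul_le (hf : IsRadialL2 A f) (hg : IsRadialL2 A' g) {c : ℝ} (hc : 0 ≤ c)
    (hAc : A * A' ≤ c ^ 2) : ∫ r in Ioi (0 : ℝ), ‖f r‖ * ‖g r‖ * r ≤ c :=
  setIntegral_norm_mul_norm_mul_self_le measurableSet_Ioi le_rfl hf.continuous hg.continuous
    hf.integrable hg.integrable hf.integral_le hg.integral_le hc hAc

lemma sub (hf : IsRadialL2 A f) (hg : IsRadialL2 A' g) :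
    IsRadialL2 (2 * A + 2 * A') fun r => f r - g r := by
  have hmajorant : IntegrableOn (fun r => 2 * (‖f r‖ ^ 2 * r) + 2 * (‖g r‖ ^ 2 * r)) (Ioi 0) :=
    (hf.integrable.const_mul 2).add (hg.integrable.const_mul 2)
  have hle : ∀ r, 0 < r → ‖f r - g r‖ ^ 2 * r ≤ 2 * (‖f r‖ ^ 2 * r) + 2 * (‖g r‖ ^ 2 * r) := by
    intro r hr
    have htri : ‖f r - g r‖ ^ 2 ≤ (‖f r‖ + ‖g r‖) ^ 2 :=
      pow_le_pow_left₀ (norm_nonneg _) (norm_sub_le _ _) 2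
    nlinarith [mul_le_mul_of_nonneg_right htri hr.le,
      mul_nonneg (sq_nonneg (‖f r‖ - ‖g r‖)) hr.le]
  have hcont : Continuous fun r => f r - g r := hf.continuous.sub hg.continuous
  have hint : IntegrableOn (fun r => ‖f r - g r‖ ^ 2 * r) (Ioi 0) := by
    refine integrableOn_Ioi_of_norm_le
      ((hcont.norm.pow 2).mul continuous_id).continuousOn hmajorant fun r hr => ?_
    rw [Real.norm_of_nonneg (by positivity)]
    exact hle r hr
  refine ⟨hcont, hint, ?_⟩
  calc ∫ r in Ioi (0 : ℝ), ‖f r - g r‖ ^ 2 * r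
      ≤ ∫ r in Ioi (0 : ℝ), (2 * (‖f r‖ ^ 2 * r) + 2 * (‖g r‖ ^ 2 * r)) :=
        setIntegral_mono_on hint hmajorant measurableSet_Ioi hle
    _ = 2 * (∫ r in Ioi (0 : ℝ), ‖f r‖ ^ 2 * r) + 2 * ∫ r in Ioi (0 : ℝ), ‖g r‖ ^ 2 * r := by
        rw [integral_add (hf.integrable.const_mul 2) (hg.integrable.const_mul 2),
          integral_const_mul, integral_const_mul]
    _ ≤ 2 * A + 2 * A' := by linarith [hf.integral_le, hg.integral_le]

end IsRadialL2

/-- An integrable weight on `(0, ∞)` dominating `x / s ^ 3` for every `x` with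
`|x| ≤ min 1 (s ^ 4)`; all singular radial integrals below are controlled by it. -/
noncomputable def decayWeight (s : ℝ) : ℝ := 4 * s / (1 + s ^ 2) ^ 2

namespace decayWeight

lemma nonneg {s : ℝ} (hs : 0 ≤ s) : 0 ≤ decayWeight s := by unfold decayWeight; positivity

lemma hasDerivAt_primitive (s : ℝ) :
    HasDerivAt (fun s : ℝ => -2 * (1 + s ^ 2)⁻¹) (decayWeight s) s := by
  have h : HasDerivAt (fun s : ℝ => 1 + s ^ 2) (2 * s) s := by
    simpa using (hasDerivAt_pow 2 s).const_add 1
  refine ((h.inv (by positivity)).const_mul (-2)).congr_deriv ?_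
  unfold decayWeight
  field_simp
  ring

lemma tendsto_primitive_atTop : Tendsto (fun s : ℝ => -2 * (1 + s ^ 2)⁻¹) atTop (𝓝 0) := by
  have : Tendsto (fun s : ℝ => 1 + s ^ 2) atTop atTop :=
    tendsto_atTop_add_const_left _ _ (tendsto_pow_atTop (by norm_num))
  simpa using this.inv_tendsto_atTop.const_mul (-2)

lemma integrableOn : IntegrableOn decayWeight (Ioi 0) :=
  integrableOn_Ioi_deriv_of_nonneg (hasDerivAt_primitive 0).continuousAt.continuousWithinAt
    (fun s _ => hasDerivAt_primitive s) (fun _ hs => nonneg (mem_Ioi.1 hs).le)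
    tendsto_primitive_atTop

lemma integral_eq_two : ∫ s in Ioi (0 : ℝ), decayWeight s = 2 := by
  rw [integral_Ioi_of_hasDerivAt_of_nonneg' (fun s _ => hasDerivAt_primitive s)
    (fun _ hs => nonneg (mem_Ioi.1 hs).le) tendsto_primitive_atTop]
  norm_num

lemma abs_div_cube_le {s a x : ℝ} (hs : 0 < s) (hx : |x| ≤ a)
    (hx4 : s ≤ 1 → |x| ≤ a * s ^ 4) : |x| / s ^ 3 ≤ a * decayWeight s := by
  have ha : 0 ≤ a := (abs_nonneg x).trans hx
  have cancel : a * decayWeight s * s ^ 3 = a * (4 * s ^ 4 / (1 + s ^ 2) ^ 2) := by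
    unfold decayWeight; ring
  rw [div_le_iff₀ (by positivity), cancel]
  rcases le_total s 1 with h | h
  · refine (hx4 h).trans (mul_le_mul_of_nonneg_left ?_ ha)
    rw [le_div_iff₀ (by positivity)]
    have : (1 + s ^ 2) ^ 2 ≤ 4 := by nlinarith [sq_nonneg s, mul_le_mul h h hs.le zero_le_one]
    nlinarith [pow_pos hs 4]
  · refine hx.trans (le_mul_of_one_le_right ha ?_)
    rw [le_div_iff₀ (by positivity)]
    have : 1 ≤ s ^ 2 := by nlinarith
    nlinarith

end decayWeight

/-! ### Radial functionals of a profile -/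

/-- The nonnegative function `-A_θ[g](r)`: half of the mass of `g` inside radius `r`, without the
factor `2π`. -/
noncomputable def halfMass (g : ℝ → ℂ) (r : ℝ) : ℝ := (1 / 2) * ∫ s in (0 : ℝ)..r, ‖g s‖ ^ 2 * s

section halfMass

variable {g : ℝ → ℂ}

lemma Atheta_eq_neg_halfMass (g : ℝ → ℂ) (r : ℝ) : Atheta g r = -halfMass g r := by
  unfold Atheta halfMass; ring

@[simp]
lemma halfMass_zero (g : ℝ → ℂ) : halfMass g 0 = 0 := by simp [halfMass]

lemma halfMass_nonneg {r : ℝ} (hr : 0 ≤ r) : 0 ≤ halfMass g r :=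
  mul_nonneg (by norm_num)
    (intervalIntegral.integral_nonneg hr fun _ hs => mul_nonneg (sq_nonneg _) hs.1)

lemma hasDerivAt_halfMass (hg : Continuous g) (r : ℝ) :
    HasDerivAt (halfMass g) (‖g r‖ ^ 2 * r / 2) r := by
  have hc : Continuous fun s => ‖g s‖ ^ 2 * s := by fun_prop
  refine ((intervalIntegral.integral_hasDerivAt_right (hc.intervalIntegrable 0 r)
    (hc.stronglyMeasurableAtFilter _ _) hc.continuousAt).const_mul (1 / 2 : ℝ)).congr_deriv ?_
  ring

lemma continuous_halfMass (hg : Continuous g) : Continuous (halfMass g) :=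
  continuous_iff_continuousAt.2 fun r => (hasDerivAt_halfMass hg r).continuousAt

lemma monotoneOn_halfMass (hg : Continuous g) : MonotoneOn (halfMass g) (Ici 0) := by
  refine monotoneOn_of_deriv_nonneg (convex_Ici 0) (continuous_halfMass hg).continuousOn
    (fun r _ => (hasDerivAt_halfMass hg r).differentiableAt.differentiableWithinAt) fun r hr => ?_
  rw [interior_Ici, mem_Ioi] at hr
  rw [(hasDerivAt_halfMass hg r).deriv]
  positivity

lemma tendsto_halfMass_atTop (hg2 : IntegrableOn (fun r => ‖g r‖ ^ 2 * r) (Ioi 0)) :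
    Tendsto (halfMass g) atTop (𝓝 (1 / 2 * ∫ r in Ioi (0 : ℝ), ‖g r‖ ^ 2 * r)) :=
  (intervalIntegral_tendsto_integral_Ioi 0 hg2 tendsto_id).const_mul (1 / 2 : ℝ)

lemma halfMass_le (hg : Continuous g) (hg2 : IntegrableOn (fun r => ‖g r‖ ^ 2 * r) (Ioi 0))
    {r : ℝ} (hr : 0 ≤ r) : halfMass g r ≤ 1 / 2 * ∫ r in Ioi (0 : ℝ), ‖g r‖ ^ 2 * r := by
  refine ge_of_tendsto (tendsto_halfMass_atTop hg2) ?_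
  filter_upwards [eventually_ge_atTop r] with s hs
  exact monotoneOn_halfMass hg hr (hr.trans hs) hs

end halfMass

/-- `m² - (m - M)²` with `M = halfMass g`: the numerator of the change that the gauge field
produces in the centrifugal potential `m² / r²`. -/
noncomputable def centrifugalDefect (m : ℕ) (g : ℝ → ℂ) (r : ℝ) : ℝ :=
  2 * m * halfMass g r - halfMass g r ^ 2

/-- The nonlocal potential `A_t[g] + ((m + A_θ[g])² - m²) / r²`, written as one absolutely
convergent integral; see `IsProfile.At_eq`. -/
noncomputable def gaugePotential (m : ℕ) (g : ℝ → ℂ) (r : ℝ) : ℝ :=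
  -2 * ∫ s in Ioi r, centrifugalDefect m g s / s ^ 3

/-- The full nonlinear potential: the radial equation reads
`i ∂ₜv + ∂ᵣ²v + ∂ᵣv / r - (m² / r² + effPotential m v) v = 0`. -/
noncomputable def effPotential (m : ℕ) (g : ℝ → ℂ) (r : ℝ) : ℝ :=
  gaugePotential m g r - ‖g r‖ ^ 2

/-- `4 (Z M - G)`, where `M = halfMass g` and `Z = 2 m M - M²` is `centrifugalDefect`, with
primitive `G = m M² - M³ / 3` in the variable `M`. -/
noncomputable def gaugeDensity (m : ℕ) (g : ℝ → ℂ) (r : ℝ) : ℝ :=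
  4 * m * halfMass g r ^ 2 - 8 / 3 * halfMass g r ^ 3

/-- The correction which turns the quadratic form of the time-dependent Hamiltonian into the
conserved energy. -/
noncomputable def energyCorrection (m : ℕ) (g : ℝ → ℂ) : ℝ :=
  (∫ r in Ioi (0 : ℝ), gaugeDensity m g r / r ^ 3) +
    1 / 2 * ∫ r in Ioi (0 : ℝ), (‖g r‖ ^ 2) ^ 2 * r

/-- `g` is a finite-energy radial profile with derivative `g'`, extended to all of `ℝ`, with one
constant `B` bounding all relevant quantities, the angular momentum `m` included. -/
structure IsProfile (m : ℕ) (B : ℝ) (g g' : ℝ → ℂ) : Prop where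
  hasDerivAt : ∀ r, HasDerivAt g (g' r) r
  radialL2 : IsRadialL2 B g
  radialL2_deriv : IsRadialL2 B g'
  norm_le_mul : ∀ r, 0 ≤ r → r ≤ 1 → ‖g r‖ ≤ B * r
  norm_le : ∀ r, 0 ≤ r → ‖g r‖ ≤ B
  momentum_le : 4 * ((m : ℝ) + 1) ≤ B

lemma continuousOn_div_cube {f : ℝ → ℝ} (hf : Continuous f) :
    ContinuousOn (fun r => f r / r ^ 3) (Ioi 0) :=
  hf.continuousOn.div (by fun_prop) fun _ hr => pow_ne_zero 3 (mem_Ioi.1 hr).ne'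

namespace IsProfile

variable {m : ℕ} {B : ℝ} {g g' k k' : ℝ → ℂ}

lemma mono {B' : ℝ} (hg : IsProfile m B g g') (hB : B ≤ B') : IsProfile m B' g g' where
  hasDerivAt := hg.hasDerivAt
  radialL2 := hg.radialL2.mono hB
  radialL2_deriv := hg.radialL2_deriv.mono hB
  norm_le_mul r hr hr1 := (hg.norm_le_mul r hr hr1).trans (mul_le_mul_of_nonneg_right hB hr)
  norm_le r hr := (hg.norm_le r hr).trans hB
  momentum_le := hg.momentum_le.trans hB

lemma continuous (hg : IsProfile m B g g') : Continuous g := hg.radialL2.continuous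

lemma four_le (hg : IsProfile m B g g') : 4 ≤ B := by
  have := hg.momentum_le
  have : (0 : ℝ) ≤ m := m.cast_nonneg
  linarith

lemma natCast_le (hg : IsProfile m B g g') : (m : ℝ) ≤ B / 4 - 1 := by
  linarith [hg.momentum_le]

lemma apply_zero (hg : IsProfile m B g g') : g 0 = 0 := by
  simpa using hg.norm_le_mul 0 le_rfl zero_le_one

lemma halfMass_le (hg : IsProfile m B g g') {r : ℝ} (hr : 0 ≤ r) : halfMass g r ≤ B / 2 := by
  linarith [_root_.halfMass_le hg.continuous hg.radialL2.integrable hr, hg.radialL2.integral_le]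

lemma halfMass_le_pow (hg : IsProfile m B g g') {r : ℝ} (hr : 0 ≤ r) (hr1 : r ≤ 1) :
    halfMass g r ≤ B ^ 2 * r ^ 4 := by
  have hc : Continuous fun s => ‖g s‖ ^ 2 * s := by have := hg.continuous; fun_prop
  have hle : ∫ s in (0 : ℝ)..r, ‖g s‖ ^ 2 * s ≤ ∫ s in (0 : ℝ)..r, B ^ 2 * s ^ 3 := by
    refine intervalIntegral.integral_mono_on hr (hc.intervalIntegrable _ _)
      ((by fun_prop : Continuous fun s : ℝ => B ^ 2 * s ^ 3).intervalIntegrable _ _) fun s hs => ?_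
    calc ‖g s‖ ^ 2 * s ≤ (B * s) ^ 2 * s := mul_le_mul_of_nonneg_right
          (pow_le_pow_left₀ (norm_nonneg _) (hg.norm_le_mul s hs.1 (hs.2.trans hr1)) 2) hs.1
      _ = B ^ 2 * s ^ 3 := by ring
  have hpow : ∫ s in (0 : ℝ)..r, B ^ 2 * s ^ 3 = B ^ 2 * r ^ 4 / 4 := by
    rw [intervalIntegral.integral_const_mul, integral_pow]
    ring
  have : 0 ≤ B ^ 2 * r ^ 4 := by positivity
  unfold halfMass
  linarith

lemma halfMass_div_cube_le (hg : IsProfile m B g g') {r : ℝ} (hr : 0 < r) :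
    halfMass g r / r ^ 3 ≤ B ^ 2 * decayWeight r := by
  have habs : |halfMass g r| = halfMass g r := abs_of_nonneg (halfMass_nonneg hr.le)
  rw [← habs]
  refine decayWeight.abs_div_cube_le hr ?_ fun hr1 => ?_
  · rw [habs]
    nlinarith [hg.halfMass_le hr.le, hg.four_le]
  · rw [habs]
    exact hg.halfMass_le_pow hr.le hr1

lemma abs_sub_halfMass_le (hg : IsProfile m B g g') {r : ℝ} (hr : 0 ≤ r) :
    |(m : ℝ) - halfMass g r| ≤ B := by
  have := hg.halfMass_le hr
  have := halfMass_nonneg (g := g) hr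
  have := hg.natCast_le
  have : (0 : ℝ) ≤ m := m.cast_nonneg
  rw [abs_le]
  constructor <;> linarith

lemma continuous_centrifugalDefect (hg : IsProfile m B g g') :
    Continuous (centrifugalDefect m g) := by
  have := continuous_halfMass hg.continuous
  unfold centrifugalDefect
  fun_prop

lemma abs_centrifugalDefect_div_cube_le (hg : IsProfile m B g g') {r : ℝ} (hr : 0 < r) :
    |centrifugalDefect m g r / r ^ 3| ≤ B ^ 3 * decayWeight r := by
  have hM := halfMass_nonneg (g := g) hr.le
  have hquot : 0 ≤ halfMass g r / r ^ 3 := by positivity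
  have factor : centrifugalDefect m g r / r ^ 3 =
      (2 * m - halfMass g r) * (halfMass g r / r ^ 3) := by
    unfold centrifugalDefect; ring
  have hfactor : |2 * (m : ℝ) - halfMass g r| ≤ B := by
    have := hg.halfMass_le hr.le
    have := hg.natCast_le
    have : (0 : ℝ) ≤ m := m.cast_nonneg
    rw [abs_le]
    constructor <;> linarith
  rw [factor, abs_mul, abs_of_nonneg hquot]
  calc |2 * (m : ℝ) - halfMass g r| * (halfMass g r / r ^ 3)
      ≤ B * (B ^ 2 * decayWeight r) :=
        mul_le_mul hfactor (hg.halfMass_div_cube_le hr) hquot (by linarith [hg.four_le])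
    _ = B ^ 3 * decayWeight r := by ring

lemma integrableOn_centrifugalDefect_div_cube (hg : IsProfile m B g g') :
    IntegrableOn (fun r => centrifugalDefect m g r / r ^ 3) (Ioi 0) :=
  integrableOn_Ioi_of_norm_le (continuousOn_div_cube hg.continuous_centrifugalDefect)
    (decayWeight.integrableOn.const_mul (B ^ 3)) fun _ hr =>
      hg.abs_centrifugalDefect_div_cube_le hr

end IsProfile

lemma setIntegral_Ioi_const_mul_decayWeight_le {c r : ℝ} (hc : 0 ≤ c) (hr : 0 ≤ r) :
    ∫ s in Ioi r, c * decayWeight s ≤ 2 * c := by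
  calc ∫ s in Ioi r, c * decayWeight s ≤ ∫ s in Ioi (0 : ℝ), c * decayWeight s := by
        refine setIntegral_mono_set (decayWeight.integrableOn.const_mul _) ?_
          (Ioi_subset_Ioi hr).eventuallyLE
        exact (ae_restrict_iff' measurableSet_Ioi).2 (Eventually.of_forall fun s hs =>
          mul_nonneg hc (decayWeight.nonneg (mem_Ioi.1 hs).le))
    _ = 2 * c := by rw [integral_const_mul, decayWeight.integral_eq_two, mul_comm]

namespace IsProfile

variable {m : ℕ} {B : ℝ} {g g' k k' : ℝ → ℂ}

lemma abs_gaugePotential_le (hg : IsProfile m B g g') {r : ℝ} (hr : 0 ≤ r) :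
    |gaugePotential m g r| ≤ 4 * B ^ 3 := by
  have hB : 0 ≤ B ^ 3 := pow_nonneg (by linarith [hg.four_le]) 3
  have hle : ‖∫ s in Ioi r, centrifugalDefect m g s / s ^ 3‖ ≤ 2 * B ^ 3 :=
    (norm_integral_Ioi_le_of_norm_le
      (IntegrableOn.mono_set (decayWeight.integrableOn.const_mul _) (Ioi_subset_Ioi hr))
      fun s hs => hg.abs_centrifugalDefect_div_cube_le (hr.trans_lt hs)).trans
      (setIntegral_Ioi_const_mul_decayWeight_le hB hr)
  unfold gaugePotential
  rw [abs_mul, abs_neg, abs_two, ← Real.norm_eq_abs]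
  linarith

lemma gaugePotential_eq (hg : IsProfile m B g g') {r : ℝ} (hr : 0 ≤ r) :
    gaugePotential m g r = -2 * ((∫ s in Ioi (0 : ℝ), centrifugalDefect m g s / s ^ 3) -
      ∫ s in (0 : ℝ)..r, centrifugalDefect m g s / s ^ 3) := by
  have hint := hg.integrableOn_centrifugalDefect_div_cube
  unfold gaugePotential
  rw [intervalIntegral.integral_of_le hr, ← Ioc_union_Ioi_eq_Ioi hr,
    setIntegral_union (Ioc_disjoint_Ioi le_rfl) measurableSet_Ioi
      (hint.mono_set Ioc_subset_Ioi_self) (hint.mono_set (Ioi_subset_Ioi hr))]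
  ring

lemma hasDerivAt_gaugePotential (hg : IsProfile m B g g') {r : ℝ} (hr : 0 < r) :
    HasDerivAt (gaugePotential m g) (2 * (centrifugalDefect m g r / r ^ 3)) r := by
  have hc := continuousOn_div_cube hg.continuous_centrifugalDefect
  have hint : IntervalIntegrable (fun s => centrifugalDefect m g s / s ^ 3) volume 0 r :=
    (intervalIntegrable_iff_integrableOn_Ioc_of_le hr.le).2
      (hg.integrableOn_centrifugalDefect_div_cube.mono_set Ioc_subset_Ioi_self)
  have hderiv := ((intervalIntegral.integral_hasDerivAt_right hint
    (hc.stronglyMeasurableAtFilter isOpen_Ioi r hr)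
    (hc.continuousAt (Ioi_mem_nhds hr))).const_sub
      (∫ s in Ioi (0 : ℝ), centrifugalDefect m g s / s ^ 3)).const_mul (-2)
  refine (hderiv.congr_of_eventuallyEq ?_).congr_deriv (by ring)
  filter_upwards [Ioi_mem_nhds hr] with s hs using hg.gaugePotential_eq (le_of_lt hs)

lemma continuousOn_gaugePotential (hg : IsProfile m B g g') :
    ContinuousOn (gaugePotential m g) (Ioi 0) :=
  fun _ hr => (hg.hasDerivAt_gaugePotential hr).continuousAt.continuousWithinAt

lemma tendsto_gaugePotential_atTop (hg : IsProfile m B g g') :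
    Tendsto (gaugePotential m g) atTop (𝓝 0) := by
  have hlim := ((intervalIntegral_tendsto_integral_Ioi 0
    hg.integrableOn_centrifugalDefect_div_cube tendsto_id).const_sub
      (∫ s in Ioi (0 : ℝ), centrifugalDefect m g s / s ^ 3)).const_mul (-2)
  simp only [sub_self, mul_zero] at hlim
  refine hlim.congr' ?_
  filter_upwards [eventually_ge_atTop 0] with r hr
  exact (hg.gaugePotential_eq hr).symm

lemma integrableOn_gaugePotential_mul (hg : IsProfile m B g g') (hk : IsProfile m B k k') :
    IntegrableOn (fun r => gaugePotential m g r * (‖k r‖ ^ 2 * r)) (Ioi 0) := by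
  have := hk.continuous
  refine integrableOn_Ioi_of_norm_le (hg.continuousOn_gaugePotential.mul (by fun_prop))
    (hk.radialL2.integrable.const_mul (4 * B ^ 3)) fun r hr => ?_
  rw [norm_mul, Real.norm_eq_abs, Real.norm_of_nonneg (by positivity)]
  exact mul_le_mul_of_nonneg_right (hg.abs_gaugePotential_le hr.le) (by positivity)

lemma integrableOn_centrifugalDefect_mul_halfMass (hg : IsProfile m B g g')
    (hk : IsProfile m B k k') :
    IntegrableOn (fun r => centrifugalDefect m g r * halfMass k r / r ^ 3) (Ioi 0) := by
  have hB := hg.four_le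
  have hM := continuous_halfMass hk.continuous
  refine integrableOn_Ioi_of_norm_le
    (continuousOn_div_cube (hg.continuous_centrifugalDefect.mul hM))
    ((decayWeight.integrableOn.const_mul (B ^ 3)).const_mul B) fun r hr => ?_
  rw [mul_comm, mul_div_assoc, norm_mul, Real.norm_eq_abs, Real.norm_eq_abs,
    abs_of_nonneg (halfMass_nonneg hr.le)]
  exact mul_le_mul (by linarith [hk.halfMass_le hr.le]) (hg.abs_centrifugalDefect_div_cube_le hr)
    (abs_nonneg _) (by linarith)

lemma continuousWithinAt_gaugePotential_mul_halfMass (hg : IsProfile m B g g')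
    (hk : IsProfile m B k k') :
    ContinuousWithinAt (fun r => gaugePotential m g r * halfMass k r) (Ici 0) 0 := by
  have hmajorant : Tendsto (fun r => 4 * B ^ 3 * halfMass k r) (𝓝[≥] 0) (𝓝 0) := by
    have := ((continuous_halfMass hk.continuous).const_mul (4 * B ^ 3)).tendsto 0
    rw [halfMass_zero, mul_zero] at this
    exact this.mono_left nhdsWithin_le_nhds
  unfold ContinuousWithinAt
  simp only [halfMass_zero, mul_zero]
  refine squeeze_zero_norm' ?_ hmajorant
  filter_upwards [self_mem_nhdsWithin] with r hr
  rw [norm_mul, Real.norm_eq_abs, Real.norm_of_nonneg (halfMass_nonneg hr)]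
  exact mul_le_mul_of_nonneg_right (hg.abs_gaugePotential_le hr) (halfMass_nonneg hr)

lemma integral_gaugePotential_mul (hg : IsProfile m B g g') (hk : IsProfile m B k k') :
    ∫ r in Ioi (0 : ℝ), gaugePotential m g r * (‖k r‖ ^ 2 * r) =
      -4 * ∫ r in Ioi (0 : ℝ), centrifugalDefect m g r * halfMass k r / r ^ 3 := by
  have hint := (hg.integrableOn_gaugePotential_mul hk).const_mul (1 / 2)
  have hint' := (hg.integrableOn_centrifugalDefect_mul_halfMass hk).const_mul 2
  have hderiv : ∀ r ∈ Ioi (0 : ℝ), HasDerivAt (fun r => gaugePotential m g r * halfMass k r)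
      ((1 / 2) * (gaugePotential m g r * (‖k r‖ ^ 2 * r)) +
        2 * (centrifugalDefect m g r * halfMass k r / r ^ 3)) r := by
    intro r hr
    refine ((hg.hasDerivAt_gaugePotential hr).mul
      (hasDerivAt_halfMass hk.continuous r)).congr_deriv ?_
    ring
  have hlim : Tendsto (fun r => gaugePotential m g r * halfMass k r) atTop (𝓝 0) := by
    simpa using hg.tendsto_gaugePotential_atTop.mul (tendsto_halfMass_atTop hk.radialL2.integrable)
  have hparts := integral_Ioi_of_hasDerivAt_of_tendsto
    (hg.continuousWithinAt_gaugePotential_mul_halfMass hk) hderiv (hint.add hint') hlim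
  rw [integral_add hint hint', integral_const_mul, integral_const_mul, halfMass_zero] at hparts
  linarith

end IsProfile

/-! ### Stability of the functionals -/

/-- `g` and `k` are close at scale `q ∈ [0, 1]`. The powers of `q` are those produced by two time
slices of one solution at distance `q ^ 4`: the squared `L²` distance is linear in time, and the
supremum distance interpolates between it and the bounded gradient. -/
structure IsClose (B q : ℝ) (g k : ℝ → ℂ) : Prop where
  nonneg : 0 ≤ q
  le_one : q ≤ 1
  norm_sub_le_mul : ∀ r, 0 ≤ r → r ≤ 1 → ‖g r - k r‖ ≤ B * q ^ 4 * r
  radialL2 : IsRadialL2 (B * q ^ 4) fun r => g r - k r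
  norm_sub_le : ∀ r, 0 ≤ r → ‖g r - k r‖ ≤ B * q

lemma abs_norm_sq_sub_norm_sq_le {E : Type*} [SeminormedAddCommGroup E] (a b : E) :
    |‖a‖ ^ 2 - ‖b‖ ^ 2| ≤ ‖a - b‖ * (‖a‖ + ‖b‖) := by
  rw [sq_sub_sq, abs_mul, abs_of_nonneg (by positivity : 0 ≤ ‖a‖ + ‖b‖), mul_comm]
  exact mul_le_mul_of_nonneg_right (abs_norm_sub_norm_le a b) (by positivity)

lemma halfMass_sub_halfMass {g k : ℝ → ℂ} (hg : Continuous g) (hk : Continuous k) (r : ℝ) :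
    halfMass g r - halfMass k r = (1 / 2) * ∫ s in (0 : ℝ)..r, (‖g s‖ ^ 2 - ‖k s‖ ^ 2) * s := by
  unfold halfMass
  rw [← mul_sub, ← intervalIntegral.integral_sub
    (Continuous.intervalIntegrable (by fun_prop) _ _)
    (Continuous.intervalIntegrable (by fun_prop) _ _)]
  simp only [sub_mul]

namespace IsProfile

variable {m : ℕ} {B q : ℝ} {g g' k k' : ℝ → ℂ}

lemma abs_halfMass_sub_le (hg : IsProfile m B g g') (hk : IsProfile m B k k')
    (hgk : IsClose B q g k) {r : ℝ} (hr : 0 ≤ r) :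
    |halfMass g r - halfMass k r| ≤ B * q ^ 2 := by
  have hB := hg.four_le
  have hint := hgk.radialL2.integrable_mul hg.radialL2
  have hint' := hgk.radialL2.integrable_mul hk.radialL2
  have pointwise : ∀ s ∈ Ioc 0 r, ‖(‖g s‖ ^ 2 - ‖k s‖ ^ 2) * s‖ ≤
      ‖g s - k s‖ * ‖g s‖ * s + ‖g s - k s‖ * ‖k s‖ * s := by
    intro s hs
    rw [norm_mul, Real.norm_eq_abs, Real.norm_of_nonneg hs.1.le, ← add_mul, ← mul_add]
    exact mul_le_mul_of_nonneg_right (abs_norm_sq_sub_norm_sq_le _ _) hs.1.le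
  have hle : ‖∫ s in Ioc 0 r, (‖g s‖ ^ 2 - ‖k s‖ ^ 2) * s‖ ≤ 2 * (B * q ^ 2) :=
    calc ‖∫ s in Ioc 0 r, (‖g s‖ ^ 2 - ‖k s‖ ^ 2) * s‖
        ≤ ∫ s in Ioc 0 r, (‖g s - k s‖ * ‖g s‖ * s + ‖g s - k s‖ * ‖k s‖ * s) :=
          norm_integral_le_of_norm_le
            (IntegrableOn.mono_set (hint.add hint') Ioc_subset_Ioi_self)
            ((ae_restrict_iff' measurableSet_Ioc).2 (Eventually.of_forall pointwise))
      _ ≤ ∫ s in Ioi (0 : ℝ), (‖g s - k s‖ * ‖g s‖ * s + ‖g s - k s‖ * ‖k s‖ * s) := by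
          refine setIntegral_mono_set (hint.add hint') ?_ Ioc_subset_Ioi_self.eventuallyLE
          refine (ae_restrict_iff' measurableSet_Ioi).2 (Eventually.of_forall fun s hs => ?_)
          have : 0 ≤ s := (mem_Ioi.1 hs).le
          change 0 ≤ ‖g s - k s‖ * ‖g s‖ * s + ‖g s - k s‖ * ‖k s‖ * s
          positivity
      _ ≤ B * q ^ 2 + B * q ^ 2 := by
          rw [integral_add hint hint']
          exact add_le_add
            (hgk.radialL2.integral_mul_le hg.radialL2 (by positivity) (by nlinarith))
            (hgk.radialL2.integral_mul_le hk.radialL2 (by positivity) (by nlinarith))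
      _ = 2 * (B * q ^ 2) := by ring
  rw [halfMass_sub_halfMass hg.continuous hk.continuous, intervalIntegral.integral_of_le hr,
    abs_mul, ← Real.norm_eq_abs (∫ s in Ioc 0 r, _), abs_of_pos one_half_pos]
  linarith

lemma abs_halfMass_sub_le_pow (hg : IsProfile m B g g') (hk : IsProfile m B k k')
    (hgk : IsClose B q g k) {r : ℝ} (hr : 0 ≤ r) (hr1 : r ≤ 1) :
    |halfMass g r - halfMass k r| ≤ B ^ 2 * q ^ 4 * r ^ 4 := by
  have hB := hg.four_le
  have pointwise : ∀ s ∈ Ioc 0 r,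
      ‖(‖g s‖ ^ 2 - ‖k s‖ ^ 2) * s‖ ≤ 2 * B ^ 2 * q ^ 4 * s ^ 3 := by
    intro s hs
    have hs1 : s ≤ 1 := hs.2.trans hr1
    have hs0 : 0 ≤ s := hs.1.le
    rw [norm_mul, Real.norm_eq_abs, Real.norm_of_nonneg hs0]
    calc |‖g s‖ ^ 2 - ‖k s‖ ^ 2| * s ≤ ‖g s - k s‖ * (‖g s‖ + ‖k s‖) * s :=
          mul_le_mul_of_nonneg_right (abs_norm_sq_sub_norm_sq_le _ _) hs0
      _ ≤ B * q ^ 4 * s * (B * s + B * s) * s := by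
          gcongr
          exacts [hgk.norm_sub_le_mul s hs0 hs1, hg.norm_le_mul s hs0 hs1,
            hk.norm_le_mul s hs0 hs1]
      _ = 2 * B ^ 2 * q ^ 4 * s ^ 3 := by ring
  have hle : ‖∫ s in (0 : ℝ)..r, (‖g s‖ ^ 2 - ‖k s‖ ^ 2) * s‖ ≤ B ^ 2 * q ^ 4 * r ^ 4 / 2 := by
    refine (intervalIntegral.norm_integral_le_of_norm_le hr (Eventually.of_forall pointwise)
      (Continuous.intervalIntegrable (by fun_prop) _ _)).trans_eq ?_
    rw [intervalIntegral.integral_const_mul, integral_pow]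
    ring
  rw [halfMass_sub_halfMass hg.continuous hk.continuous, abs_mul, abs_of_pos one_half_pos,
    ← Real.norm_eq_abs]
  have : 0 ≤ B ^ 2 * q ^ 4 * r ^ 4 := by positivity
  linarith

lemma abs_halfMass_sub_div_cube_le (hg : IsProfile m B g g') (hk : IsProfile m B k k')
    (hgk : IsClose B q g k) {r : ℝ} (hr : 0 < r) :
    |halfMass g r - halfMass k r| / r ^ 3 ≤ B ^ 2 * q ^ 2 * decayWeight r := by
  have hB := hg.four_le
  have hq : q ^ 4 ≤ q ^ 2 := pow_le_pow_of_le_one hgk.nonneg hgk.le_one (by norm_num)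
  refine decayWeight.abs_div_cube_le hr ((hg.abs_halfMass_sub_le hk hgk hr.le).trans ?_)
    fun hr1 => (hg.abs_halfMass_sub_le_pow hk hgk hr.le hr1).trans ?_
  · have : B ≤ B ^ 2 := by nlinarith
    gcongr
  · gcongr

lemma abs_centrifugalDefect_sub_div_cube_le (hg : IsProfile m B g g') (hk : IsProfile m B k k')
    (hgk : IsClose B q g k) {r : ℝ} (hr : 0 < r) :
    |centrifugalDefect m g r / r ^ 3 - centrifugalDefect m k r / r ^ 3| ≤
      B ^ 3 * q ^ 2 * decayWeight r := by
  have factor : centrifugalDefect m g r / r ^ 3 - centrifugalDefect m k r / r ^ 3 =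
      (2 * m - (halfMass g r + halfMass k r)) * ((halfMass g r - halfMass k r) / r ^ 3) := by
    unfold centrifugalDefect; ring
  have hfactor : |2 * (m : ℝ) - (halfMass g r + halfMass k r)| ≤ B := by
    have := hg.halfMass_le hr.le
    have := halfMass_nonneg (g := g) hr.le
    have := hk.halfMass_le hr.le
    have := halfMass_nonneg (g := k) hr.le
    have := hg.natCast_le
    have : (0 : ℝ) ≤ m := m.cast_nonneg
    rw [abs_le]
    constructor <;> linarith
  rw [factor, abs_mul, abs_div, abs_of_pos (pow_pos hr 3)]
  calc |2 * (m : ℝ) - (halfMass g r + halfMass k r)| * (|halfMass g r - halfMass k r| / r ^ 3)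
      ≤ B * (B ^ 2 * q ^ 2 * decayWeight r) :=
        mul_le_mul hfactor (hg.abs_halfMass_sub_div_cube_le hk hgk hr) (by positivity)
          (by linarith [hg.four_le])
    _ = B ^ 3 * q ^ 2 * decayWeight r := by ring

lemma abs_gaugePotential_sub_le (hg : IsProfile m B g g') (hk : IsProfile m B k k')
    (hgk : IsClose B q g k) {r : ℝ} (hr : 0 < r) :
    |gaugePotential m g r - gaugePotential m k r| ≤ 4 * B ^ 3 * q ^ 2 := by
  have hB := hg.four_le
  have hsub : Ioi r ⊆ Ioi (0 : ℝ) := Ioi_subset_Ioi hr.le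
  have hle : ‖∫ s in Ioi r, (centrifugalDefect m g s / s ^ 3 - centrifugalDefect m k s / s ^ 3)‖ ≤
      2 * (B ^ 3 * q ^ 2) :=
    (norm_integral_Ioi_le_of_norm_le
      (IntegrableOn.mono_set (decayWeight.integrableOn.const_mul _) hsub)
      fun s hs => hg.abs_centrifugalDefect_sub_div_cube_le hk hgk (hr.trans hs)).trans
      (setIntegral_Ioi_const_mul_decayWeight_le (by positivity) hr.le)
  unfold gaugePotential
  rw [← mul_sub, ← integral_sub (hg.integrableOn_centrifugalDefect_div_cube.mono_set hsub)
    (hk.integrableOn_centrifugalDefect_div_cube.mono_set hsub), abs_mul, abs_neg, abs_two,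
    ← Real.norm_eq_abs]
  linarith

lemma abs_norm_sq_sub_le (hg : IsProfile m B g g') (hk : IsProfile m B k k')
    (hgk : IsClose B q g k) {r : ℝ} (hr : 0 ≤ r) : |‖g r‖ ^ 2 - ‖k r‖ ^ 2| ≤ 2 * B ^ 2 * q := by
  have hB := hg.four_le
  have hq := hgk.nonneg
  calc |‖g r‖ ^ 2 - ‖k r‖ ^ 2| ≤ ‖g r - k r‖ * (‖g r‖ + ‖k r‖) := abs_norm_sq_sub_norm_sq_le _ _
    _ ≤ B * q * (B + B) := by
        gcongr
        exacts [hgk.norm_sub_le r hr, hg.norm_le r hr, hk.norm_le r hr]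
    _ = 2 * B ^ 2 * q := by ring

lemma abs_effPotential_sub_le (hg : IsProfile m B g g') (hk : IsProfile m B k k')
    (hgk : IsClose B q g k) {r : ℝ} (hr : 0 < r) :
    |effPotential m g r - effPotential m k r| ≤ 6 * B ^ 3 * q := by
  have hB := hg.four_le
  have hq := hgk.nonneg
  have hqq : q ^ 2 ≤ q := by nlinarith [hgk.le_one]
  calc |effPotential m g r - effPotential m k r|
      = |(gaugePotential m g r - gaugePotential m k r) - (‖g r‖ ^ 2 - ‖k r‖ ^ 2)| := by
        unfold effPotential; ring_nf
    _ ≤ 4 * B ^ 3 * q ^ 2 + 2 * B ^ 2 * q := (abs_sub _ _).trans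
        (add_le_add (hg.abs_gaugePotential_sub_le hk hgk hr) (hg.abs_norm_sq_sub_le hk hgk hr.le))
    _ ≤ 4 * B ^ 3 * q + 2 * B ^ 3 * q := by
        gcongr
        exacts [by linarith, by norm_num]
    _ = 6 * B ^ 3 * q := by ring

lemma abs_effPotential_le (hg : IsProfile m B g g') {r : ℝ} (hr : 0 < r) :
    |effPotential m g r| ≤ 5 * B ^ 3 := by
  have hB := hg.four_le
  have hsq : ‖g r‖ ^ 2 ≤ B ^ 2 := pow_le_pow_left₀ (norm_nonneg _) (hg.norm_le r hr.le) 2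
  have hpow : B ^ 2 ≤ B ^ 3 := pow_le_pow_right₀ (by linarith) (by norm_num)
  unfold effPotential
  refine (abs_sub _ _).trans ?_
  rw [abs_of_nonneg (sq_nonneg ‖g r‖)]
  linarith [hg.abs_gaugePotential_le hr.le]

lemma continuousOn_effPotential (hg : IsProfile m B g g') :
    ContinuousOn (effPotential m g) (Ioi 0) := by
  have := hg.continuous
  exact hg.continuousOn_gaugePotential.sub (by fun_prop)

lemma integrableOn_norm_pow_four (hg : IsProfile m B g g') :
    IntegrableOn (fun r => (‖g r‖ ^ 2) ^ 2 * r) (Ioi 0) := by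
  have := hg.continuous
  refine integrableOn_Ioi_of_norm_le (by fun_prop) (hg.radialL2.integrable.const_mul (B ^ 2))
    fun r hr => ?_
  rw [Real.norm_of_nonneg (by positivity), sq (‖g r‖ ^ 2), mul_assoc]
  gcongr
  exact hg.norm_le r hr.le

lemma abs_gaugeDensity_sub_div_cube_le (hg : IsProfile m B g g') (hk : IsProfile m B k k')
    {r : ℝ} (hr : 0 < r) :
    |gaugeDensity m g r / r ^ 3 - gaugeDensity m k r / r ^ 3| ≤
      3 * B ^ 2 * (|halfMass g r - halfMass k r| / r ^ 3) := by
  have factor : gaugeDensity m g r / r ^ 3 - gaugeDensity m k r / r ^ 3 =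
      (4 * m * (halfMass g r + halfMass k r) - 8 / 3 * (halfMass g r ^ 2 +
        halfMass g r * halfMass k r + halfMass k r ^ 2)) *
          ((halfMass g r - halfMass k r) / r ^ 3) := by
    unfold gaugeDensity; ring
  rw [factor, abs_mul, abs_div, abs_of_pos (pow_pos hr 3)]
  refine mul_le_mul_of_nonneg_right ?_ (by positivity)
  have hB := hg.four_le
  have hm := hg.natCast_le
  have : (0 : ℝ) ≤ m := m.cast_nonneg
  have hMg := hg.halfMass_le hr.le
  have hMg0 := halfMass_nonneg (g := g) hr.le
  have hMk := hk.halfMass_le hr.le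
  have hMk0 := halfMass_nonneg (g := k) hr.le
  have linear_le : 4 * m * (halfMass g r + halfMass k r) ≤ B * B :=
    mul_le_mul (by linarith) (by linarith) (by linarith) (by linarith)
  have linear_nonneg : 0 ≤ 4 * m * (halfMass g r + halfMass k r) := by positivity
  have prod_le : halfMass g r * halfMass k r ≤ B / 2 * (B / 2) :=
    mul_le_mul hMg hMk hMk0 (by linarith)
  have prod_nonneg : 0 ≤ halfMass g r * halfMass k r := by positivity
  have sq_le : halfMass g r ^ 2 ≤ (B / 2) ^ 2 := pow_le_pow_left₀ hMg0 hMg 2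
  have sq_le' : halfMass k r ^ 2 ≤ (B / 2) ^ 2 := pow_le_pow_left₀ hMk0 hMk 2
  rw [abs_le]
  constructor <;> nlinarith [sq_nonneg (halfMass g r), sq_nonneg (halfMass k r)]

lemma integrableOn_gaugeDensity_div_cube (hg : IsProfile m B g g') :
    IntegrableOn (fun r => gaugeDensity m g r / r ^ 3) (Ioi 0) := by
  have hB := hg.four_le
  have hcont : Continuous (gaugeDensity m g) := by
    have := continuous_halfMass hg.continuous
    unfold gaugeDensity
    fun_prop
  refine integrableOn_Ioi_of_norm_le (continuousOn_div_cube hcont)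
    ((decayWeight.integrableOn.const_mul (B ^ 2)).const_mul (3 * B ^ 2)) fun r hr => ?_
  have hM := hg.halfMass_le hr.le
  have hM0 := halfMass_nonneg (g := g) hr.le
  have factor : gaugeDensity m g r / r ^ 3 =
      (4 * m * halfMass g r - 8 / 3 * halfMass g r ^ 2) * (halfMass g r / r ^ 3) := by
    unfold gaugeDensity; ring
  rw [factor, norm_mul, Real.norm_eq_abs, Real.norm_of_nonneg (by positivity)]
  refine mul_le_mul ?_ (hg.halfMass_div_cube_le hr) (by positivity) (by positivity)
  have hm := hg.natCast_le
  have : (0 : ℝ) ≤ m := m.cast_nonneg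
  rw [abs_le]
  constructor <;> nlinarith

lemma abs_integral_gaugeDensity_sub_le (hg : IsProfile m B g g') (hk : IsProfile m B k k')
    (hgk : IsClose B q g k) :
    |(∫ r in Ioi (0 : ℝ), gaugeDensity m g r / r ^ 3) -
      ∫ r in Ioi (0 : ℝ), gaugeDensity m k r / r ^ 3| ≤ 6 * B ^ 4 * q ^ 2 := by
  rw [← integral_sub hg.integrableOn_gaugeDensity_div_cube hk.integrableOn_gaugeDensity_div_cube,
    ← Real.norm_eq_abs]
  calc _ ≤ ∫ r in Ioi (0 : ℝ), 3 * B ^ 4 * q ^ 2 * decayWeight r := by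
        refine norm_integral_Ioi_le_of_norm_le (decayWeight.integrableOn.const_mul _)
          fun r hr => (hg.abs_gaugeDensity_sub_div_cube_le hk hr).trans ?_
        calc 3 * B ^ 2 * (|halfMass g r - halfMass k r| / r ^ 3)
            ≤ 3 * B ^ 2 * (B ^ 2 * q ^ 2 * decayWeight r) :=
              mul_le_mul_of_nonneg_left (hg.abs_halfMass_sub_div_cube_le hk hgk hr) (by positivity)
          _ = 3 * B ^ 4 * q ^ 2 * decayWeight r := by ring
    _ = 6 * B ^ 4 * q ^ 2 := by
        rw [integral_const_mul, decayWeight.integral_eq_two]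
        ring

lemma abs_integral_norm_pow_four_sub_le (hg : IsProfile m B g g') (hk : IsProfile m B k k')
    (hgk : IsClose B q g k) :
    |(∫ r in Ioi (0 : ℝ), (‖g r‖ ^ 2) ^ 2 * r) - ∫ r in Ioi (0 : ℝ), (‖k r‖ ^ 2) ^ 2 * r| ≤
      4 * B ^ 3 * q := by
  have hB := hg.four_le
  have hq := hgk.nonneg
  have hsum := hg.radialL2.integrable.add hk.radialL2.integrable
  rw [← integral_sub hg.integrableOn_norm_pow_four hk.integrableOn_norm_pow_four,
    ← Real.norm_eq_abs]
  calc _ ≤ ∫ r in Ioi (0 : ℝ), 2 * B ^ 2 * q * (‖g r‖ ^ 2 * r + ‖k r‖ ^ 2 * r) := by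
        refine norm_integral_Ioi_le_of_norm_le (hsum.const_mul _) fun r hr => ?_
        have factor : (‖g r‖ ^ 2) ^ 2 * r - (‖k r‖ ^ 2) ^ 2 * r =
            (‖g r‖ ^ 2 - ‖k r‖ ^ 2) * (‖g r‖ ^ 2 * r + ‖k r‖ ^ 2 * r) := by ring
        rw [factor, norm_mul, Real.norm_eq_abs, Real.norm_of_nonneg (by positivity)]
        exact mul_le_mul_of_nonneg_right (hg.abs_norm_sq_sub_le hk hgk hr.le) (by positivity)
    _ ≤ 2 * B ^ 2 * q * (B + B) := by
        rw [integral_const_mul, integral_add hg.radialL2.integrable hk.radialL2.integrable]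
        have := hg.radialL2.integral_le
        have := hk.radialL2.integral_le
        gcongr
    _ = 4 * B ^ 3 * q := by ring

lemma abs_energyCorrection_sub_le (hg : IsProfile m B g g') (hk : IsProfile m B k k')
    (hgk : IsClose B q g k) : |energyCorrection m g - energyCorrection m k| ≤ 8 * B ^ 4 * q := by
  have hB := hg.four_le
  have hq := hgk.nonneg
  have hqq : q ^ 2 ≤ q := by nlinarith [hgk.le_one]
  have hdensity := abs_le.1 (hg.abs_integral_gaugeDensity_sub_le hk hgk)
  have hquartic := abs_le.1 (hg.abs_integral_norm_pow_four_sub_le hk hgk)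
  have hdensity_le : 6 * B ^ 4 * q ^ 2 ≤ 6 * B ^ 4 * q := by gcongr
  have hquartic_le : B ^ 3 * q ≤ B ^ 4 * q := by
    gcongr
    exacts [by linarith, by norm_num]
  unfold energyCorrection
  rw [abs_le]
  constructor <;> linarith

end IsProfile

lemma re_mul_conj_eq_half (a b : ℂ) :
    (a * conj b).re = (‖a‖ ^ 2 + ‖b‖ ^ 2 - ‖a - b‖ ^ 2) / 2 := by
  rw [Complex.sq_norm, Complex.sq_norm, Complex.sq_norm, Complex.normSq_sub]
  ring

namespace IsProfile

variable {m : ℕ} {B q : ℝ} {f f' g g' k k' : ℝ → ℂ}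

lemma integrableOn_gaugePotential_sub_mul (hg : IsProfile m B g g') (hk : IsProfile m B k k')
    (hf : IsProfile m B f f') : IntegrableOn
      (fun r => (gaugePotential m g r - gaugePotential m k r) * (‖f r‖ ^ 2 * r)) (Ioi 0) := by
  simp only [sub_mul]
  exact (hg.integrableOn_gaugePotential_mul hf).sub (hk.integrableOn_gaugePotential_mul hf)

lemma integrableOn_centrifugalDefect_sub_mul (hg : IsProfile m B g g')
    (hk : IsProfile m B k k') (hf : IsProfile m B f f') : IntegrableOn (fun r =>
      (centrifugalDefect m g r - centrifugalDefect m k r) * halfMass f r / r ^ 3) (Ioi 0) := by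
  simp only [sub_mul, sub_div]
  exact (hg.integrableOn_centrifugalDefect_mul_halfMass hf).sub
    (hk.integrableOn_centrifugalDefect_mul_halfMass hf)

lemma integral_gaugePotential_sub_mul (hg : IsProfile m B g g') (hk : IsProfile m B k k')
    (hf : IsProfile m B f f') :
    ∫ r in Ioi (0 : ℝ), (gaugePotential m g r - gaugePotential m k r) * (‖f r‖ ^ 2 * r) =
      -4 * ∫ r in Ioi (0 : ℝ),
        (centrifugalDefect m g r - centrifugalDefect m k r) * halfMass f r / r ^ 3 := by
  simp only [sub_mul, sub_div]
  rw [integral_sub (hg.integrableOn_gaugePotential_mul hf) (hk.integrableOn_gaugePotential_mul hf),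
    integral_sub (hg.integrableOn_centrifugalDefect_mul_halfMass hf)
      (hk.integrableOn_centrifugalDefect_mul_halfMass hf),
    hg.integral_gaugePotential_mul hf, hk.integral_gaugePotential_mul hf]
  ring

lemma norm_halfMass_sub_cube_div_cube_le (hg : IsProfile m B g g') (hk : IsProfile m B k k')
    (hgk : IsClose B q g k) {r : ℝ} (hr : 0 < r) :
    ‖(halfMass g r - halfMass k r) ^ 3 / r ^ 3‖ ≤ B ^ 4 * q ^ 6 * decayWeight r := by
  have : 0 ≤ B := by linarith [hg.four_le]
  have split : ‖(halfMass g r - halfMass k r) ^ 3 / r ^ 3‖ =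
      |halfMass g r - halfMass k r| ^ 2 * (|halfMass g r - halfMass k r| / r ^ 3) := by
    rw [Real.norm_eq_abs, abs_div, abs_of_pos (pow_pos hr 3), abs_pow]
    ring
  rw [split]
  calc _ ≤ (B * q ^ 2) ^ 2 * (B ^ 2 * q ^ 2 * decayWeight r) :=
        mul_le_mul
          (pow_le_pow_left₀ (abs_nonneg _) (hg.abs_halfMass_sub_le hk hgk hr.le) 2)
          (hg.abs_halfMass_sub_div_cube_le hk hgk hr) (by positivity) (by positivity)
    _ = B ^ 4 * q ^ 6 * decayWeight r := by ring

lemma integrableOn_halfMass_sub_cube (hg : IsProfile m B g g') (hk : IsProfile m B k k')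
    (hgk : IsClose B q g k) :
    IntegrableOn (fun r => (halfMass g r - halfMass k r) ^ 3 / r ^ 3) (Ioi 0) := by
  have := continuous_halfMass hg.continuous
  have := continuous_halfMass hk.continuous
  exact integrableOn_Ioi_of_norm_le (continuousOn_div_cube (by fun_prop))
    (decayWeight.integrableOn.const_mul _)
    fun r hr => hg.norm_halfMass_sub_cube_div_cube_le hk hgk hr

lemma abs_integral_halfMass_sub_cube_le (hg : IsProfile m B g g') (hk : IsProfile m B k k')
    (hgk : IsClose B q g k) :
    |∫ r in Ioi (0 : ℝ), (halfMass g r - halfMass k r) ^ 3 / r ^ 3| ≤ 2 * B ^ 4 * q ^ 6 := by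
  rw [← Real.norm_eq_abs]
  refine (norm_integral_Ioi_le_of_norm_le (decayWeight.integrableOn.const_mul _) fun r hr =>
    hg.norm_halfMass_sub_cube_div_cube_le hk hgk hr).trans_eq ?_
  rw [integral_const_mul, decayWeight.integral_eq_two]
  ring

/-- Up to the cube of `M_g - M_k`, the trapezoidal rule integrates `Z dM` exactly. -/
lemma integral_centrifugalDefect_sub_mul_add (hg : IsProfile m B g g') (hk : IsProfile m B k k')
    (hgk : IsClose B q g k) :
    2 * (∫ r in Ioi (0 : ℝ),
        (centrifugalDefect m g r - centrifugalDefect m k r) * halfMass g r / r ^ 3) +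
      2 * (∫ r in Ioi (0 : ℝ),
        (centrifugalDefect m g r - centrifugalDefect m k r) * halfMass k r / r ^ 3) =
      (∫ r in Ioi (0 : ℝ), gaugeDensity m g r / r ^ 3) -
        (∫ r in Ioi (0 : ℝ), gaugeDensity m k r / r ^ 3) +
        2 / 3 * ∫ r in Ioi (0 : ℝ), (halfMass g r - halfMass k r) ^ 3 / r ^ 3 := by
  have hDg := hg.integrableOn_gaugeDensity_div_cube
  have hDk := hk.integrableOn_gaugeDensity_div_cube
  simp only [← integral_const_mul]
  rw [← integral_add ((hg.integrableOn_centrifugalDefect_sub_mul hk hg).const_mul 2)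
      ((hg.integrableOn_centrifugalDefect_sub_mul hk hk).const_mul 2),
    ← integral_sub hDg hDk,
    ← integral_add (by exact hDg.sub hDk)
      ((hg.integrableOn_halfMass_sub_cube hk hgk).const_mul (2 / 3))]
  congr 1
  funext r
  unfold centrifugalDefect gaugeDensity
  ring

lemma norm_effPotential_sub_mul_le (hg : IsProfile m B g g') (hk : IsProfile m B k k')
    (hgk : IsClose B q g k) {r : ℝ} (hr : 0 < r) :
    ‖(effPotential m g r - effPotential m k r) * (‖g r - k r‖ ^ 2 * r)‖ ≤
      6 * B ^ 3 * q * (‖g r - k r‖ ^ 2 * r) := by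
  rw [norm_mul, Real.norm_eq_abs, Real.norm_of_nonneg (by positivity)]
  exact mul_le_mul_of_nonneg_right (hg.abs_effPotential_sub_le hk hgk hr) (by positivity)

lemma integrableOn_effPotential_sub_mul (hg : IsProfile m B g g') (hk : IsProfile m B k k')
    (hgk : IsClose B q g k) : IntegrableOn
      (fun r => (effPotential m g r - effPotential m k r) * (‖g r - k r‖ ^ 2 * r)) (Ioi 0) := by
  have := hg.continuous
  have := hk.continuous
  exact integrableOn_Ioi_of_norm_le
    ((hg.continuousOn_effPotential.sub hk.continuousOn_effPotential).mul (by fun_prop))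
    (hgk.radialL2.integrable.const_mul _) fun r hr => hg.norm_effPotential_sub_mul_le hk hgk hr

lemma abs_integral_effPotential_sub_mul_le (hg : IsProfile m B g g') (hk : IsProfile m B k k')
    (hgk : IsClose B q g k) :
    |∫ r in Ioi (0 : ℝ), (effPotential m g r - effPotential m k r) * (‖g r - k r‖ ^ 2 * r)| ≤
      6 * B ^ 4 * q ^ 5 := by
  have hB := hg.four_le
  have hq := hgk.nonneg
  rw [← Real.norm_eq_abs]
  calc _ ≤ ∫ r in Ioi (0 : ℝ), 6 * B ^ 3 * q * (‖g r - k r‖ ^ 2 * r) :=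
        norm_integral_Ioi_le_of_norm_le (hgk.radialL2.integrable.const_mul _)
          fun r hr => hg.norm_effPotential_sub_mul_le hk hgk hr
    _ ≤ 6 * B ^ 3 * q * (B * q ^ 4) := by
        rw [integral_const_mul]
        exact mul_le_mul_of_nonneg_left hgk.radialL2.integral_le (by positivity)
    _ = 6 * B ^ 4 * q ^ 5 := by ring

lemma integral_effPotential_sub_mul_re (hg : IsProfile m B g g') (hk : IsProfile m B k k')
    (hgk : IsClose B q g k) :
    ∫ r in Ioi (0 : ℝ), (effPotential m g r - effPotential m k r) * (g r * conj (k r)).re * r =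
      1 / 2 * (∫ r in Ioi (0 : ℝ),
          (gaugePotential m g r - gaugePotential m k r) * (‖g r‖ ^ 2 * r)) +
        1 / 2 * (∫ r in Ioi (0 : ℝ),
          (gaugePotential m g r - gaugePotential m k r) * (‖k r‖ ^ 2 * r)) -
        1 / 2 * ((∫ r in Ioi (0 : ℝ), (‖g r‖ ^ 2) ^ 2 * r) -
          ∫ r in Ioi (0 : ℝ), (‖k r‖ ^ 2) ^ 2 * r) -
        1 / 2 * ∫ r in Ioi (0 : ℝ),
          (effPotential m g r - effPotential m k r) * (‖g r - k r‖ ^ 2 * r) := by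
  have hVg := (hg.integrableOn_gaugePotential_sub_mul hk hg).const_mul (1 / 2)
  have hVk := (hg.integrableOn_gaugePotential_sub_mul hk hk).const_mul (1 / 2)
  have hQ := (hg.integrableOn_norm_pow_four.sub hk.integrableOn_norm_pow_four).const_mul (1 / 2)
  have hW := (hg.integrableOn_effPotential_sub_mul hk hgk).const_mul (1 / 2)
  rw [← integral_sub hg.integrableOn_norm_pow_four hk.integrableOn_norm_pow_four]
  simp only [← integral_const_mul]
  rw [← integral_add hVg hVk, ← integral_sub (by exact hVg.add hVk) (by exact hQ),
    ← integral_sub (by exact (hVg.add hVk).sub hQ) hW]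
  congr 1
  funext r
  rw [re_mul_conj_eq_half]
  unfold effPotential
  ring

/-- The quadratic form of the difference of the potentials is, up to an error of order higher than
that of the time step `q ^ 4`, the increment of `energyCorrection`. -/
lemma abs_integral_effPotential_sub_mul_re_add_le (hg : IsProfile m B g g')
    (hk : IsProfile m B k k') (hgk : IsClose B q g k) :
    |(∫ r in Ioi (0 : ℝ), (effPotential m g r - effPotential m k r) * (g r * conj (k r)).re * r) +
      (energyCorrection m g - energyCorrection m k)| ≤ 5 * B ^ 4 * q ^ 5 := by
  have hB := hg.four_le
  have hq : B ^ 4 * q ^ 6 ≤ B ^ 4 * q ^ 5 := mul_le_mul_of_nonneg_left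
    (pow_le_pow_of_le_one hgk.nonneg hgk.le_one (by norm_num)) (by positivity)
  have hcube := abs_le.1 (hg.abs_integral_halfMass_sub_cube_le hk hgk)
  have hpot := abs_le.1 (hg.abs_integral_effPotential_sub_mul_le hk hgk)
  have htrapezoid := hg.integral_centrifugalDefect_sub_mul_add hk hgk
  rw [hg.integral_effPotential_sub_mul_re hk hgk, hg.integral_gaugePotential_sub_mul hk hg,
    hg.integral_gaugePotential_sub_mul hk hk]
  have : 0 ≤ B ^ 4 * q ^ 5 := mul_nonneg (by positivity) (pow_nonneg hgk.nonneg 5)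
  unfold energyCorrection
  rw [abs_le]
  constructor <;> linarith

end IsProfile

lemma mul_div_le_decayWeight_add {a b A A' r : ℝ} (hr : 0 < r) (ha : 0 ≤ a) (hb : 0 ≤ b)
    (hA : 0 ≤ A) (hA' : 0 ≤ A') (haA : r ≤ 1 → a ≤ A * r) (hbA : r ≤ 1 → b ≤ A' * r) :
    a * b / r ≤ A * A' * decayWeight r + a * b * r := by
  have hκ := decayWeight.nonneg hr.le
  rcases le_total r 1 with hr1 | hr1
  · have hle : r ≤ decayWeight r := by
      unfold decayWeight
      rw [le_div_iff₀ (by positivity)]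
      have : (1 + r ^ 2) ^ 2 ≤ 4 := by
        nlinarith [sq_nonneg r, mul_le_mul hr1 hr1 hr.le zero_le_one]
      nlinarith
    calc a * b / r ≤ A * r * (A' * r) / r := by gcongr; exacts [haA hr1, hbA hr1]
      _ = A * A' * r := by field_simp
      _ ≤ A * A' * decayWeight r := by gcongr
      _ ≤ A * A' * decayWeight r + a * b * r := le_add_of_nonneg_right (by positivity)
  · calc a * b / r ≤ a * b * r := by
          rw [div_le_iff₀ hr]
          nlinarith [mul_nonneg ha hb, mul_nonneg (mul_nonneg ha hb) (sub_nonneg.2 hr1)]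
      _ ≤ A * A' * decayWeight r + a * b * r := le_add_of_nonneg_left (by positivity)

/-- The density of the Hermitian pairing of `g` and `k` through the potential energy
`m² / r² + effPotential m g`; it is not symmetric, since the potential is that of `g`. -/
noncomputable def potentialPairing (m : ℕ) (g k : ℝ → ℂ) (r : ℝ) : ℂ :=
  (((m : ℝ) ^ 2 / r ^ 2 + effPotential m g r : ℝ) : ℂ) * (g r * conj (k r)) * (r : ℂ)

namespace IsProfile

variable {m : ℕ} {B q : ℝ} {g g' k k' : ℝ → ℂ}

lemma continuousOn_potentialPairing (hg : IsProfile m B g g') (hk : Continuous k) :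
    ContinuousOn (potentialPairing m g k) (Ioi 0) := by
  have := hg.continuous
  unfold potentialPairing
  refine ContinuousOn.mul (ContinuousOn.mul ?_ (by fun_prop)) (by fun_prop)
  refine Complex.continuous_ofReal.comp_continuousOn (ContinuousOn.add ?_
    hg.continuousOn_effPotential)
  exact continuousOn_const.div (by fun_prop) fun r hr => pow_ne_zero 2 (mem_Ioi.1 hr).ne'

lemma abs_potential_mul_le (hg : IsProfile m B g g') (hk : IsProfile m B k k') {A r : ℝ} {w : ℂ}
    (hr : 0 < r) (hA : 0 ≤ A) (hw : r ≤ 1 → ‖w‖ ≤ A * r) :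
    |(m : ℝ) ^ 2 / r ^ 2 + effPotential m g r| * (‖w‖ * ‖k r‖ * r) ≤
      A * B ^ 3 * decayWeight r + 6 * B ^ 3 * (‖w‖ * ‖k r‖ * r) := by
  have hB := hg.four_le
  have hmB : (m : ℝ) ≤ B := by linarith [hg.natCast_le]
  have hquot : ‖w‖ * ‖k r‖ / r ≤ A * B * decayWeight r + ‖w‖ * ‖k r‖ * r :=
    mul_div_le_decayWeight_add hr (norm_nonneg _) (norm_nonneg _) hA (by linarith) hw
      (hk.norm_le_mul r hr.le)
  have hpot : |(m : ℝ) ^ 2 / r ^ 2 + effPotential m g r| ≤ (m : ℝ) ^ 2 / r ^ 2 + 5 * B ^ 3 := by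
    refine (abs_add_le _ _).trans ?_
    rw [abs_of_nonneg (by positivity : 0 ≤ (m : ℝ) ^ 2 / r ^ 2)]
    linarith [hg.abs_effPotential_le hr]
  have hpow : B ^ 2 * (‖w‖ * ‖k r‖ * r) ≤ B ^ 3 * (‖w‖ * ‖k r‖ * r) := by
    gcongr
    exacts [by linarith, by norm_num]
  calc _ ≤ ((m : ℝ) ^ 2 / r ^ 2 + 5 * B ^ 3) * (‖w‖ * ‖k r‖ * r) :=
        mul_le_mul_of_nonneg_right hpot (by positivity)
    _ = (m : ℝ) ^ 2 * (‖w‖ * ‖k r‖ / r) + 5 * B ^ 3 * (‖w‖ * ‖k r‖ * r) := by field_simp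
    _ ≤ B ^ 2 * (A * B * decayWeight r + ‖w‖ * ‖k r‖ * r) + 5 * B ^ 3 * (‖w‖ * ‖k r‖ * r) := by
        gcongr
    _ ≤ A * B ^ 3 * decayWeight r + 6 * B ^ 3 * (‖w‖ * ‖k r‖ * r) := by linarith

lemma norm_potentialPairing_le (hg : IsProfile m B g g') (hk : IsProfile m B k k') {r : ℝ}
    (hr : 0 < r) : ‖potentialPairing m g k r‖ ≤
      B ^ 4 * decayWeight r + 6 * B ^ 3 * (‖g r‖ * ‖k r‖ * r) := by
  have hnorm : ‖potentialPairing m g k r‖ =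
      |(m : ℝ) ^ 2 / r ^ 2 + effPotential m g r| * (‖g r‖ * ‖k r‖ * r) := by
    unfold potentialPairing
    rw [norm_mul, norm_mul, norm_mul, Complex.norm_real, Complex.norm_real, RCLike.norm_conj,
      Real.norm_eq_abs, Real.norm_of_nonneg hr.le]
    ring
  rw [hnorm]
  refine (hg.abs_potential_mul_le hk hr (by linarith [hg.four_le])
    (hg.norm_le_mul r hr.le)).trans_eq ?_
  ring

lemma integrableOn_potentialPairing (hg : IsProfile m B g g') (hk : IsProfile m B k k') :
    IntegrableOn (potentialPairing m g k) (Ioi 0) :=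
  integrableOn_Ioi_of_norm_le (hg.continuousOn_potentialPairing hk.continuous)
    ((decayWeight.integrableOn.const_mul _).add
      ((hg.radialL2.integrable_mul hk.radialL2).const_mul _))
    fun _ hr => hg.norm_potentialPairing_le hk hr

lemma integral_norm_potentialPairing_le (hg : IsProfile m B g g') (hk : IsProfile m B k k') :
    ∫ r in Ioi (0 : ℝ), ‖potentialPairing m g k r‖ ≤ 8 * B ^ 4 := by
  have hB := hg.four_le
  have hweight := decayWeight.integrableOn.const_mul (B ^ 4)
  have hmul := (hg.radialL2.integrable_mul hk.radialL2).const_mul (6 * B ^ 3)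
  calc _ ≤ ∫ r in Ioi (0 : ℝ), (B ^ 4 * decayWeight r + 6 * B ^ 3 * (‖g r‖ * ‖k r‖ * r)) :=
        setIntegral_mono_on (hg.integrableOn_potentialPairing hk).norm (by exact hweight.add hmul)
          measurableSet_Ioi fun _ hr => hg.norm_potentialPairing_le hk hr
    _ ≤ B ^ 4 * 2 + 6 * B ^ 3 * B := by
        rw [integral_add hweight hmul, integral_const_mul, integral_const_mul,
          decayWeight.integral_eq_two]
        gcongr
        exact hg.radialL2.integral_mul_le hk.radialL2 (by linarith) (by nlinarith)
    _ = 8 * B ^ 4 := by ring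

lemma norm_potentialPairing_sub_le (hg : IsProfile m B g g') (hk : IsProfile m B k k')
    (hgk : IsClose B q g k) {r : ℝ} (hr : 0 < r) :
    ‖potentialPairing m g k r - potentialPairing m k k r‖ ≤ B ^ 4 * q * decayWeight r +
      6 * B ^ 3 * (‖g r - k r‖ * ‖k r‖ * r) + 6 * B ^ 3 * q * (‖g r‖ * ‖k r‖ * r) := by
  have hB := hg.four_le
  have hq : q ^ 4 ≤ q := by
    simpa using pow_le_pow_of_le_one hgk.nonneg hgk.le_one (by norm_num : 1 ≤ 4)
  have split : potentialPairing m g k r - potentialPairing m k k r =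
      (((m : ℝ) ^ 2 / r ^ 2 + effPotential m k r : ℝ) : ℂ) * ((g r - k r) * conj (k r)) * (r : ℂ) +
        ((effPotential m g r - effPotential m k r : ℝ) : ℂ) * (g r * conj (k r)) * (r : ℂ) := by
    unfold potentialPairing
    push_cast
    ring
  have hsame := hk.abs_potential_mul_le hk hr (by positivity) (hgk.norm_sub_le_mul r hr.le)
  have hpot := mul_le_mul_of_nonneg_right (hg.abs_effPotential_sub_le hk hgk hr)
    (by positivity : 0 ≤ ‖g r‖ * ‖k r‖ * r)
  have hweight : B ^ 4 * q ^ 4 * decayWeight r ≤ B ^ 4 * q * decayWeight r := by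
    have := decayWeight.nonneg hr.le
    gcongr
  rw [split]
  refine (norm_add_le _ _).trans ?_
  rw [norm_mul, norm_mul, norm_mul, norm_mul, norm_mul, norm_mul, Complex.norm_real,
    Complex.norm_real, Complex.norm_real, RCLike.norm_conj, Real.norm_eq_abs, Real.norm_eq_abs,
    Real.norm_eq_abs, abs_of_pos hr]
  linarith

lemma integral_norm_potentialPairing_sub_le (hg : IsProfile m B g g') (hk : IsProfile m B k k')
    (hgk : IsClose B q g k) :
    ∫ r in Ioi (0 : ℝ), ‖potentialPairing m g k r - potentialPairing m k k r‖ ≤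
      14 * B ^ 4 * q := by
  have hB := hg.four_le
  have hq := hgk.nonneg
  have hqq : q ^ 2 ≤ q := by nlinarith [hgk.le_one]
  have hweight := decayWeight.integrableOn.const_mul (B ^ 4 * q)
  have hdiff := (hgk.radialL2.integrable_mul hk.radialL2).const_mul (6 * B ^ 3)
  have hmul := (hg.radialL2.integrable_mul hk.radialL2).const_mul (6 * B ^ 3 * q)
  calc _ ≤ ∫ r in Ioi (0 : ℝ), (B ^ 4 * q * decayWeight r +
          6 * B ^ 3 * (‖g r - k r‖ * ‖k r‖ * r) + 6 * B ^ 3 * q * (‖g r‖ * ‖k r‖ * r)) :=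
        setIntegral_mono_on
          ((hg.integrableOn_potentialPairing hk).sub (hk.integrableOn_potentialPairing hk)).norm
          (by exact (hweight.add hdiff).add hmul) measurableSet_Ioi
          fun _ hr => hg.norm_potentialPairing_sub_le hk hgk hr
    _ ≤ B ^ 4 * q * 2 + 6 * B ^ 3 * (B * q) + 6 * B ^ 3 * q * B := by
        rw [integral_add (by exact hweight.add hdiff) hmul, integral_add hweight hdiff,
          integral_const_mul, integral_const_mul, integral_const_mul, decayWeight.integral_eq_two]
        gcongr
        · calc _ ≤ B * q ^ 2 :=
                hgk.radialL2.integral_mul_le hk.radialL2 (by positivity) (by nlinarith)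
            _ ≤ B * q := by gcongr
        · exact hg.radialL2.integral_mul_le hk.radialL2 (by linarith) (by nlinarith)
    _ = 14 * B ^ 4 * q := by ring

end IsProfile

/-! ### The Bogomol'nyi square -/

/-- The quadratic form of the Hamiltonian `-Δ + effPotential m g` on the equivariant class,
evaluated at `g` itself; `g'` is the radial derivative of `g`. -/
noncomputable def hamiltonianForm (m : ℕ) (g g' : ℝ → ℂ) : ℝ :=
  (∫ r in Ioi (0 : ℝ), ‖g' r‖ ^ 2 * r) +
    ∫ r in Ioi (0 : ℝ), ((m : ℝ) ^ 2 / r ^ 2 + effPotential m g r) * (‖g r‖ ^ 2 * r)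

/-- The Bogomol'nyi operator `∂ᵣ - (m + A_θ[g]) / r` applied to `g`, where `g'` is the radial
derivative of `g`. Its squared `L²` norm is the conserved energy. -/
noncomputable def bogomolnyiDeriv (m : ℕ) (g g' : ℝ → ℂ) (r : ℝ) : ℂ :=
  g' r - (((m - halfMass g r) / r : ℝ) : ℂ) * g r

/-- The boundary term produced by completing the square in the energy. -/
noncomputable def energyFlux (m : ℕ) (g : ℝ → ℂ) (r : ℝ) : ℝ :=
  -((m - halfMass g r) * ‖g r‖ ^ 2) +
    (-2 * m * halfMass g r ^ 2 + 2 / 3 * halfMass g r ^ 3) / r ^ 2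

lemma norm_sub_ofReal_mul_sq (a b : ℂ) (y : ℝ) :
    ‖a - (y : ℂ) * b‖ ^ 2 = ‖a‖ ^ 2 - 2 * y * (a * conj b).re + y ^ 2 * ‖b‖ ^ 2 := by
  rw [Complex.sq_norm, Complex.sq_norm, Complex.sq_norm]
  simp [Complex.normSq_apply]
  ring

lemma hasDerivAt_norm_sq {g : ℝ → ℂ} {g' : ℂ} {r : ℝ} (hg : HasDerivAt g g' r) :
    HasDerivAt (fun s => ‖g s‖ ^ 2) (2 * (g' * conj (g r)).re) r := by
  refine hg.norm_sq.congr_deriv ?_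
  simp [Complex.inner]

lemma norm_bogomolnyiDeriv_sq_mul (m : ℕ) (g g' : ℝ → ℂ) {r : ℝ} (hr : 0 < r) :
    ‖bogomolnyiDeriv m g g' r‖ ^ 2 * r = ‖g' r‖ ^ 2 * r -
      (m - halfMass g r) * (2 * (g' r * conj (g r)).re) +
      (m - halfMass g r) ^ 2 * (‖g r‖ ^ 2 / r) := by
  unfold bogomolnyiDeriv
  rw [norm_sub_ofReal_mul_sq]
  field_simp

namespace IsProfile

variable {m : ℕ} {B : ℝ} {g g' : ℝ → ℂ}

lemma integrableOn_norm_sq_div (hg : IsProfile m B g g') :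
    IntegrableOn (fun r => ‖g r‖ ^ 2 / r) (Ioi 0) := by
  have hc := hg.continuous
  have hB : 0 ≤ B := by linarith [hg.four_le]
  refine integrableOn_Ioi_of_norm_le (ContinuousOn.div (by fun_prop) (by fun_prop) fun r hr =>
    (mem_Ioi.1 hr).ne') ((decayWeight.integrableOn.const_mul (B * B)).add hg.radialL2.integrable)
    fun r hr => ?_
  rw [Real.norm_of_nonneg (by positivity), sq]
  simpa only [sq, Pi.add_apply] using mul_div_le_decayWeight_add hr (norm_nonneg (g r))
    (norm_nonneg (g r)) hB hB (hg.norm_le_mul r hr.le) (hg.norm_le_mul r hr.le)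

lemma continuousOn_bogomolnyiDeriv (hg : IsProfile m B g g') :
    ContinuousOn (bogomolnyiDeriv m g g') (Ioi 0) := by
  have := hg.continuous
  have := hg.radialL2_deriv.continuous
  have := continuous_halfMass hg.continuous
  unfold bogomolnyiDeriv
  refine ContinuousOn.sub (by fun_prop) (ContinuousOn.mul ?_ (by fun_prop))
  refine Complex.continuous_ofReal.comp_continuousOn ?_
  exact ContinuousOn.div (by fun_prop) (by fun_prop) fun r hr => (mem_Ioi.1 hr).ne'

lemma norm_bogomolnyiDeriv_sq_mul_le (hg : IsProfile m B g g') {r : ℝ} (hr : 0 < r) :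
    ‖bogomolnyiDeriv m g g' r‖ ^ 2 * r ≤
      2 * (‖g' r‖ ^ 2 * r) + 2 * B ^ 2 * (‖g r‖ ^ 2 / r) := by
  have htri : ‖bogomolnyiDeriv m g g' r‖ ≤ ‖g' r‖ + B / r * ‖g r‖ := by
    unfold bogomolnyiDeriv
    refine (norm_sub_le _ _).trans ?_
    rw [norm_mul, Complex.norm_real, Real.norm_eq_abs, abs_div, abs_of_pos hr]
    have := hg.abs_sub_halfMass_le hr.le
    gcongr
  calc ‖bogomolnyiDeriv m g g' r‖ ^ 2 * r ≤ (2 * (‖g' r‖ ^ 2 + (B / r * ‖g r‖) ^ 2)) * r :=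
        mul_le_mul_of_nonneg_right
          ((pow_le_pow_left₀ (norm_nonneg _) htri 2).trans (add_sq_le)) hr.le
    _ = 2 * (‖g' r‖ ^ 2 * r) + 2 * B ^ 2 * (‖g r‖ ^ 2 / r) := by field_simp

lemma integrableOn_norm_bogomolnyiDeriv_sq (hg : IsProfile m B g g') :
    IntegrableOn (fun r => ‖bogomolnyiDeriv m g g' r‖ ^ 2 * r) (Ioi 0) := by
  refine integrableOn_Ioi_of_norm_le ((hg.continuousOn_bogomolnyiDeriv.norm.pow 2).mul
    (by fun_prop)) ((hg.radialL2_deriv.integrable.const_mul 2).add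
      (hg.integrableOn_norm_sq_div.const_mul (2 * B ^ 2))) fun r hr => ?_
  rw [Real.norm_of_nonneg (by positivity)]
  exact hg.norm_bogomolnyiDeriv_sq_mul_le hr

lemma tendsto_norm_sq_atTop (hg : IsProfile m B g g') :
    Tendsto (fun r => ‖g r‖ ^ 2) atTop (𝓝 0) := by
  have hc := hg.continuous
  have hc' := hg.radialL2_deriv.continuous
  have hsub : Ioi (1 : ℝ) ⊆ Ioi 0 := Ioi_subset_Ioi zero_le_one
  refine tendsto_zero_of_hasDerivAt_of_integrableOn_Ioi (a := 1)
    (fun r _ => hasDerivAt_norm_sq (hg.hasDerivAt r)) ?_ ?_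
  · refine integrableOn_Ioi_of_norm_le (by fun_prop)
      (IntegrableOn.mono_set
        ((hg.radialL2_deriv.integrable_mul hg.radialL2).const_mul 2) hsub) fun r hr => ?_
    have hre := Complex.abs_re_le_norm (g' r * conj (g r))
    rw [norm_mul, RCLike.norm_conj] at hre
    rw [norm_mul, Real.norm_eq_abs, Real.norm_eq_abs, abs_two]
    nlinarith [mul_nonneg (norm_nonneg (g' r)) (norm_nonneg (g r))]
  · refine integrableOn_Ioi_of_norm_le (by fun_prop) (hg.radialL2.integrable.mono_set hsub)
      fun r hr => ?_
    rw [Real.norm_of_nonneg (by positivity)]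
    exact le_mul_of_one_le_right (by positivity) hr.le

lemma abs_energyFlux_le (hg : IsProfile m B g g') {r : ℝ} (hr : 0 < r) :
    |energyFlux m g r| ≤ B * ‖g r‖ ^ 2 + 3 * B ^ 2 * (halfMass g r / r ^ 2) := by
  have hM := hg.halfMass_le hr.le
  have hM0 := halfMass_nonneg (g := g) hr.le
  have hfactor : |-2 * m * halfMass g r + 2 / 3 * halfMass g r ^ 2| ≤ 3 * B ^ 2 := by
    have := hg.momentum_le
    have : (0 : ℝ) ≤ m := m.cast_nonneg
    rw [abs_le]
    constructor <;> nlinarith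
  have factor : energyFlux m g r = -((m - halfMass g r) * ‖g r‖ ^ 2) +
      (-2 * m * halfMass g r + 2 / 3 * halfMass g r ^ 2) * (halfMass g r / r ^ 2) := by
    unfold energyFlux; ring
  rw [factor]
  refine (abs_add_le _ _).trans ?_
  rw [abs_neg, abs_mul, abs_mul, abs_of_nonneg (by positivity : 0 ≤ ‖g r‖ ^ 2),
    abs_of_nonneg (by positivity : 0 ≤ halfMass g r / r ^ 2)]
  have := hg.abs_sub_halfMass_le hr.le
  gcongr

lemma energyFlux_zero (hg : IsProfile m B g g') : energyFlux m g 0 = 0 := by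
  simp [energyFlux, hg.apply_zero]

lemma continuousWithinAt_energyFlux (hg : IsProfile m B g g') :
    ContinuousWithinAt (energyFlux m g) (Ici 0) 0 := by
  have hB := hg.four_le
  have hmajorant : Tendsto (fun r : ℝ => (B ^ 3 + 3 * B ^ 4) * r ^ 2) (𝓝[≥] 0) (𝓝 0) := by
    have : Continuous fun r : ℝ => (B ^ 3 + 3 * B ^ 4) * r ^ 2 := by fun_prop
    simpa using (this.tendsto 0).mono_left nhdsWithin_le_nhds
  rw [ContinuousWithinAt, hg.energyFlux_zero]
  refine squeeze_zero_norm' ?_ hmajorant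
  filter_upwards [nhdsWithin_le_nhds (Iio_mem_nhds zero_lt_one), self_mem_nhdsWithin]
    with r hr1 hr0
  rcases (mem_Ici.1 hr0).eq_or_lt with rfl | hr
  · simp [hg.energyFlux_zero]
  have hsq : ‖g r‖ ^ 2 ≤ (B * r) ^ 2 :=
    pow_le_pow_left₀ (norm_nonneg _) (hg.norm_le_mul r hr.le (le_of_lt hr1)) 2
  have hM : halfMass g r / r ^ 2 ≤ B ^ 2 * r ^ 2 := by
    rw [div_le_iff₀ (by positivity)]
    linarith [hg.halfMass_le_pow hr.le (le_of_lt hr1)]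
  calc ‖energyFlux m g r‖ ≤ B * ‖g r‖ ^ 2 + 3 * B ^ 2 * (halfMass g r / r ^ 2) :=
        hg.abs_energyFlux_le hr
    _ ≤ B * (B * r) ^ 2 + 3 * B ^ 2 * (B ^ 2 * r ^ 2) := by gcongr
    _ = (B ^ 3 + 3 * B ^ 4) * r ^ 2 := by ring

lemma tendsto_energyFlux_atTop (hg : IsProfile m B g g') :
    Tendsto (energyFlux m g) atTop (𝓝 0) := by
  have hmajorant : Tendsto (fun r : ℝ => B * ‖g r‖ ^ 2 + 3 * B ^ 2 * (B / 2 / r ^ 2)) atTop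
      (𝓝 0) := by
    have hdiv : Tendsto (fun r : ℝ => B / 2 / r ^ 2) atTop (𝓝 0) :=
      tendsto_const_nhds.div_atTop (tendsto_pow_atTop (by norm_num))
    simpa using (hg.tendsto_norm_sq_atTop.const_mul B).add (hdiv.const_mul (3 * B ^ 2))
  refine squeeze_zero_norm' ?_ hmajorant
  filter_upwards [eventually_gt_atTop 0] with r hr
  refine (hg.abs_energyFlux_le hr).trans ?_
  have := hg.halfMass_le hr.le
  gcongr

lemma hasDerivAt_energyFlux (hg : IsProfile m B g g') {r : ℝ} (hr : 0 < r) :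
    HasDerivAt (energyFlux m g) (‖bogomolnyiDeriv m g g' r‖ ^ 2 * r -
      (‖g' r‖ ^ 2 * r + (m : ℝ) ^ 2 * (‖g r‖ ^ 2 / r) - 1 / 2 * ((‖g r‖ ^ 2) ^ 2 * r) +
        gaugeDensity m g r / r ^ 3 - 4 * (centrifugalDefect m g r * halfMass g r / r ^ 3))) r := by
  have hM := hasDerivAt_halfMass hg.continuous r
  have hlocal := ((hM.const_sub (m : ℝ)).mul (hasDerivAt_norm_sq (hg.hasDerivAt r))).neg
  have hgauge := (((hM.pow 2).const_mul (-2 * (m : ℝ))).add ((hM.pow 3).const_mul (2 / 3))).div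
    (hasDerivAt_pow 2 r) (by positivity)
  refine (hlocal.add hgauge).congr_deriv ?_
  rw [norm_bogomolnyiDeriv_sq_mul m g g' hr]
  simp only [Pi.add_apply, Pi.pow_apply, centrifugalDefect, gaugeDensity]
  generalize (g' r * conj (g r)).re = x
  field_simp
  ring

lemma integral_potential_mul_norm_sq (hg : IsProfile m B g g') :
    ∫ r in Ioi (0 : ℝ), ((m : ℝ) ^ 2 / r ^ 2 + effPotential m g r) * (‖g r‖ ^ 2 * r) =
      (m : ℝ) ^ 2 * (∫ r in Ioi (0 : ℝ), ‖g r‖ ^ 2 / r) +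
        (∫ r in Ioi (0 : ℝ), gaugePotential m g r * (‖g r‖ ^ 2 * r)) -
        ∫ r in Ioi (0 : ℝ), (‖g r‖ ^ 2) ^ 2 * r := by
  have hcentrifugal := hg.integrableOn_norm_sq_div.const_mul ((m : ℝ) ^ 2)
  have hgauge := hg.integrableOn_gaugePotential_mul hg
  rw [← integral_const_mul, ← integral_add hcentrifugal hgauge,
    ← integral_sub (by exact hcentrifugal.add hgauge) hg.integrableOn_norm_pow_four]
  refine setIntegral_congr_fun measurableSet_Ioi fun r hr => ?_
  have : r ≠ 0 := (mem_Ioi.1 hr).ne'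
  simp only [effPotential]
  field_simp
  ring

theorem integral_norm_bogomolnyiDeriv_sq (hg : IsProfile m B g g') :
    ∫ r in Ioi (0 : ℝ), ‖bogomolnyiDeriv m g g' r‖ ^ 2 * r =
      hamiltonianForm m g g' + energyCorrection m g := by
  have hkinetic := hg.radialL2_deriv.integrable
  have hcentrifugal := hg.integrableOn_norm_sq_div.const_mul ((m : ℝ) ^ 2)
  have hquartic := hg.integrableOn_norm_pow_four.const_mul (1 / 2)
  have hdensity := hg.integrableOn_gaugeDensity_div_cube
  have hcross := (hg.integrableOn_centrifugalDefect_mul_halfMass hg).const_mul 4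
  have hsum₂ := hkinetic.add hcentrifugal
  have hsum₃ := hsum₂.sub hquartic
  have hsum₄ := hsum₃.add hdensity
  have hsum₅ := hsum₄.sub hcross
  have hflux := integral_Ioi_of_hasDerivAt_of_tendsto hg.continuousWithinAt_energyFlux
    (fun r hr => hg.hasDerivAt_energyFlux hr)
    (hg.integrableOn_norm_bogomolnyiDeriv_sq.sub hsum₅) hg.tendsto_energyFlux_atTop
  rw [hg.energyFlux_zero, integral_sub hg.integrableOn_norm_bogomolnyiDeriv_sq (by exact hsum₅),
    integral_sub (by exact hsum₄) hcross, integral_add (by exact hsum₃) hdensity,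
    integral_sub (by exact hsum₂) hquartic, integral_add hkinetic hcentrifugal,
    integral_const_mul, integral_const_mul, integral_const_mul] at hflux
  unfold hamiltonianForm energyCorrection
  rw [hg.integral_potential_mul_norm_sq, hg.integral_gaugePotential_mul hg]
  linarith

end IsProfile

/-! ### Truncated pairings -/

/-- The integral of `f` over `(0, R)` against the Cesàro weight `1 - r / R`. The weight vanishes at
`R`, so that integrating by parts leaves no boundary term there. -/
noncomputable def cesaroIntegral (R : ℝ) (f : ℝ → ℂ) : ℂ :=
  ∫ r in (0 : ℝ)..R, ((1 - r / R : ℝ) : ℂ) * f r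

lemma intervalIntegrable_of_integrableOn_Ioi {R : ℝ} (hR : 0 < R) {f : ℝ → ℂ}
    (hf : IntegrableOn f (Ioi 0)) : IntervalIntegrable f volume 0 R :=
  (intervalIntegrable_iff_integrableOn_Ioc_of_le hR.le).2 (hf.mono_set Ioc_subset_Ioi_self)

lemma norm_intervalIntegral_le_integral_Ioi_norm {R : ℝ} (hR : 0 < R) {f : ℝ → ℂ}
    (hf : IntegrableOn f (Ioi 0)) :
    ‖∫ r in (0 : ℝ)..R, f r‖ ≤ ∫ r in Ioi (0 : ℝ), ‖f r‖ := by
  rw [intervalIntegral.integral_of_le hR.le]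
  exact (norm_integral_le_integral_norm _).trans (setIntegral_mono_set hf.norm
    (Eventually.of_forall fun r => norm_nonneg _) Ioc_subset_Ioi_self.eventuallyLE)

lemma norm_cesaroWeight_mul_le {R r : ℝ} (hR : 0 < R) (hr : r ∈ Ioc 0 R) (z : ℂ) :
    ‖((1 - r / R : ℝ) : ℂ) * z‖ ≤ ‖z‖ := by
  have hweight : |1 - r / R| ≤ 1 := by
    have := (div_le_one hR).2 hr.2
    have := div_nonneg hr.1.le hR.le
    rw [abs_le]
    constructor <;> linarith
  rw [norm_mul, Complex.norm_real, Real.norm_eq_abs]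
  exact mul_le_of_le_one_left (norm_nonneg _) hweight

lemma intervalIntegrable_cesaroWeight_mul {R : ℝ} {f : ℝ → ℂ}
    (hf : IntervalIntegrable f volume 0 R) :
    IntervalIntegrable (fun r => ((1 - r / R : ℝ) : ℂ) * f r) volume 0 R :=
  hf.continuousOn_mul (by fun_prop)

lemma norm_cesaroIntegral_le {R : ℝ} (hR : 0 < R) {f : ℝ → ℂ} (hf : IntegrableOn f (Ioi 0)) :
    ‖cesaroIntegral R f‖ ≤ ∫ r in Ioi (0 : ℝ), ‖f r‖ := by
  unfold cesaroIntegral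
  rw [intervalIntegral.integral_of_le hR.le]
  calc _ ≤ ∫ r in Ioc 0 R, ‖f r‖ :=
        norm_integral_le_of_norm_le (hf.mono_set Ioc_subset_Ioi_self).norm
          ((ae_restrict_iff' measurableSet_Ioc).2
            (Eventually.of_forall fun _ hr => norm_cesaroWeight_mul_le hR hr _))
    _ ≤ ∫ r in Ioi (0 : ℝ), ‖f r‖ := setIntegral_mono_set hf.norm
        (Eventually.of_forall fun _ => norm_nonneg _) Ioc_subset_Ioi_self.eventuallyLE

lemma tendsto_cesaroWeight_mul {r : ℝ} (hr : 0 < r) (f : ℝ → ℂ) :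
    Tendsto (fun R : ℝ => (Ioc 0 R).indicator (fun s => ((1 - s / R : ℝ) : ℂ) * f s) r) atTop
      (𝓝 (f r)) := by
  have hweight : Tendsto (fun R : ℝ => 1 - r / R) atTop (𝓝 (1 - 0)) :=
    (tendsto_const_nhds.div_atTop tendsto_id).const_sub 1
  have hlim : Tendsto (fun R : ℝ => ((1 - r / R : ℝ) : ℂ) * f r) atTop (𝓝 (f r)) := by
    simpa using ((Complex.continuous_ofReal.tendsto _).comp hweight).mul_const (f r)
  refine hlim.congr' ?_
  filter_upwards [eventually_ge_atTop r] with R hR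
  rw [indicator_of_mem (show r ∈ Ioc 0 R from ⟨hr, hR⟩)]

lemma tendsto_cesaroIntegral {f : ℝ → ℂ} (hf : IntegrableOn f (Ioi 0)) :
    Tendsto (fun R => cesaroIntegral R f) atTop (𝓝 (∫ r in Ioi (0 : ℝ), f r)) := by
  have hlim : Tendsto (fun R : ℝ => ∫ r in Ioi (0 : ℝ),
      (Ioc 0 R).indicator (fun s => ((1 - s / R : ℝ) : ℂ) * f s) r) atTop
      (𝓝 (∫ r in Ioi (0 : ℝ), f r)) := by
    refine tendsto_integral_filter_of_dominated_convergence (fun r => ‖f r‖) ?_ ?_ hf.norm ?_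
    · filter_upwards with R
      exact (AEStronglyMeasurable.mul (Continuous.aestronglyMeasurable (by fun_prop))
        hf.aestronglyMeasurable).indicator measurableSet_Ioc
    · filter_upwards [eventually_gt_atTop 0] with R hR
      filter_upwards with r
      by_cases hr : r ∈ Ioc 0 R
      · rw [indicator_of_mem hr]
        exact norm_cesaroWeight_mul_le hR hr _
      · rw [indicator_of_notMem hr, norm_zero]
        exact norm_nonneg _
    · exact (ae_restrict_iff' measurableSet_Ioi).2
        (Eventually.of_forall fun r hr => tendsto_cesaroWeight_mul hr f)
  refine hlim.congr' ?_
  filter_upwards [eventually_gt_atTop 0] with R hR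
  unfold cesaroIntegral
  rw [intervalIntegral.integral_of_le hR.le, setIntegral_indicator measurableSet_Ioc,
    inter_eq_self_of_subset_right Ioc_subset_Ioi_self]

lemma cesaroIntegral_sub {R : ℝ} {f g : ℝ → ℂ} (hf : IntervalIntegrable f volume 0 R)
    (hg : IntervalIntegrable g volume 0 R) :
    cesaroIntegral R (fun r => f r - g r) = cesaroIntegral R f - cesaroIntegral R g := by
  unfold cesaroIntegral
  rw [← intervalIntegral.integral_sub (intervalIntegrable_cesaroWeight_mul hf)
    (intervalIntegrable_cesaroWeight_mul hg)]
  simp only [mul_sub]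

lemma cesaroIntegral_add {R : ℝ} {f g : ℝ → ℂ} (hf : IntervalIntegrable f volume 0 R)
    (hg : IntervalIntegrable g volume 0 R) :
    cesaroIntegral R (fun r => f r + g r) = cesaroIntegral R f + cesaroIntegral R g := by
  unfold cesaroIntegral
  rw [← intervalIntegral.integral_add (intervalIntegrable_cesaroWeight_mul hf)
    (intervalIntegrable_cesaroWeight_mul hg)]
  simp only [mul_add]

lemma cesaroIntegral_conj {R : ℝ} (hR : 0 < R) (f : ℝ → ℂ) :
    cesaroIntegral R (fun r => conj (f r)) = conj (cesaroIntegral R f) := by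
  unfold cesaroIntegral
  rw [intervalIntegral.integral_of_le hR.le, intervalIntegral.integral_of_le hR.le,
    ← integral_conj]
  simp only [map_mul, Complex.conj_ofReal]

/-- The density of the radial `L²` inner product of `g` and `k`. -/
noncomputable def radialPairing (g k : ℝ → ℂ) (r : ℝ) : ℂ := g r * conj (k r) * (r : ℂ)

lemma conj_radialPairing (g k : ℝ → ℂ) (r : ℝ) :
    conj (radialPairing g k r) = radialPairing k g r := by
  unfold radialPairing
  simp only [map_mul, Complex.conj_ofReal, Complex.conj_conj]
  ring

lemma radialPairing_self (g : ℝ → ℂ) (r : ℝ) :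
    radialPairing g g r = ((‖g r‖ ^ 2 * r : ℝ) : ℂ) := by
  unfold radialPairing
  rw [Complex.mul_conj, Complex.normSq_eq_norm_sq, Complex.ofReal_mul]

lemma continuous_radialPairing {g k : ℝ → ℂ} (hg : Continuous g) (hk : Continuous k) :
    Continuous (radialPairing g k) := by
  unfold radialPairing
  fun_prop

lemma norm_radialPairing (g k : ℝ → ℂ) {r : ℝ} (hr : 0 < r) :
    ‖radialPairing g k r‖ = ‖g r‖ * ‖k r‖ * r := by
  unfold radialPairing
  rw [norm_mul, norm_mul, RCLike.norm_conj, Complex.norm_real, Real.norm_of_nonneg hr.le]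

lemma cesaroIntegral_radialPairing_swap {R : ℝ} (hR : 0 < R) (g k : ℝ → ℂ) :
    cesaroIntegral R (radialPairing g k) = conj (cesaroIntegral R (radialPairing k g)) := by
  rw [← cesaroIntegral_conj hR]
  simp only [conj_radialPairing]

lemma potentialPairing_sub_conj (m : ℕ) (g k : ℝ → ℂ) (r : ℝ) :
    potentialPairing m g k r - conj (potentialPairing m k g r) =
      ((effPotential m g r - effPotential m k r : ℝ) : ℂ) * radialPairing g k r := by
  unfold potentialPairing radialPairing
  simp only [map_mul, Complex.conj_ofReal, Complex.conj_conj]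
  push_cast
  ring

lemma potentialPairing_self (m : ℕ) (g : ℝ → ℂ) (r : ℝ) : potentialPairing m g g r =
    ((((m : ℝ) ^ 2 / r ^ 2 + effPotential m g r) * (‖g r‖ ^ 2 * r) : ℝ) : ℂ) := by
  unfold potentialPairing
  rw [Complex.mul_conj, Complex.normSq_eq_norm_sq]
  push_cast
  ring

namespace IsRadialL2

variable {A A' : ℝ} {f g : ℝ → ℂ}

lemma integrableOn_radialPairing (hf : IsRadialL2 A f) (hg : IsRadialL2 A' g) :
    IntegrableOn (radialPairing f g) (Ioi 0) :=
  integrableOn_Ioi_of_norm_le (continuous_radialPairing hf.continuous hg.continuous).continuousOn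
    (hf.integrable_mul hg) fun _ hr => (norm_radialPairing f g hr).le

lemma integral_norm_radialPairing_le (hf : IsRadialL2 A f) (hg : IsRadialL2 A' g) {c : ℝ}
    (hc : 0 ≤ c) (hAc : A * A' ≤ c ^ 2) : ∫ r in Ioi (0 : ℝ), ‖radialPairing f g r‖ ≤ c :=
  (setIntegral_congr_fun measurableSet_Ioi fun _ hr => norm_radialPairing f g hr).trans_le
    (hf.integral_mul_le hg hc hAc)

lemma tendsto_average_radialPairing (hf : IsRadialL2 A f) (hg : IsRadialL2 A' g) :
    Tendsto (fun R : ℝ => ((1 / R : ℝ) : ℂ) * ∫ r in (0 : ℝ)..R, radialPairing f g r) atTop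
      (𝓝 0) := by
  have hint := intervalIntegral_tendsto_integral_Ioi 0 (hf.integrableOn_radialPairing hg)
    tendsto_id
  have hinv : Tendsto (fun R : ℝ => ((1 / R : ℝ) : ℂ)) atTop (𝓝 ((0 : ℝ) : ℂ)) :=
    (Complex.continuous_ofReal.tendsto _).comp (tendsto_const_nhds.div_atTop tendsto_id)
  simpa using hinv.mul hint

end IsRadialL2

/-- The sesquilinear form of the Hamiltonian `-Δ + effPotential m g` at `(g, k)`, in the form in
which it arises from the Cesàro weight `1 - r / R`; `g'` and `k'` are the radial derivatives. -/
noncomputable def truncatedForm (m : ℕ) (R : ℝ) (g g' k k' : ℝ → ℂ) : ℂ :=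
  cesaroIntegral R (radialPairing g' k') -
    ((1 / R : ℝ) : ℂ) * (∫ r in (0 : ℝ)..R, radialPairing g' k r) +
    cesaroIntegral R (potentialPairing m g k)

lemma intervalIntegral_radialLaplacian_mul_conj {R : ℝ} (hR : 0 < R) {g' g'' k k' : ℝ → ℂ}
    (hg' : ∀ r, HasDerivAt g' (g'' r) r) (hg'' : Continuous g'')
    (hk : ∀ r, HasDerivAt k (k' r) r) (hk' : Continuous k') :
    ∫ r in (0 : ℝ)..R, ((1 - r / R : ℝ) : ℂ) * conj (k r) * (g' r + r * g'' r) =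
      ((1 / R : ℝ) : ℂ) * (∫ r in (0 : ℝ)..R, radialPairing g' k r) -
        cesaroIntegral R (radialPairing g' k') := by
  have hg'c : Continuous g' := continuous_iff_continuousAt.2 fun r => (hg' r).continuousAt
  have hkc : Continuous k := continuous_iff_continuousAt.2 fun r => (hk r).continuousAt
  have hu (r : ℝ) : HasDerivAt (fun s : ℝ => ((1 - s / R : ℝ) : ℂ) * conj (k s))
      (((-(1 / R) : ℝ) : ℂ) * conj (k r) + ((1 - r / R : ℝ) : ℂ) * conj (k' r)) r :=
    (HasDerivAt.ofReal_comp (((hasDerivAt_id r).div_const R).const_sub 1)).mul (hk r).star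
  have hv (r : ℝ) : HasDerivAt (fun s : ℝ => (s : ℂ) * g' s) (g' r + r * g'' r) r :=
    ((HasDerivAt.ofReal_comp (hasDerivAt_id r)).mul (hg' r)).congr_deriv (by simp)
  have hbyparts := intervalIntegral.integral_mul_deriv_eq_deriv_mul (a := 0) (b := R)
    (fun r _ => hu r) (fun r _ => hv r) (Continuous.intervalIntegrable (by fun_prop) _ _)
    (Continuous.intervalIntegrable (by fun_prop) _ _)
  have hproduct : ∫ r in (0 : ℝ)..R, (((-(1 / R) : ℝ) : ℂ) * conj (k r) +
      ((1 - r / R : ℝ) : ℂ) * conj (k' r)) * ((r : ℂ) * g' r) =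
      cesaroIntegral R (radialPairing g' k') -
        ((1 / R : ℝ) : ℂ) * ∫ r in (0 : ℝ)..R, radialPairing g' k r := by
    unfold cesaroIntegral
    rw [← intervalIntegral.integral_const_mul, ← intervalIntegral.integral_sub
      (intervalIntegrable_cesaroWeight_mul
        ((continuous_radialPairing hg'c hk').intervalIntegrable _ _))
      (((continuous_radialPairing hg'c hkc).intervalIntegrable _ _).const_mul _)]
    congr 1
    funext r
    unfold radialPairing
    push_cast
    ring
  rw [hbyparts, hproduct, div_self hR.ne']
  push_cast
  ring

namespace IsProfile

variable {m : ℕ} {B : ℝ} {g g' g'' k k' : ℝ → ℂ}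

lemma norm_truncatedForm_le (hg : IsProfile m B g g') (hk : IsProfile m B k k') {R : ℝ}
    (hR : 1 ≤ R) : ‖truncatedForm m R g g' k k'‖ ≤ 10 * B ^ 4 := by
  have hR0 : 0 < R := by linarith
  have hB := hg.four_le
  have hkinetic := (norm_cesaroIntegral_le hR0
    (hg.radialL2_deriv.integrableOn_radialPairing hk.radialL2_deriv)).trans
    (hg.radialL2_deriv.integral_norm_radialPairing_le hk.radialL2_deriv (c := B) (by linarith)
      (by nlinarith))
  have hpotential := (norm_cesaroIntegral_le hR0 (hg.integrableOn_potentialPairing hk)).trans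
    (hg.integral_norm_potentialPairing_le hk)
  have hboundary : ‖((1 / R : ℝ) : ℂ) * ∫ r in (0 : ℝ)..R, radialPairing g' k r‖ ≤ B := by
    rw [norm_mul, Complex.norm_real, Real.norm_of_nonneg (by positivity)]
    calc _ ≤ ‖∫ r in (0 : ℝ)..R, radialPairing g' k r‖ :=
          mul_le_of_le_one_left (norm_nonneg _) ((div_le_one hR0).2 hR)
      _ ≤ _ := norm_intervalIntegral_le_integral_Ioi_norm hR0
          (hg.radialL2_deriv.integrableOn_radialPairing hk.radialL2)
      _ ≤ B := hg.radialL2_deriv.integral_norm_radialPairing_le hk.radialL2 (by linarith)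
          (by nlinarith)
  have hpow : B ≤ B ^ 4 := le_self_pow₀ (by linarith) (by norm_num)
  unfold truncatedForm
  refine (norm_add_le _ _).trans ?_
  linarith [norm_sub_le (cesaroIntegral R (radialPairing g' k'))
    (((1 / R : ℝ) : ℂ) * ∫ r in (0 : ℝ)..R, radialPairing g' k r)]

lemma cesaroIntegral_radialPairing_eq (hg : IsProfile m B g g') (hk : IsProfile m B k k') {R : ℝ}
    (hR : 0 < R) {gₜ : ℝ → ℂ} (hg' : ∀ r, HasDerivAt g' (g'' r) r) (hg'' : Continuous g'')
    (heq : ∀ r : ℝ, 0 < r → Complex.I * gₜ r + g'' r + g' r / r -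
      (((m : ℝ) ^ 2 / r ^ 2 + effPotential m g r : ℝ) : ℂ) * g r = 0) :
    cesaroIntegral R (radialPairing gₜ k) = -Complex.I * truncatedForm m R g g' k k' := by
  have hg'c := hg.radialL2_deriv.continuous
  have hkc := hk.continuous
  have hsubst : cesaroIntegral R (radialPairing gₜ k) =
      -Complex.I * (cesaroIntegral R (potentialPairing m g k) -
        ∫ r in (0 : ℝ)..R, ((1 - r / R : ℝ) : ℂ) * conj (k r) * (g' r + r * g'' r)) := by
    unfold cesaroIntegral
    rw [← intervalIntegral.integral_sub (intervalIntegrable_cesaroWeight_mul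
        (intervalIntegrable_of_integrableOn_Ioi hR (hg.integrableOn_potentialPairing hk)))
      (Continuous.intervalIntegrable (by fun_prop) _ _), ← intervalIntegral.integral_const_mul]
    refine intervalIntegral.integral_congr_ae (Eventually.of_forall fun r hr => ?_)
    rw [uIoc_of_le hR.le] at hr
    have hr0 : (r : ℂ) ≠ 0 := by exact_mod_cast hr.1.ne'
    have hgt : gₜ r = -Complex.I *
        ((((m : ℝ) ^ 2 / r ^ 2 + effPotential m g r : ℝ) : ℂ) * g r - g'' r - g' r / r) := by
      linear_combination (-Complex.I) * heq r hr.1 + gₜ r * Complex.I_sq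
    unfold radialPairing potentialPairing
    rw [hgt]
    field_simp
    ring
  rw [hsubst, intervalIntegral_radialLaplacian_mul_conj hR hg' hg'' hk.hasDerivAt
    hk.radialL2_deriv.continuous]
  unfold truncatedForm
  ring

lemma tendsto_truncatedForm_self (hg : IsProfile m B g g') :
    Tendsto (fun R => truncatedForm m R g g' g g') atTop
      (𝓝 ((hamiltonianForm m g g' : ℝ) : ℂ)) := by
  have hlim := ((tendsto_cesaroIntegral
    (hg.radialL2_deriv.integrableOn_radialPairing hg.radialL2_deriv)).sub
    (hg.radialL2_deriv.tendsto_average_radialPairing hg.radialL2)).add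
    (tendsto_cesaroIntegral (hg.integrableOn_potentialPairing hg))
  simp only [radialPairing_self, potentialPairing_self, integral_complex_ofReal, sub_zero,
    ← Complex.ofReal_add] at hlim
  exact hlim

lemma integrableOn_conj_potentialPairing (hg : IsProfile m B g g') (hk : IsProfile m B k k') :
    IntegrableOn (fun r => conj (potentialPairing m g k r)) (Ioi 0) :=
  integrableOn_Ioi_of_norm_le
    (Complex.continuous_conj.comp_continuousOn (hg.continuousOn_potentialPairing hk.continuous))
    (hg.integrableOn_potentialPairing hk).norm fun _ _ => (RCLike.norm_conj _).le

lemma re_integral_effPotential_sub_mul_radialPairing (hg : IsProfile m B g g')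
    (hk : IsProfile m B k k') :
    (∫ r in Ioi (0 : ℝ),
      ((effPotential m g r - effPotential m k r : ℝ) : ℂ) * radialPairing g k r).re =
      ∫ r in Ioi (0 : ℝ),
        (effPotential m g r - effPotential m k r) * (g r * conj (k r)).re * r := by
  have hint : IntegrableOn (fun r =>
      ((effPotential m g r - effPotential m k r : ℝ) : ℂ) * radialPairing g k r) (Ioi 0) := by
    simpa only [Pi.sub_def, potentialPairing_sub_conj] using
      (hg.integrableOn_potentialPairing hk).sub (hk.integrableOn_conj_potentialPairing hg)
  rw [← Complex.reCLM_apply, ← ContinuousLinearMap.integral_comp_comm _ hint]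
  congr 1
  funext r
  rw [Complex.reCLM_apply, Complex.re_ofReal_mul, radialPairing, Complex.re_mul_ofReal, mul_assoc]

lemma tendsto_truncatedForm_sub_conj (hg : IsProfile m B g g') (hk : IsProfile m B k k') :
    Tendsto (fun R => truncatedForm m R g g' k k' - conj (truncatedForm m R k k' g g')) atTop
      (𝓝 (∫ r in Ioi (0 : ℝ),
        ((effPotential m g r - effPotential m k r : ℝ) : ℂ) * radialPairing g k r)) := by
  have hgk := hg.integrableOn_potentialPairing hk
  have hkg := hk.integrableOn_conj_potentialPairing hg
  have hconj : Tendsto (fun R : ℝ =>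
      conj (((1 / R : ℝ) : ℂ) * ∫ r in (0 : ℝ)..R, radialPairing k' g r)) atTop (𝓝 0) := by
    simpa only [map_zero, Function.comp_def] using (Complex.continuous_conj.tendsto _).comp
      (hk.radialL2_deriv.tendsto_average_radialPairing hg.radialL2)
  have hlim := ((tendsto_cesaroIntegral (hgk.sub hkg)).sub
    (hg.radialL2_deriv.tendsto_average_radialPairing hk.radialL2)).add hconj
  simp only [Pi.sub_apply, potentialPairing_sub_conj, sub_zero, add_zero] at hlim
  refine hlim.congr' ?_
  filter_upwards [eventually_gt_atTop 0] with R hR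
  simp only [Pi.sub_def]
  rw [cesaroIntegral_sub (intervalIntegrable_of_integrableOn_Ioi hR hgk)
    (intervalIntegrable_of_integrableOn_Ioi hR hkg), cesaroIntegral_conj hR]
  unfold truncatedForm
  rw [map_add, map_sub, ← cesaroIntegral_radialPairing_swap hR g' k']
  ring

end IsProfile

/-! ### Time regularity of solutions -/

lemma hasDerivAt_intervalIntegral_of_continuousOn_deriv {E : Type*} [NormedAddCommGroup E]
    [NormedSpace ℝ E] {a b R t : ℝ} {F F' : ℝ → ℝ → E} (hR : 0 < R)
    (hF : ∀ σ ∈ Ioo a b, Continuous (F σ))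
    (hF' : ∀ σ ∈ Ioo a b, ∀ r, HasDerivAt (fun s => F s r) (F' σ r) σ)
    (hF'c : ContinuousOn (fun p : ℝ × ℝ => F' p.1 p.2) (Ioo a b ×ˢ univ)) (ht : t ∈ Ioo a b) :
    HasDerivAt (fun σ => ∫ r in (0 : ℝ)..R, F σ r) (∫ r in (0 : ℝ)..R, F' t r) t := by
  obtain ⟨ε, hε, hsub⟩ := Metric.nhds_basis_closedBall.mem_iff.1 (Ioo_mem_nhds ht.1 ht.2)
  obtain ⟨C, hC⟩ := ((isCompact_closedBall t ε).prod
    (isCompact_Icc (a := (0 : ℝ)) (b := R))).exists_bound_of_continuousOn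
    (hF'c.mono (prod_mono hsub (subset_univ _)))
  have hF't : Continuous (F' t) := continuousOn_univ.1
    (hF'c.comp (f := fun r => (t, r)) (by fun_prop) fun _ _ => ⟨ht, mem_univ _⟩)
  refine (intervalIntegral.hasDerivAt_integral_of_dominated_loc_of_deriv_le (μ := volume)
    (bound := fun _ => C) (Metric.closedBall_mem_nhds t hε) ?_
    ((hF t ht).intervalIntegrable _ _) hF't.aestronglyMeasurable
    (Eventually.of_forall fun r hr σ hσ => ?_) intervalIntegrable_const
    (Eventually.of_forall fun r _ σ hσ => hF' σ (hsub hσ) r)).2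
  · filter_upwards [Metric.closedBall_mem_nhds t hε] with σ hσ
    exact (hF σ (hsub hσ)).aestronglyMeasurable
  · rw [uIoc_of_le hR.le] at hr
    exact hC (σ, r) ⟨hσ, hr.1.le, hr.2⟩

lemma norm_sq_le_norm_sq_one_add {w w' : ℝ → ℂ} (hw' : Continuous w')
    (hw : ∀ r, HasDerivAt w (w' r) r)
    (hint : IntegrableOn (fun r => ‖w r‖ * ‖w' r‖ * r) (Ioi 0)) {r : ℝ} (hr : 1 ≤ r) :
    ‖w r‖ ^ 2 ≤ ‖w 1‖ ^ 2 + 2 * ∫ s in Ioi (0 : ℝ), ‖w s‖ * ‖w' s‖ * s := by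
  have hwc : Continuous w := continuous_iff_continuousAt.2 fun r => (hw r).continuousAt
  have hsub : Ioc 1 r ⊆ Ioi 0 := fun s hs => lt_trans zero_lt_one hs.1
  have hftc := intervalIntegral.integral_eq_sub_of_hasDerivAt (a := 1) (b := r)
    (fun s _ => hasDerivAt_norm_sq (hw s)) (Continuous.intervalIntegrable (by fun_prop) _ _)
  have hderiv : ∫ s in (1 : ℝ)..r, 2 * (w' s * conj (w s)).re ≤
      ∫ s in (1 : ℝ)..r, 2 * (‖w s‖ * ‖w' s‖ * s) := by
    refine intervalIntegral.integral_mono_on hr (Continuous.intervalIntegrable (by fun_prop) _ _)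
      (Continuous.intervalIntegrable (by fun_prop) _ _) fun s hs => ?_
    have hre := Complex.re_le_norm (w' s * conj (w s))
    rw [norm_mul, RCLike.norm_conj] at hre
    nlinarith [hs.1, mul_nonneg (norm_nonneg (w' s)) (norm_nonneg (w s))]
  have hmono : ∫ s in (1 : ℝ)..r, 2 * (‖w s‖ * ‖w' s‖ * s) ≤
      2 * ∫ s in Ioi (0 : ℝ), ‖w s‖ * ‖w' s‖ * s := by
    rw [intervalIntegral.integral_const_mul, intervalIntegral.integral_of_le hr]
    refine mul_le_mul_of_nonneg_left (setIntegral_mono_set hint ?_ hsub.eventuallyLE) zero_le_two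
    exact (ae_restrict_iff' measurableSet_Ioi).2 (Eventually.of_forall fun s hs =>
      mul_nonneg (by positivity) (mem_Ioi.1 hs).le)
  linarith

/-- A solution of `i vₜ + vᵣᵣ + vᵣ / r - (m² / r² + effPotential m v) v = 0` on the time interval
`(a, b)`, with `vₜ`, `vᵣ`, `vᵣᵣ` its derivatives: the mass is conserved, all the profiles obey the
same bounds, and the gradient is locally Lipschitz in time, with constant `B` on the unit disc. The
equation is only imposed for `0 < r`. -/
structure IsRadialSolution (m : ℕ) (B a b : ℝ) (v vₜ vᵣ vᵣᵣ : ℝ → ℝ → ℂ) : Prop where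
  profile : ∀ t ∈ Ioo a b, IsProfile m B (v t) (vᵣ t)
  mass_eq : ∀ s ∈ Ioo a b, ∀ t ∈ Ioo a b,
    ∫ r in Ioi (0 : ℝ), ‖v s r‖ ^ 2 * r = ∫ r in Ioi (0 : ℝ), ‖v t r‖ ^ 2 * r
  hasDerivAt_time : ∀ t ∈ Ioo a b, ∀ r, HasDerivAt (fun s => v s r) (vₜ t r) t
  hasDerivAt_deriv : ∀ t ∈ Ioo a b, ∀ r, HasDerivAt (vᵣ t) (vᵣᵣ t r) r
  continuousOn : ContinuousOn (fun p : ℝ × ℝ => v p.1 p.2) (Ioo a b ×ˢ univ)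
  continuousOn_time_deriv : ContinuousOn (fun p : ℝ × ℝ => vₜ p.1 p.2) (Ioo a b ×ˢ univ)
  continuous_deriv_deriv : ∀ t ∈ Ioo a b, Continuous (vᵣᵣ t)
  norm_deriv_sub_le : ∀ s ∈ Ioo a b, ∀ t ∈ Ioo a b, ∀ r ∈ Icc (0 : ℝ) 1,
    ‖vᵣ s r - vᵣ t r‖ ≤ B * |s - t|
  exists_norm_deriv_sub_le : ∀ R : ℝ, ∃ L : ℝ, ∀ s ∈ Ioo a b, ∀ t ∈ Ioo a b,
    ∀ r ∈ Icc (0 : ℝ) R, ‖vᵣ s r - vᵣ t r‖ ≤ L * |s - t|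
  equation : ∀ t ∈ Ioo a b, ∀ r : ℝ, 0 < r → Complex.I * vₜ t r + vᵣᵣ t r + vᵣ t r / r -
    (((m : ℝ) ^ 2 / r ^ 2 + effPotential m (v t) r : ℝ) : ℂ) * v t r = 0

lemma IsProfile.le_hundred_mul_pow_four {m : ℕ} {B : ℝ} {g g' : ℝ → ℂ} (hg : IsProfile m B g g') :
    B ≤ 100 * B ^ 4 := by
  have hB := hg.four_le
  have hpow : B ≤ B ^ 4 := le_self_pow₀ (by linarith) (by norm_num)
  linarith

lemma sqrt_sqrt_pow_four {x : ℝ} (hx : 0 ≤ x) : √√x ^ 4 = x := by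
  rw [show √√x ^ 4 = (√√x ^ 2) ^ 2 by ring, Real.sq_sqrt (Real.sqrt_nonneg x), Real.sq_sqrt hx]

namespace IsRadialSolution

variable {m : ℕ} {B a b s t R : ℝ} {v vₜ vᵣ vᵣᵣ : ℝ → ℝ → ℂ}

lemma continuous_time_deriv (hv : IsRadialSolution m B a b v vₜ vᵣ vᵣᵣ) (ht : t ∈ Ioo a b) :
    Continuous (vₜ t) :=
  continuousOn_univ.1 (hv.continuousOn_time_deriv.comp (f := fun r => (t, r)) (by fun_prop)
    fun _ _ => ⟨ht, mem_univ _⟩)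

lemma cesaroIntegral_time_deriv (hv : IsRadialSolution m B a b v vₜ vᵣ vᵣᵣ) (hs : s ∈ Ioo a b)
    (ht : t ∈ Ioo a b) (hR : 0 < R) : cesaroIntegral R (radialPairing (vₜ s) (v t)) =
      -Complex.I * truncatedForm m R (v s) (vᵣ s) (v t) (vᵣ t) :=
  (hv.profile s hs).cesaroIntegral_radialPairing_eq (hv.profile t ht) hR
    (hv.hasDerivAt_deriv s hs) (hv.continuous_deriv_deriv s hs) (hv.equation s hs)

lemma hasDerivAt_cesaroIntegral (hv : IsRadialSolution m B a b v vₜ vᵣ vᵣᵣ) (hs : s ∈ Ioo a b)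
    (ht : t ∈ Ioo a b) (hR : 0 < R) :
    HasDerivAt (fun σ => cesaroIntegral R (radialPairing (v σ) (v t)))
      (-Complex.I * truncatedForm m R (v s) (vᵣ s) (v t) (vᵣ t)) s := by
  have hvt := (hv.profile t ht).continuous
  rw [← hv.cesaroIntegral_time_deriv hs ht hR]
  unfold cesaroIntegral
  refine hasDerivAt_intervalIntegral_of_continuousOn_deriv
    (F := fun σ r => ((1 - r / R : ℝ) : ℂ) * radialPairing (v σ) (v t) r)
    (F' := fun σ r => ((1 - r / R : ℝ) : ℂ) * radialPairing (vₜ σ) (v t) r) hR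
    (fun σ hσ => Continuous.mul (by fun_prop)
      (continuous_radialPairing (hv.profile σ hσ).continuous hvt)) (fun σ hσ r => ?_) ?_ hs
  · unfold radialPairing
    exact (((hv.hasDerivAt_time σ hσ r).mul_const _).mul_const _).const_mul _
  · unfold radialPairing
    exact ContinuousOn.mul (by fun_prop)
      ((hv.continuousOn_time_deriv.mul (by fun_prop)).mul (by fun_prop))

lemma cesaroIntegral_time_deriv_add (hv : IsRadialSolution m B a b v vₜ vᵣ vᵣᵣ)
    (hs : s ∈ Ioo a b) (ht : t ∈ Ioo a b) (hR : 0 < R) :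
    cesaroIntegral R (fun r => radialPairing (vₜ s) (v t) r + radialPairing (v s) (vₜ t) r) =
      -Complex.I * (truncatedForm m R (v s) (vᵣ s) (v t) (vᵣ t) -
        conj (truncatedForm m R (v t) (vᵣ t) (v s) (vᵣ s))) := by
  rw [cesaroIntegral_add
    ((continuous_radialPairing (hv.continuous_time_deriv hs)
      (hv.profile t ht).continuous).intervalIntegrable _ _)
    ((continuous_radialPairing (hv.profile s hs).continuous
      (hv.continuous_time_deriv ht)).intervalIntegrable _ _),
    cesaroIntegral_radialPairing_swap hR (v s), hv.cesaroIntegral_time_deriv hs ht hR,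
    hv.cesaroIntegral_time_deriv ht hs hR]
  simp only [map_mul, map_neg, Complex.conj_I]
  ring

lemma hasDerivAt_cesaroIntegral_doubled (hv : IsRadialSolution m B a b v vₜ vᵣ vᵣᵣ) {h : ℝ}
    (hh : 0 < h) (ht : t ∈ Ioo a (b - h)) (hR : 0 < R) :
    HasDerivAt (fun σ => cesaroIntegral R (radialPairing (v (σ + h)) (v σ)))
      (-Complex.I * (truncatedForm m R (v (t + h)) (vᵣ (t + h)) (v t) (vᵣ t) -
        conj (truncatedForm m R (v t) (vᵣ t) (v (t + h)) (vᵣ (t + h))))) t := by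
  have mem (σ : ℝ) (hσ : σ ∈ Ioo a (b - h)) : σ ∈ Ioo a b := ⟨hσ.1, by linarith [hσ.2]⟩
  have mem_add (σ : ℝ) (hσ : σ ∈ Ioo a (b - h)) : σ + h ∈ Ioo a b :=
    ⟨by linarith [hσ.1], by linarith [hσ.2]⟩
  have hcont (σ : ℝ) (hσ : σ ∈ Ioo a b) := (hv.profile σ hσ).continuous
  have shift {f : ℝ → ℝ → ℂ} (hf : ContinuousOn (fun p : ℝ × ℝ => f p.1 p.2) (Ioo a b ×ˢ univ)) :
      ContinuousOn (fun p : ℝ × ℝ => f (p.1 + h) p.2) (Ioo a (b - h) ×ˢ univ) :=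
    hf.comp (f := fun p : ℝ × ℝ => (p.1 + h, p.2)) (by fun_prop)
      fun p hp => ⟨mem_add _ hp.1, mem_univ _⟩
  have conj_restrict {f : ℝ → ℝ → ℂ}
      (hf : ContinuousOn (fun p : ℝ × ℝ => f p.1 p.2) (Ioo a b ×ˢ univ)) :
      ContinuousOn (fun p : ℝ × ℝ => conj (f p.1 p.2)) (Ioo a (b - h) ×ˢ univ) :=
    Complex.continuous_conj.comp_continuousOn (hf.mono fun p hp => ⟨mem _ hp.1, mem_univ _⟩)
  rw [← hv.cesaroIntegral_time_deriv_add (mem_add t ht) (mem t ht) hR]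
  unfold cesaroIntegral
  refine hasDerivAt_intervalIntegral_of_continuousOn_deriv
    (F := fun σ r => ((1 - r / R : ℝ) : ℂ) * radialPairing (v (σ + h)) (v σ) r)
    (F' := fun σ r => ((1 - r / R : ℝ) : ℂ) *
      (radialPairing (vₜ (σ + h)) (v σ) r + radialPairing (v (σ + h)) (vₜ σ) r)) hR
    (fun σ hσ => Continuous.mul (by fun_prop)
      (continuous_radialPairing (hcont _ (mem_add σ hσ)) (hcont σ (mem σ hσ))))
    (fun σ hσ r => ?_) ?_ ht
  · have hleft : HasDerivAt (fun s => v (s + h) r) (vₜ (σ + h) r) σ :=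
      (hv.hasDerivAt_time _ (mem_add σ hσ) r).comp_add_const σ h
    refine (((hleft.mul (hv.hasDerivAt_time σ (mem σ hσ) r).star).mul_const (r : ℂ)).const_mul
      _).congr_deriv ?_
    unfold radialPairing
    rw [← add_mul]
    rfl
  · unfold radialPairing
    have hvc := hv.continuousOn
    have hvtc := hv.continuousOn_time_deriv
    exact ContinuousOn.mul (by fun_prop) ((((shift hvtc).mul (conj_restrict hvc)).mul
      (by fun_prop)).add (((shift hvc).mul (conj_restrict hvtc)).mul (by fun_prop)))

lemma norm_integral_radialPairing_sub_le (hv : IsRadialSolution m B a b v vₜ vᵣ vᵣᵣ)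
    (hs : s ∈ Ioo a b) (ht : t ∈ Ioo a b) :
    ‖(∫ r in Ioi (0 : ℝ), radialPairing (v s) (v t) r) -
      ∫ r in Ioi (0 : ℝ), radialPairing (v t) (v t) r‖ ≤ 10 * B ^ 4 * |s - t| := by
  have hvt := (hv.profile t ht).radialL2
  refine le_of_tendsto
    ((tendsto_cesaroIntegral ((hv.profile s hs).radialL2.integrableOn_radialPairing hvt)).sub
      (tendsto_cesaroIntegral (hvt.integrableOn_radialPairing hvt))).norm ?_
  filter_upwards [eventually_ge_atTop 1] with R hR
  refine (convex_Ioo a b).norm_image_sub_le_of_norm_hasDerivWithin_le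
    (fun σ hσ => (hv.hasDerivAt_cesaroIntegral hσ ht (by linarith)).hasDerivWithinAt)
    (fun σ hσ => ?_) ht hs
  rw [norm_mul, norm_neg, Complex.norm_I, one_mul]
  exact (hv.profile σ hσ).norm_truncatedForm_le (hv.profile t ht) hR

/-- By conservation of mass, `‖v s - v t‖² = 2 Re ⟨v t - v s, v t⟩`, which is Lipschitz in time. -/
lemma isRadialL2_sub (hv : IsRadialSolution m B a b v vₜ vᵣ vᵣᵣ) (hs : s ∈ Ioo a b)
    (ht : t ∈ Ioo a b) : IsRadialL2 (20 * B ^ 4 * |s - t|) fun r => v s r - v t r := by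
  have hvs := (hv.profile s hs).radialL2
  have hvt := (hv.profile t ht).radialL2
  have hpair := hvs.integrableOn_radialPairing hvt
  have hexpand (r : ℝ) : ‖v s r - v t r‖ ^ 2 * r =
      ‖v s r‖ ^ 2 * r + ‖v t r‖ ^ 2 * r - 2 * (radialPairing (v s) (v t) r).re := by
    unfold radialPairing
    rw [Complex.re_mul_ofReal, re_mul_conj_eq_half]
    ring
  have hre : ∫ r in Ioi (0 : ℝ), (radialPairing (v s) (v t) r).re =
      (∫ r in Ioi (0 : ℝ), radialPairing (v s) (v t) r).re := integral_re hpair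
  have hpairre : IntegrableOn (fun r => (radialPairing (v s) (v t) r).re) (Ioi 0) := hpair.re
  refine ⟨hvs.continuous.sub hvt.continuous, (hvs.sub hvt).integrable, ?_⟩
  have hdiff := hv.norm_integral_radialPairing_sub_le hs ht
  simp only [radialPairing_self, integral_complex_ofReal] at hdiff
  have hlower := (abs_le.1 ((Complex.abs_re_le_norm _).trans hdiff)).1
  rw [Complex.sub_re, Complex.ofReal_re] at hlower
  simp only [hexpand]
  rw [integral_sub (by exact hvs.integrable.add hvt.integrable) (hpairre.const_mul 2),
    integral_add hvs.integrable hvt.integrable, integral_const_mul, hre, hv.mass_eq s hs t ht]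
  linarith

lemma norm_sub_le_mul (hv : IsRadialSolution m B a b v vₜ vᵣ vᵣᵣ) (hs : s ∈ Ioo a b)
    (ht : t ∈ Ioo a b) {r : ℝ} (hr : r ∈ Icc (0 : ℝ) 1) :
    ‖v s r - v t r‖ ≤ B * |s - t| * r := by
  have hvs := hv.profile s hs
  have hvt := hv.profile t ht
  simpa [hvs.apply_zero, hvt.apply_zero] using
    norm_image_sub_le_of_norm_deriv_le_segment' (f := fun x => v s x - v t x)
      (fun x _ => ((hvs.hasDerivAt x).sub (hvt.hasDerivAt x)).hasDerivWithinAt)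
      (fun x hx => hv.norm_deriv_sub_le s hs t ht x ⟨hx.1, hx.2.le⟩) r hr

lemma norm_sub_sq_le (hv : IsRadialSolution m B a b v vₜ vᵣ vᵣᵣ) {q : ℝ} (hs : s ∈ Ioo a b)
    (ht : t ∈ Ioo a b) (hq : 0 ≤ q) (hq1 : q ≤ 1) (hst : |s - t| = q ^ 4) {r : ℝ} (hr : 1 ≤ r) :
    ‖v s r - v t r‖ ^ 2 ≤ (100 * B ^ 4 * q) ^ 2 := by
  have hvs := hv.profile s hs
  have hvt := hv.profile t ht
  have hB := hvs.four_le
  have hL2 := hv.isRadialL2_sub hs ht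
  have hL2' := hvs.radialL2_deriv.sub hvt.radialL2_deriv
  have hq4 : q ^ 4 ≤ q := by simpa using pow_le_pow_of_le_one hq hq1 (by norm_num : 1 ≤ 4)
  have hone : ‖v s 1 - v t 1‖ ≤ B * q := by
    calc _ ≤ B * |s - t| * 1 := hv.norm_sub_le_mul hs ht ⟨zero_le_one, le_rfl⟩
      _ ≤ B * q := by rw [hst, mul_one]; gcongr
  have hcross : ∫ r in Ioi (0 : ℝ), ‖v s r - v t r‖ * ‖vᵣ s r - vᵣ t r‖ * r ≤
      9 * B ^ 3 * q ^ 2 := by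
    refine hL2.integral_mul_le hL2' (by positivity) ?_
    have hpow : B ^ 5 * q ^ 4 ≤ B ^ 6 * q ^ 4 := by gcongr <;> linarith
    rw [hst]
    nlinarith [(by positivity : 0 ≤ B ^ 6 * q ^ 4)]
  calc _ ≤ ‖v s 1 - v t 1‖ ^ 2 +
        2 * ∫ r in Ioi (0 : ℝ), ‖v s r - v t r‖ * ‖vᵣ s r - vᵣ t r‖ * r :=
        norm_sq_le_norm_sq_one_add hL2'.continuous
          (fun x => (hvs.hasDerivAt x).sub (hvt.hasDerivAt x)) (hL2.integrable_mul hL2') hr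
    _ ≤ (B * q) ^ 2 + 2 * (9 * B ^ 3 * q ^ 2) := by gcongr
    _ = (B ^ 2 + 18 * B ^ 3) * q ^ 2 := by ring
    _ ≤ (B ^ 8 + 18 * B ^ 8) * q ^ 2 := by gcongr <;> linarith
    _ ≤ (100 * B ^ 4 * q) ^ 2 := by nlinarith [(by positivity : 0 ≤ B ^ 8 * q ^ 2)]

lemma isClose (hv : IsRadialSolution m B a b v vₜ vᵣ vᵣᵣ) {q : ℝ} (hs : s ∈ Ioo a b)
    (ht : t ∈ Ioo a b) (hq : 0 ≤ q) (hq1 : q ≤ 1) (hst : |s - t| = q ^ 4) :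
    IsClose (100 * B ^ 4) q (v s) (v t) := by
  have hvs := hv.profile s hs
  have hB := hvs.four_le
  have hBB := hvs.le_hundred_mul_pow_four
  have hq4 : q ^ 4 ≤ q := by simpa using pow_le_pow_of_le_one hq hq1 (by norm_num : 1 ≤ 4)
  have hnear {r : ℝ} (hr : 0 ≤ r) (hr1 : r ≤ 1) : ‖v s r - v t r‖ ≤ B * q ^ 4 * r :=
    hst ▸ hv.norm_sub_le_mul hs ht ⟨hr, hr1⟩
  refine ⟨hq, hq1, fun r hr hr1 => (hnear hr hr1).trans (by gcongr),
    (hv.isRadialL2_sub hs ht).mono ?_, fun r hr => ?_⟩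
  · rw [hst]
    gcongr
    norm_num
  · rcases le_total r 1 with hr1 | hr1
    · calc _ ≤ B * q ^ 4 * r := hnear hr hr1
        _ ≤ B * q ^ 4 := mul_le_of_le_one_right (by positivity) hr1
        _ ≤ 100 * B ^ 4 * q := by gcongr
    · exact (sq_le_sq₀ (norm_nonneg _) (by positivity)).1
        (hv.norm_sub_sq_le hs ht hq hq1 hst hr1)

lemma isClose_sqrt_sqrt (hv : IsRadialSolution m B a b v vₜ vᵣ vᵣᵣ) (hs : s ∈ Ioo a b)
    (ht : t ∈ Ioo a b) (hst : |s - t| ≤ 1) : IsClose (100 * B ^ 4) √√|s - t| (v s) (v t) :=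
  hv.isClose hs ht (Real.sqrt_nonneg _) (Real.sqrt_le_one.2 (Real.sqrt_le_one.2 hst))
    (sqrt_sqrt_pow_four (abs_nonneg _)).symm

end IsRadialSolution

/-! ### Conservation of energy -/

lemma integral_Ioi_eq_add {f : ℝ → ℝ} {a b : ℝ} (hab : a ≤ b) (hf : IntegrableOn f (Ioi a)) :
    ∫ r in Ioi a, f r = (∫ r in Ioc a b, f r) + ∫ r in Ioi b, f r := by
  rw [← setIntegral_union (Ioc_disjoint_Ioi le_rfl) measurableSet_Ioi
    (hf.mono_set Ioc_subset_Ioi_self) (hf.mono_set (Ioi_subset_Ioi hab)), Ioc_union_Ioi_eq_Ioi hab]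

lemma tendsto_integral_Ioi_atTop_zero {f : ℝ → ℝ} {a : ℝ} (hf : IntegrableOn f (Ioi a)) :
    Tendsto (fun R => ∫ r in Ioi R, f r) atTop (𝓝 0) := by
  have hlim := (intervalIntegral_tendsto_integral_Ioi a hf tendsto_id).const_sub (∫ r in Ioi a, f r)
  rw [sub_self] at hlim
  refine hlim.congr' ?_
  filter_upwards [eventually_ge_atTop a] with R hR
  rw [integral_Ioi_eq_add hR hf, id, intervalIntegral.integral_of_le hR, add_sub_cancel_left]

namespace IsRadialL2

variable {A A' R : ℝ} {f g : ℝ → ℂ}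

lemma integral_Ioi_le (hf : IsRadialL2 A f) (hR : 0 ≤ R) : ∫ r in Ioi R, ‖f r‖ ^ 2 * r ≤ A :=
  (setIntegral_sq_norm_mul_self_le (Ioi_subset_Ioi hR) hf.integrable).trans hf.integral_le

lemma integral_mul_le_of_norm_le (hf : IsRadialL2 A f) (hg : IsRadialL2 A' g) (hR : 0 ≤ R)
    {δ : ℝ} (hδ : ∀ r ∈ Icc 0 R, ‖f r‖ ≤ δ) {ε : ℝ} (hε : 0 ≤ ε)
    (htail : A * ∫ r in Ioi R, ‖g r‖ ^ 2 * r ≤ ε ^ 2) :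
    ∫ r in Ioi (0 : ℝ), ‖f r‖ * ‖g r‖ * r ≤ δ * (∫ r in Ioc 0 R, ‖g r‖ * r) + ε := by
  have hsub : Ioi R ⊆ Ioi (0 : ℝ) := Ioi_subset_Ioi hR
  have hg' := hg.continuous
  rw [integral_Ioi_eq_add hR (hf.integrable_mul hg), ← integral_const_mul]
  refine add_le_add ?_ ?_
  · refine setIntegral_mono_on ((hf.integrable_mul hg).mono_set Ioc_subset_Ioi_self)
      (Continuous.integrableOn_Ioc (by fun_prop)) measurableSet_Ioc fun r hr => ?_
    have hr0 : 0 ≤ r := hr.1.le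
    rw [mul_assoc]
    gcongr
    exact hδ r ⟨hr0, hr.2⟩
  · exact setIntegral_norm_mul_norm_mul_self_le measurableSet_Ioi hsub hf.continuous hg'
      (hf.integrable.mono_set hsub) (hg.integrable.mono_set hsub) (hf.integral_Ioi_le hR) le_rfl hε
      htail

lemma tendsto_integral_mul {ι : Type*} {l : Filter ι} {F : ι → ℝ → ℂ}
    (hF : ∀ᶠ i in l, IsRadialL2 A (F i)) (hg : IsRadialL2 A' g)
    (hlim : ∀ R : ℝ, TendstoUniformlyOn F 0 l (Icc 0 R)) :
    Tendsto (fun i => ∫ r in Ioi (0 : ℝ), ‖F i r‖ * ‖g r‖ * r) l (𝓝 0) := by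
  have hnonneg (i : ι) : 0 ≤ ∫ r in Ioi (0 : ℝ), ‖F i r‖ * ‖g r‖ * r :=
    setIntegral_nonneg measurableSet_Ioi fun r hr => by
      have : 0 < r := hr
      positivity
  refine tendsto_order.2 ⟨fun c hc => Eventually.of_forall fun i => hc.trans_le (hnonneg i),
    fun ε hε => ?_⟩
  have htail : ∀ᶠ R in atTop, A * (∫ r in Ioi R, ‖g r‖ ^ 2 * r) < (ε / 3) ^ 2 := by
    refine ((tendsto_integral_Ioi_atTop_zero hg.integrable).const_mul A).eventually_lt_const ?_
    rw [mul_zero]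
    positivity
  obtain ⟨R, hR, hR0⟩ := (htail.and (eventually_ge_atTop 0)).exists
  set c := ∫ r in Ioc 0 R, ‖g r‖ * r
  have hc : 0 ≤ c := setIntegral_nonneg measurableSet_Ioc fun r hr =>
    mul_nonneg (norm_nonneg _) hr.1.le
  have hδ : 0 < ε / 3 / (c + 1) := by positivity
  filter_upwards [hF, Metric.tendstoUniformlyOn_iff.1 (hlim R) _ hδ] with i hFi hsmall
  have hlocal : ε / 3 / (c + 1) * c ≤ ε / 3 := by
    rw [div_mul_eq_mul_div, div_le_iff₀ (by positivity)]
    nlinarith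
  linarith [hFi.integral_mul_le_of_norm_le hg hR0 (δ := ε / 3 / (c + 1))
    (fun r hr => by simpa using (hsmall r hr).le) (by positivity) hR.le]

end IsRadialL2

lemma radialPairing_sub_left (f g k : ℝ → ℂ) (r : ℝ) :
    radialPairing (fun r => f r - g r) k r = radialPairing f k r - radialPairing g k r := by
  unfold radialPairing
  ring

namespace IsProfile

variable {m : ℕ} {B q R : ℝ} {g g' k k' : ℝ → ℂ}

lemma truncatedForm_sub (hg : IsProfile m B g g') (hk : IsProfile m B k k') (hR : 0 < R) :
    truncatedForm m R g g' k k' - truncatedForm m R k k' k k' =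
      cesaroIntegral R (radialPairing (fun r => g' r - k' r) k') -
        ((1 / R : ℝ) : ℂ) * (∫ r in (0 : ℝ)..R, radialPairing (fun r => g' r - k' r) k r) +
        cesaroIntegral R (fun r => potentialPairing m g k r - potentialPairing m k k r) := by
  have hkinetic {f : ℝ → ℂ} (hf : IsRadialL2 B f) :=
    intervalIntegrable_of_integrableOn_Ioi hR (hf.integrableOn_radialPairing hk.radialL2_deriv)
  have hboundary {f : ℝ → ℂ} (hf : IsRadialL2 B f) :=
    intervalIntegrable_of_integrableOn_Ioi hR (hf.integrableOn_radialPairing hk.radialL2)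
  simp only [funext (radialPairing_sub_left g' k' k'), radialPairing_sub_left g' k' k]
  rw [cesaroIntegral_sub (hkinetic hg.radialL2_deriv) (hkinetic hk.radialL2_deriv),
    intervalIntegral.integral_sub (hboundary hg.radialL2_deriv) (hboundary hk.radialL2_deriv),
    cesaroIntegral_sub (intervalIntegrable_of_integrableOn_Ioi hR
      (hg.integrableOn_potentialPairing hk)) (intervalIntegrable_of_integrableOn_Ioi hR
      (hk.integrableOn_potentialPairing hk))]
  unfold truncatedForm
  ring

lemma norm_truncatedForm_sub_le (hg : IsProfile m B g g') (hk : IsProfile m B k k')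
    (hgk : IsClose B q g k) (hR : 0 < R) :
    ‖truncatedForm m R g g' k k' - truncatedForm m R k k' k k'‖ ≤
      (∫ r in Ioi (0 : ℝ), ‖g' r - k' r‖ * ‖k' r‖ * r) + 2 * B / R + 14 * B ^ 4 * q := by
  have hB := hg.four_le
  have hdiff := hg.radialL2_deriv.sub hk.radialL2_deriv
  have hkinetic : ‖cesaroIntegral R (radialPairing (fun r => g' r - k' r) k')‖ ≤
      ∫ r in Ioi (0 : ℝ), ‖g' r - k' r‖ * ‖k' r‖ * r :=
    (norm_cesaroIntegral_le hR (hdiff.integrableOn_radialPairing hk.radialL2_deriv)).trans_eq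
      (setIntegral_congr_fun measurableSet_Ioi fun r hr => norm_radialPairing _ _ hr)
  have hboundary : ‖((1 / R : ℝ) : ℂ) *
      ∫ r in (0 : ℝ)..R, radialPairing (fun r => g' r - k' r) k r‖ ≤ 2 * B / R := by
    rw [norm_mul, Complex.norm_real, Real.norm_of_nonneg (by positivity), one_div_mul_eq_div]
    gcongr
    exact (norm_intervalIntegral_le_integral_Ioi_norm hR
      (hdiff.integrableOn_radialPairing hk.radialL2)).trans
      (hdiff.integral_norm_radialPairing_le hk.radialL2 (by linarith) (by nlinarith))
  have hpotential := (norm_cesaroIntegral_le hR ((hg.integrableOn_potentialPairing hk).sub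
    (hk.integrableOn_potentialPairing hk))).trans
    (hg.integral_norm_potentialPairing_sub_le hk hgk)
  rw [hg.truncatedForm_sub hk hR]
  exact (norm_add_le _ _).trans (add_le_add ((norm_sub_le _ _).trans
    (add_le_add hkinetic hboundary)) hpotential)

end IsProfile

section TimeDoubling

variable {a b : ℝ}

lemma tendsto_sqrt_sqrt_abs_sub (t : ℝ) : Tendsto (fun s => √√|s - t|) (𝓝 t) (𝓝 0) := by
  simpa using (by fun_prop : Continuous fun s => √√|s - t|).tendsto t

lemma eventually_abs_sub_le_one (t : ℝ) : ∀ᶠ s in 𝓝 t, |s - t| ≤ 1 := by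
  filter_upwards [Metric.closedBall_mem_nhds t one_pos] with s hs
  rwa [Metric.mem_closedBall, Real.dist_eq] at hs

lemma exists_hasDerivAt_of_continuousOn_Ioo {f : ℝ → ℝ} (hf : ContinuousOn f (Ioo a b)) :
    ∃ F : ℝ → ℝ, ∀ t ∈ Ioo a b, HasDerivAt F (f t) t := by
  refine ⟨fun t => ∫ s in ((a + b) / 2)..t, f s, fun t ht => ?_⟩
  have hmid : (a + b) / 2 ∈ Ioo a b := ⟨by linarith [ht.1, ht.2], by linarith [ht.1, ht.2]⟩
  exact intervalIntegral.integral_hasDerivAt_right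
    (hf.mono (ordConnected_Ioo.uIcc_subset hmid ht)).intervalIntegrable
    (hf.stronglyMeasurableAtFilter isOpen_Ioo t ht) (hf.continuousAt (Ioo_mem_nhds ht.1 ht.2))

lemma norm_sub_le_of_tendsto_deriv {ι E : Type*} [NormedAddCommGroup E] [NormedSpace ℝ E]
    [CompleteSpace E] {l : Filter ι} [l.NeBot] [l.IsCountablyGenerated] {f f' : ι → ℝ → E}
    {g g' : ℝ → E} {C ε : ℝ} (hab : a ≤ b)
    (hderiv : ∀ᶠ i in l, ∀ t ∈ Icc a b, HasDerivAt (f i) (f' i t) t)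
    (hbound : ∀ᶠ i in l, ∀ t ∈ Icc a b, ‖f' i t‖ ≤ C)
    (hf : ∀ t ∈ Icc a b, Tendsto (fun i => f i t) l (𝓝 (g t)))
    (hf' : ∀ t ∈ Icc a b, Tendsto (fun i => f' i t) l (𝓝 (g' t)))
    (hg' : ∀ t ∈ Icc a b, ‖g' t‖ ≤ ε) : ‖g b - g a‖ ≤ ε * (b - a) := by
  have mem {t : ℝ} (ht : t ∈ uIoc a b) : t ∈ Icc a b := uIcc_of_le hab ▸ uIoc_subset_uIcc ht
  have hmeas : ∀ᶠ i in l, AEStronglyMeasurable (f' i) (volume.restrict (uIoc a b)) := by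
    filter_upwards [hderiv] with i hi
    refine (stronglyMeasurable_deriv (f i)).aestronglyMeasurable.congr ?_
    filter_upwards [ae_restrict_mem measurableSet_uIoc] with t ht
    exact (hi t (mem ht)).deriv
  have hlim : Tendsto (fun i => ∫ t in a..b, f' i t) l (𝓝 (∫ t in a..b, g' t)) :=
    intervalIntegral.tendsto_integral_filter_of_dominated_convergence (fun _ => C) hmeas
      (hbound.mono fun i hi => Eventually.of_forall fun t ht => hi t (mem ht))
      intervalIntegrable_const (Eventually.of_forall fun t ht => hf' t (mem ht))
  have hftc : ∀ᶠ i in l, ∫ t in a..b, f' i t = f i b - f i a := by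
    filter_upwards [hderiv, hbound, hmeas] with i hi hiC him
    refine intervalIntegral.integral_eq_sub_of_hasDerivAt
      (fun t ht => hi t (uIcc_of_le hab ▸ ht)) ?_
    refine (intervalIntegrable_const (c := C)).mono_fun him ?_
    filter_upwards [ae_restrict_mem measurableSet_uIoc] with t ht
    exact (hiC t (mem ht)).trans (Real.le_norm_self C)
  rw [tendsto_nhds_unique ((hf b (right_mem_Icc.2 hab)).sub (hf a (left_mem_Icc.2 hab)))
    (hlim.congr' hftc), ← abs_of_nonneg (sub_nonneg.2 hab)]
  exact intervalIntegral.norm_integral_le_of_norm_le_const fun t ht => hg' t (mem ht)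

end TimeDoubling

namespace IsRadialSolution

variable {m : ℕ} {B a b t : ℝ} {v vₜ vᵣ vᵣᵣ : ℝ → ℝ → ℂ}

lemma tendsto_integral_norm_deriv_sub_mul (hv : IsRadialSolution m B a b v vₜ vᵣ vᵣᵣ)
    (ht : t ∈ Ioo a b) :
    Tendsto (fun s => ∫ r in Ioi (0 : ℝ), ‖vᵣ s r - vᵣ t r‖ * ‖vᵣ t r‖ * r) (𝓝 t) (𝓝 0) := by
  have hvt := (hv.profile t ht).radialL2_deriv
  have hmem := Ioo_mem_nhds ht.1 ht.2
  refine IsRadialL2.tendsto_integral_mul (F := fun s r => vᵣ s r - vᵣ t r)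
    (A := 2 * B + 2 * B) ?_ hvt fun R => ?_
  · filter_upwards [hmem] with s hs using (hv.profile s hs).radialL2_deriv.sub hvt
  · obtain ⟨L, hL⟩ := hv.exists_norm_deriv_sub_le R
    have hlim : Tendsto (fun s => L * |s - t|) (𝓝 t) (𝓝 0) := by
      simpa using (by fun_prop : Continuous fun s => L * |s - t|).tendsto t
    refine Metric.tendstoUniformlyOn_iff.2 fun ε hε => ?_
    filter_upwards [hmem, hlim.eventually_lt_const hε] with s hs hsmall r hr
    rw [Pi.zero_apply, dist_zero_left]
    exact (hL s hs t ht r hr).trans_lt hsmall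

lemma tendsto_truncatedForm (hv : IsRadialSolution m B a b v vₜ vᵣ vᵣᵣ) (ht : t ∈ Ioo a b) :
    Tendsto (fun p : ℝ × ℝ => truncatedForm m p.1 (v p.2) (vᵣ p.2) (v t) (vᵣ t))
      (atTop ×ˢ 𝓝 t) (𝓝 ((hamiltonianForm m (v t) (vᵣ t) : ℝ) : ℂ)) := by
  have hvt := hv.profile t ht
  have hBB := hvt.le_hundred_mul_pow_four
  have hbound : Tendsto (fun p : ℝ × ℝ =>
      (∫ r in Ioi (0 : ℝ), ‖vᵣ p.2 r - vᵣ t r‖ * ‖vᵣ t r‖ * r) + 2 * (100 * B ^ 4) / p.1 +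
        14 * (100 * B ^ 4) ^ 4 * √√|p.2 - t|) (atTop ×ˢ 𝓝 t) (𝓝 0) := by
    simpa using (((hv.tendsto_integral_norm_deriv_sub_mul ht).comp tendsto_snd).add
      (tendsto_fst.const_div_atTop _)).add
      (((tendsto_sqrt_sqrt_abs_sub t).comp tendsto_snd).const_mul (14 * (100 * B ^ 4) ^ 4))
  have hdiff : Tendsto (fun p : ℝ × ℝ => truncatedForm m p.1 (v p.2) (vᵣ p.2) (v t) (vᵣ t) -
      truncatedForm m p.1 (v t) (vᵣ t) (v t) (vᵣ t)) (atTop ×ˢ 𝓝 t) (𝓝 0) := by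
    refine squeeze_zero_norm' ?_ hbound
    filter_upwards [tendsto_fst.eventually (eventually_gt_atTop (0 : ℝ)),
      tendsto_snd.eventually (eventually_abs_sub_le_one t),
      tendsto_snd.eventually (Ioo_mem_nhds ht.1 ht.2)] with p hR hnear hp
    exact ((hv.profile p.2 hp).mono hBB).norm_truncatedForm_sub_le (hvt.mono hBB)
      (hv.isClose_sqrt_sqrt hp ht hnear) hR
  simpa using hdiff.add (hvt.tendsto_truncatedForm_self.comp tendsto_fst)

lemma hasDerivAt_integral_radialPairing (hv : IsRadialSolution m B a b v vₜ vᵣ vᵣᵣ)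
    (ht : t ∈ Ioo a b) :
    HasDerivAt (fun s => ∫ r in Ioi (0 : ℝ), radialPairing (v s) (v t) r)
      (-Complex.I * (hamiltonianForm m (v t) (vᵣ t) : ℝ)) t := by
  have hmem := Ioo_mem_nhds ht.1 ht.2
  refine hasDerivAt_of_tendstoUniformlyOnFilter
    (f := fun R s => cesaroIntegral R (radialPairing (v s) (v t)))
    (f' := fun R s => -Complex.I * truncatedForm m R (v s) (vᵣ s) (v t) (vᵣ t))
    (g' := fun _ => -Complex.I * (hamiltonianForm m (v t) (vᵣ t) : ℝ))
    (tendsto_prod_filter_iff.1 ((hv.tendsto_truncatedForm ht).const_mul _)) ?_ ?_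
  · filter_upwards [tendsto_fst.eventually (eventually_gt_atTop (0 : ℝ)),
      tendsto_snd.eventually hmem] with p hR hp using hv.hasDerivAt_cesaroIntegral hp ht hR
  · filter_upwards [hmem] with s hs
    exact tendsto_cesaroIntegral
      ((hv.profile s hs).radialL2.integrableOn_radialPairing (hv.profile t ht).radialL2)

lemma abs_energyCorrection_sub_le (hv : IsRadialSolution m B a b v vₜ vᵣ vᵣᵣ) {s : ℝ}
    (hs : s ∈ Ioo a b) (ht : t ∈ Ioo a b) (hst : |s - t| ≤ 1) :
    |energyCorrection m (v s) - energyCorrection m (v t)| ≤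
      8 * (100 * B ^ 4) ^ 4 * √√|s - t| :=
  have hvt := hv.profile t ht
  ((hv.profile s hs).mono hvt.le_hundred_mul_pow_four).abs_energyCorrection_sub_le
    (hvt.mono hvt.le_hundred_mul_pow_four) (hv.isClose_sqrt_sqrt hs ht hst)

lemma continuousOn_energyCorrection (hv : IsRadialSolution m B a b v vₜ vᵣ vᵣᵣ) :
    ContinuousOn (fun t => energyCorrection m (v t)) (Ioo a b) := by
  intro t ht
  refine (tendsto_iff_norm_sub_tendsto_zero.2 (squeeze_zero'
    (g := fun s => 8 * (100 * B ^ 4) ^ 4 * √√|s - t|)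
    (Eventually.of_forall fun _ => norm_nonneg _) ?_ ?_)).mono_left nhdsWithin_le_nhds
  · filter_upwards [Ioo_mem_nhds ht.1 ht.2, eventually_abs_sub_le_one t] with s hs hst
    exact hv.abs_energyCorrection_sub_le hs ht hst
  · simpa using (tendsto_sqrt_sqrt_abs_sub t).const_mul (8 * (100 * B ^ 4) ^ 4)

lemma norm_doubled_deriv_le (hv : IsRadialSolution m B a b v vₜ vᵣ vᵣᵣ) {s R : ℝ}
    (hs : s ∈ Ioo a b) (ht : t ∈ Ioo a b) (hst : |s - t| ≤ 1) (hR : 1 ≤ R) :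
    ‖(-Complex.I * (truncatedForm m R (v s) (vᵣ s) (v t) (vᵣ t) -
        conj (truncatedForm m R (v t) (vᵣ t) (v s) (vᵣ s)))).im -
      (energyCorrection m (v s) - energyCorrection m (v t))‖ ≤
      20 * B ^ 4 + 8 * (100 * B ^ 4) ^ 4 * √√|s - t| := by
  have hvs := hv.profile s hs
  have hvt := hv.profile t ht
  refine (norm_sub_le _ _).trans (add_le_add ?_ (hv.abs_energyCorrection_sub_le hs ht hst))
  refine (Complex.abs_im_le_norm _).trans ?_
  rw [norm_mul, norm_neg, Complex.norm_I, one_mul]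
  refine (norm_sub_le _ _).trans ?_
  rw [RCLike.norm_conj]
  linarith [hvs.norm_truncatedForm_le hvt hR, hvt.norm_truncatedForm_le hvs hR]

lemma norm_doubled_deriv_limit_le (hv : IsRadialSolution m B a b v vₜ vᵣ vᵣᵣ) {s : ℝ}
    (hs : s ∈ Ioo a b) (ht : t ∈ Ioo a b) (hst : |s - t| ≤ 1) :
    ‖(-Complex.I * ∫ r in Ioi (0 : ℝ), ((effPotential m (v s) r - effPotential m (v t) r : ℝ) : ℂ) *
        radialPairing (v s) (v t) r).im -
      (energyCorrection m (v s) - energyCorrection m (v t))‖ ≤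
      5 * (100 * B ^ 4) ^ 4 * √√|s - t| ^ 5 := by
  have hBB := (hv.profile t ht).le_hundred_mul_pow_four
  have hvs := (hv.profile s hs).mono hBB
  have hvt := (hv.profile t ht).mono hBB
  have him (z : ℂ) : (-Complex.I * z).im = -z.re := by simp
  rw [him, hvs.re_integral_effPotential_sub_mul_radialPairing hvt, ← neg_add', norm_neg]
  exact hvs.abs_integral_effPotential_sub_mul_re_add_le hvt (hv.isClose_sqrt_sqrt hs ht hst)

/-- The increment over a time step `h` of the `P`-corrected pairing of the solution with itself,
where `P` is a primitive in time of `energyCorrection`: it is `-h` times the energy to first order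
in `h`, and varies only by `o(h)` as `t` moves. -/
noncomputable def doubledPairing (v : ℝ → ℝ → ℂ) (P : ℝ → ℝ) (h t : ℝ) : ℝ :=
  (∫ r in Ioi (0 : ℝ), radialPairing (v (t + h)) (v t) r).im - (P (t + h) - P t)

lemma norm_doubledPairing_sub_le (hv : IsRadialSolution m B a b v vₜ vᵣ vᵣᵣ) {P : ℝ → ℝ}
    (hP : ∀ t ∈ Ioo a b, HasDerivAt P (energyCorrection m (v t)) t) {h t₁ t₂ : ℝ} (hh : 0 < h)
    (hh1 : h ≤ 1) (ha : a < t₁) (ht : t₁ ≤ t₂) (hb : t₂ + h < b) :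
    ‖doubledPairing v P h t₂ - doubledPairing v P h t₁‖ ≤
      5 * (100 * B ^ 4) ^ 4 * √√h ^ 5 * (t₂ - t₁) := by
  have mem {t : ℝ} (ht : t ∈ Icc t₁ t₂) : t ∈ Ioo a b := ⟨by linarith [ht.1], by linarith [ht.2]⟩
  have mem_add {t : ℝ} (ht : t ∈ Icc t₁ t₂) : t + h ∈ Ioo a b :=
    ⟨by linarith [ht.1], by linarith [ht.2]⟩
  have habs (t : ℝ) : |t + h - t| = h := by rw [add_sub_cancel_left, abs_of_pos hh]
  refine norm_sub_le_of_tendsto_deriv (l := atTop) (C := 20 * B ^ 4 + 8 * (100 * B ^ 4) ^ 4 * √√h)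
    (f := fun R t => (cesaroIntegral R (radialPairing (v (t + h)) (v t))).im - (P (t + h) - P t))
    (f' := fun R t => (-Complex.I * (truncatedForm m R (v (t + h)) (vᵣ (t + h)) (v t) (vᵣ t) -
        conj (truncatedForm m R (v t) (vᵣ t) (v (t + h)) (vᵣ (t + h))))).im -
      (energyCorrection m (v (t + h)) - energyCorrection m (v t)))
    (g' := fun t => (-Complex.I * ∫ r in Ioi (0 : ℝ),
        ((effPotential m (v (t + h)) r - effPotential m (v t) r : ℝ) : ℂ) *
          radialPairing (v (t + h)) (v t) r).im -
      (energyCorrection m (v (t + h)) - energyCorrection m (v t)))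
    ht ?_ ?_ (fun t ht => ?_) (fun t ht => ?_) (fun t ht => ?_)
  · filter_upwards [eventually_gt_atTop (0 : ℝ)] with R hR t ht
    have hpairing := hv.hasDerivAt_cesaroIntegral_doubled hh
      (t := t) ⟨(mem ht).1, by linarith [(mem_add ht).2]⟩ hR
    exact (Complex.imCLM.hasFDerivAt.comp_hasDerivAt t hpairing).sub
      (((hP _ (mem_add ht)).comp_add_const t h).sub (hP t (mem ht)))
  · filter_upwards [eventually_ge_atTop (1 : ℝ)] with R hR t ht
    simpa only [habs] using
      hv.norm_doubled_deriv_le (mem_add ht) (mem ht) ((habs t).trans_le hh1) hR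
  · exact ((Complex.continuous_im.tendsto _).comp (tendsto_cesaroIntegral
      ((hv.profile _ (mem_add ht)).radialL2.integrableOn_radialPairing
        (hv.profile t (mem ht)).radialL2))).sub_const _
  · exact ((Complex.continuous_im.tendsto _).comp
      (((hv.profile _ (mem_add ht)).tendsto_truncatedForm_sub_conj
        (hv.profile t (mem ht))).const_mul _)).sub_const _
  · simpa only [habs] using
      hv.norm_doubled_deriv_limit_le (mem_add ht) (mem ht) ((habs t).trans_le hh1)

lemma tendsto_inv_mul_doubledPairing (hv : IsRadialSolution m B a b v vₜ vᵣ vᵣᵣ) {P : ℝ → ℝ}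
    (hP : ∀ t ∈ Ioo a b, HasDerivAt P (energyCorrection m (v t)) t) (ht : t ∈ Ioo a b) :
    Tendsto (fun h => h⁻¹ * doubledPairing v P h t) (𝓝[>] 0)
      (𝓝 (-(hamiltonianForm m (v t) (vᵣ t) + energyCorrection m (v t)))) := by
  have hderiv := (Complex.imCLM.hasFDerivAt.comp_hasDerivAt t
    (hv.hasDerivAt_integral_radialPairing ht)).sub (hP t ht)
  have hself : (∫ r in Ioi (0 : ℝ), radialPairing (v t) (v t) r).im = 0 := by
    simp only [radialPairing_self, integral_complex_ofReal, Complex.ofReal_im]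
  convert hderiv.tendsto_slope_zero_right using 2 with h
  · simp only [doubledPairing, smul_eq_mul, Pi.sub_apply, Function.comp_apply,
      Complex.imCLM_apply, hself]
    ring
  · simp only [Complex.imCLM_apply, Complex.mul_im, Complex.neg_re, Complex.neg_im, Complex.I_re,
      Complex.I_im, Complex.ofReal_re, Complex.ofReal_im]
    ring

theorem energy_conservation (hv : IsRadialSolution m B a b v vₜ vᵣ vᵣᵣ) {t₁ t₂ : ℝ}
    (ha : a < t₁) (ht : t₁ ≤ t₂) (hb : t₂ < b) :
    hamiltonianForm m (v t₁) (vᵣ t₁) + energyCorrection m (v t₁) =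
      hamiltonianForm m (v t₂) (vᵣ t₂) + energyCorrection m (v t₂) := by
  obtain ⟨P, hP⟩ := exists_hasDerivAt_of_continuousOn_Ioo hv.continuousOn_energyCorrection
  have hlim := (hv.tendsto_inv_mul_doubledPairing hP (t := t₂) ⟨by linarith, hb⟩).sub
    (hv.tendsto_inv_mul_doubledPairing hP (t := t₁) ⟨ha, by linarith⟩)
  have hzero : Tendsto (fun h => h⁻¹ * doubledPairing v P h t₂ - h⁻¹ * doubledPairing v P h t₁)
      (𝓝[>] 0) (𝓝 0) := by
    have hbound : Tendsto (fun h => 5 * (100 * B ^ 4) ^ 4 * (t₂ - t₁) * √√h) (𝓝[>] 0) (𝓝 0) := by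
      simpa using ((by fun_prop : Continuous fun h =>
        5 * (100 * B ^ 4) ^ 4 * (t₂ - t₁) * √√h).tendsto 0).mono_left nhdsWithin_le_nhds
    refine squeeze_zero_norm' ?_ hbound
    filter_upwards [Ioo_mem_nhdsGT (show 0 < min 1 (b - t₂) by simpa using hb)] with h hh
    have hh0 : 0 < h := hh.1
    obtain ⟨hh1, hhb⟩ := lt_min_iff.1 hh.2
    rw [← mul_sub, norm_mul, norm_inv, Real.norm_of_nonneg hh0.le, inv_mul_le_iff₀ hh0]
    refine (hv.norm_doubledPairing_sub_le hP hh0 hh1.le ha ht (by linarith)).trans_eq ?_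
    linear_combination 5 * (100 * B ^ 4) ^ 4 * (t₂ - t₁) * √√h * sqrt_sqrt_pow_four hh0.le
  linarith [tendsto_nhds_unique hlim hzero]

end IsRadialSolution

/-! ### Classical solutions as radial solutions -/

namespace IsProfile

variable {m : ℕ} {A A' B C : ℝ} {g g' : ℝ → ℂ}

lemma of_norm_deriv_le (hderiv : ∀ r, HasDerivAt g (g' r) r) (hg : IsRadialL2 A g)
    (hg' : IsRadialL2 A' g') (hzero : g 0 = 0) (hC : ∀ r ∈ Icc (0 : ℝ) 1, ‖g' r‖ ≤ C)
    (hB : 4 * ((m : ℝ) + 1) + A + A' + C + C ^ 2 ≤ B) : IsProfile m B g g' := by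
  have hA : 0 ≤ A :=
    (setIntegral_sq_norm_mul_self_nonneg measurableSet_Ioi le_rfl g).trans hg.integral_le
  have hA' : 0 ≤ A' :=
    (setIntegral_sq_norm_mul_self_nonneg measurableSet_Ioi le_rfl g').trans hg'.integral_le
  have hC0 : 0 ≤ C := (norm_nonneg _).trans (hC 0 ⟨le_rfl, zero_le_one⟩)
  have : (0 : ℝ) ≤ m := m.cast_nonneg
  have hC2 := sq_nonneg C
  have hnear : ∀ r, 0 ≤ r → r ≤ 1 → ‖g r‖ ≤ C * r := fun r hr hr1 => by
    simpa only [hzero, sub_zero] using norm_image_sub_le_of_norm_deriv_le_segment'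
      (fun x _ => (hderiv x).hasDerivWithinAt) (fun x hx => hC x ⟨hx.1, hx.2.le⟩) r ⟨hr, hr1⟩
  have hfar : ∀ r, 1 ≤ r → ‖g r‖ ≤ B := fun r hr => by
    have hprod := hg.integral_mul_le hg' (c := (A + A') / 2) (by positivity)
      (by nlinarith [sq_nonneg (A - A')])
    have hone : ‖g 1‖ ≤ C := (hnear 1 zero_le_one le_rfl).trans_eq (mul_one C)
    have hsq := norm_sq_le_norm_sq_one_add hg'.continuous hderiv (hg.integrable_mul hg') hr
    have : ‖g 1‖ ^ 2 ≤ C ^ 2 := by gcongr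
    exact (sq_le_sq₀ (norm_nonneg _) (by linarith)).1 (by nlinarith)
  refine ⟨hderiv, hg.mono (by linarith), hg'.mono (by linarith), fun r hr hr1 => ?_,
    fun r hr => ?_, by linarith⟩
  · exact (hnear r hr hr1).trans (by gcongr; linarith)
  · rcases le_total r 1 with hr1 | hr1
    · exact (hnear r hr hr1).trans (by nlinarith)
    · exact hfar r hr1

lemma exists_of_isRadialL2 (m : ℕ) (hderiv : ∀ r, HasDerivAt g (g' r) r) (hg : IsRadialL2 A g)
    (hg' : IsRadialL2 A' g') (hzero : g 0 = 0) : ∃ B, IsProfile m B g g' := by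
  obtain ⟨C, hC⟩ := (isCompact_Icc (a := (0 : ℝ)) (b := 1)).exists_bound_of_continuousOn
    hg'.continuous.continuousOn
  exact ⟨_, of_norm_deriv_le hderiv hg hg' hzero hC le_rfl⟩

lemma hasDerivAt_centrifugalDefect (hg : IsProfile m B g g') (r : ℝ) :
    HasDerivAt (centrifugalDefect m g) (((m : ℝ) - halfMass g r) * ‖g r‖ ^ 2 * r) r := by
  have hM := hasDerivAt_halfMass hg.continuous r
  refine ((hM.const_mul (2 * (m : ℝ))).sub (hM.pow 2)).congr_deriv ?_
  push_cast
  ring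

lemma integrableOn_sub_halfMass_mul_norm_sq_div (hg : IsProfile m B g g') :
    IntegrableOn (fun r => ((m : ℝ) - halfMass g r) * ‖g r‖ ^ 2 / r) (Ioi 0) := by
  have hc := hg.continuous
  have hM := continuous_halfMass hc
  refine integrableOn_Ioi_of_norm_le (ContinuousOn.div (by fun_prop) (by fun_prop)
    fun r hr => (mem_Ioi.1 hr).ne') (hg.integrableOn_norm_sq_div.const_mul B) fun r hr => ?_
  rw [mul_div_assoc, norm_mul, Real.norm_eq_abs,
    Real.norm_of_nonneg (by positivity : 0 ≤ ‖g r‖ ^ 2 / r)]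
  gcongr
  exact hg.abs_sub_halfMass_le hr.le

lemma At_eq (hg : IsProfile m B g g') {r : ℝ} (hr : 0 < r) :
    At m g r = centrifugalDefect m g r / r ^ 2 + gaugePotential m g r := by
  have hderiv : ∀ s ∈ Ici r,
      HasDerivAt (fun s => centrifugalDefect m g s / s ^ 2 + gaugePotential m g s)
        (((m : ℝ) - halfMass g s) * ‖g s‖ ^ 2 / s) s := fun s hs => by
    have hs0 : 0 < s := hr.trans_le hs
    refine (((hg.hasDerivAt_centrifugalDefect s).div (hasDerivAt_pow 2 s) (by positivity)).add
      (hg.hasDerivAt_gaugePotential hs0)).congr_deriv ?_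
    push_cast
    field_simp
    ring
  have hlim : Tendsto (fun s => centrifugalDefect m g s / s ^ 2 + gaugePotential m g s) atTop
      (𝓝 0) := by
    have hM := tendsto_halfMass_atTop hg.radialL2.integrable
    simpa only [zero_add, centrifugalDefect] using
      (((hM.const_mul (2 * (m : ℝ))).sub (hM.pow 2)).div_atTop (tendsto_pow_atTop
        two_ne_zero)).add hg.tendsto_gaugePotential_atTop
  have hftc := integral_Ioi_of_hasDerivAt_of_tendsto' hderiv
    (hg.integrableOn_sub_halfMass_mul_norm_sq_div.mono_set (Ioi_subset_Ioi hr.le)) hlim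
  simp only [At, Atheta_eq_neg_halfMass, ← sub_eq_add_neg]
  linarith

end IsProfile

section SmoothSlices

variable {I : Set ℝ} {v : ℝ → ℝ → ℂ} {t r : ℝ}

lemma contDiff_slice
    (hv : ContDiffOn ℝ (⊤ : ℕ∞) (fun p : ℝ × ℝ => v p.1 p.2) (I ×ˢ univ)) (ht : t ∈ I) :
    ContDiff ℝ (⊤ : ℕ∞) (v t) :=
  contDiffOn_univ.1 (hv.comp (f := fun r => (t, r)) (by fun_prop) fun _ _ => ⟨ht, mem_univ _⟩)

lemma hasFDerivAt_of_contDiffOn_prod_univ (hI : IsOpen I)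
    (hv : ContDiffOn ℝ (⊤ : ℕ∞) (fun p : ℝ × ℝ => v p.1 p.2) (I ×ˢ univ)) (ht : t ∈ I) :
    HasFDerivAt (fun p : ℝ × ℝ => v p.1 p.2) (fderiv ℝ (fun p : ℝ × ℝ => v p.1 p.2) (t, r))
      (t, r) :=
  have hmem : (t, r) ∈ I ×ˢ univ := ⟨ht, mem_univ r⟩
  ((hv.contDiffAt ((hI.prod isOpen_univ).mem_nhds hmem)).differentiableAt (by simp)).hasFDerivAt

lemma hasDerivAt_slice_time (hI : IsOpen I)
    (hv : ContDiffOn ℝ (⊤ : ℕ∞) (fun p : ℝ × ℝ => v p.1 p.2) (I ×ˢ univ)) (ht : t ∈ I) :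
    HasDerivAt (fun s => v s r) (fderiv ℝ (fun p : ℝ × ℝ => v p.1 p.2) (t, r) (1, 0)) t := by
  exact (hasFDerivAt_of_contDiffOn_prod_univ hI hv ht).comp_hasDerivAt (f := fun s => (s, r)) t
    ((hasDerivAt_id t).prodMk (hasDerivAt_const t r))

lemma hasDerivAt_slice_radius (hI : IsOpen I)
    (hv : ContDiffOn ℝ (⊤ : ℕ∞) (fun p : ℝ × ℝ => v p.1 p.2) (I ×ˢ univ)) (ht : t ∈ I) :
    HasDerivAt (v t) (fderiv ℝ (fun p : ℝ × ℝ => v p.1 p.2) (t, r) (0, 1)) r := by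
  exact (hasFDerivAt_of_contDiffOn_prod_univ hI hv ht).comp_hasDerivAt (f := fun s => (t, s)) r
    ((hasDerivAt_const r t).prodMk (hasDerivAt_id r))

lemma contDiffOn_fderiv_apply (hI : IsOpen I)
    (hv : ContDiffOn ℝ (⊤ : ℕ∞) (fun p : ℝ × ℝ => v p.1 p.2) (I ×ˢ univ)) (e : ℝ × ℝ) :
    ContDiffOn ℝ (⊤ : ℕ∞) (fun p => fderiv ℝ (fun p : ℝ × ℝ => v p.1 p.2) p e) (I ×ˢ univ) :=
  (hv.fderiv_of_isOpen (m := (⊤ : ℕ∞)) (hI.prod isOpen_univ) (by norm_cast)).clm_apply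
    contDiffOn_const

lemma contDiffOn_deriv_time (hI : IsOpen I)
    (hv : ContDiffOn ℝ (⊤ : ℕ∞) (fun p : ℝ × ℝ => v p.1 p.2) (I ×ˢ univ)) :
    ContDiffOn ℝ (⊤ : ℕ∞) (fun p : ℝ × ℝ => deriv (fun s => v s p.2) p.1) (I ×ˢ univ) :=
  (contDiffOn_fderiv_apply hI hv (1, 0)).congr fun _ hp => (hasDerivAt_slice_time hI hv hp.1).deriv

lemma contDiffOn_deriv_radius (hI : IsOpen I)
    (hv : ContDiffOn ℝ (⊤ : ℕ∞) (fun p : ℝ × ℝ => v p.1 p.2) (I ×ˢ univ)) :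
    ContDiffOn ℝ (⊤ : ℕ∞) (fun p : ℝ × ℝ => deriv (v p.1) p.2) (I ×ˢ univ) :=
  (contDiffOn_fderiv_apply hI hv (0, 1)).congr fun _ hp =>
    (hasDerivAt_slice_radius hI hv hp.1).deriv

variable {a b : ℝ}

lemma exists_norm_le_of_contDiffOn
    (hv : ContDiffOn ℝ (⊤ : ℕ∞) (fun p : ℝ × ℝ => v p.1 p.2) (I ×ˢ univ)) (hab : Icc a b ⊆ I)
    (R : ℝ) : ∃ C, ∀ t ∈ Icc a b, ∀ r ∈ Icc 0 R, ‖v t r‖ ≤ C := by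
  obtain ⟨C, hC⟩ := (isCompact_Icc.prod isCompact_Icc).exists_bound_of_continuousOn
    (hv.continuousOn.mono (prod_mono hab (subset_univ (Icc 0 R))))
  exact ⟨C, fun t ht r hr => hC (t, r) ⟨ht, hr⟩⟩

lemma exists_norm_sub_le_mul_abs_sub (hI : IsOpen I)
    (hv : ContDiffOn ℝ (⊤ : ℕ∞) (fun p : ℝ × ℝ => v p.1 p.2) (I ×ˢ univ)) (hab : Icc a b ⊆ I)
    (R : ℝ) : ∃ L, ∀ s ∈ Icc a b, ∀ t ∈ Icc a b, ∀ r ∈ Icc 0 R,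
      ‖v s r - v t r‖ ≤ L * |s - t| := by
  obtain ⟨L, hL⟩ := exists_norm_le_of_contDiffOn (v := fun t r => deriv (fun s => v s r) t)
    (contDiffOn_deriv_time hI hv) hab R
  refine ⟨L, fun s hs t ht r hr => ?_⟩
  exact (convex_Icc a b).norm_image_sub_le_of_norm_hasDerivWithin_le (f := fun τ => v τ r)
    (fun τ hτ => (hasDerivAt_slice_time hI hv
      (hab hτ)).differentiableAt.hasDerivAt.hasDerivWithinAt) (fun τ hτ => hL τ hτ r hr) ht hs

end SmoothSlices

/-- On the open set `I` of times, `v` is a smooth continuation of the radial function `u` across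
`r = 0` to all of `ℝ`, vanishing at the origin. -/
structure IsRadialExtension (I : Set ℝ) (u v : ℝ → ℝ → ℂ) : Prop where
  isOpen : IsOpen I
  contDiffOn : ContDiffOn ℝ (⊤ : ℕ∞) (fun p : ℝ × ℝ => v p.1 p.2) (I ×ˢ univ)
  apply_zero : ∀ t ∈ I, v t 0 = 0
  eq : ∀ t ∈ I, ∀ r, 0 < r → u t r = v t r

section Equivariance

variable {m : ℕ} {f : ℝ → ℂ} {U : ℝ × ℝ → ℂ}

lemma equivariant_apply_polar
    (hU : ∀ x : ℝ × ℝ, x ≠ 0 → U x = f √(x.1 ^ 2 + x.2 ^ 2) *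
      (((x.1 : ℂ) + (x.2 : ℂ) * Complex.I) / ((√(x.1 ^ 2 + x.2 ^ 2) : ℝ) : ℂ)) ^ m)
    {r : ℝ} (hr : 0 < r) (θ : ℝ) : U (r * Real.cos θ, r * Real.sin θ) =
      f r * Complex.exp ((m * θ : ℝ) * Complex.I) := by
  have hnorm : √((r * Real.cos θ) ^ 2 + (r * Real.sin θ) ^ 2) = r := by
    rw [show (r * Real.cos θ) ^ 2 + (r * Real.sin θ) ^ 2 = r ^ 2 by
      linear_combination r ^ 2 * Real.cos_sq_add_sin_sq θ, Real.sqrt_sq hr.le]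
  have hne : ((r * Real.cos θ, r * Real.sin θ) : ℝ × ℝ) ≠ 0 := fun h => by
    obtain ⟨hcos, hsin⟩ := Prod.mk_eq_zero.1 h
    rw [hcos, hsin] at hnorm
    simp [hr.ne] at hnorm
  have hdir : (((r * Real.cos θ : ℝ) : ℂ) + ((r * Real.sin θ : ℝ) : ℂ) * Complex.I) / (r : ℂ) =
      Complex.exp (θ * Complex.I) := by
    have : (r : ℂ) ≠ 0 := by exact_mod_cast hr.ne'
    rw [Complex.exp_mul_I]
    push_cast
    field_simp
  rw [hU _ hne, hnorm, hdir, ← Complex.exp_nat_mul]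
  push_cast
  ring_nf

lemma equivariant_apply_axis
    (hU : ∀ x : ℝ × ℝ, x ≠ 0 → U x = f √(x.1 ^ 2 + x.2 ^ 2) *
      (((x.1 : ℂ) + (x.2 : ℂ) * Complex.I) / ((√(x.1 ^ 2 + x.2 ^ 2) : ℝ) : ℂ)) ^ m)
    {r : ℝ} (hr : 0 < r) : U (r, 0) = f r := by
  simpa using equivariant_apply_polar hU hr 0

/-- Rotation by `π / m` changes the sign of `U`. -/
lemma equivariant_apply_zero (hm : 1 ≤ m) (hc : Continuous U)
    (hU : ∀ x : ℝ × ℝ, x ≠ 0 → U x = f √(x.1 ^ 2 + x.2 ^ 2) *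
      (((x.1 : ℂ) + (x.2 : ℂ) * Complex.I) / ((√(x.1 ^ 2 + x.2 ^ 2) : ℝ) : ℂ)) ^ m) :
    U (0, 0) = 0 := by
  set θ : ℝ := Real.pi / m
  have hmθ : (m : ℝ) * θ = Real.pi := mul_div_cancel₀ _ (by exact_mod_cast (by omega : m ≠ 0))
  have hflip : ∀ r, 0 < r → U (r * Real.cos θ, r * Real.sin θ) = -U (r, 0) := fun r hr => by
    rw [equivariant_apply_polar hU hr θ, hmθ, Complex.exp_pi_mul_I, equivariant_apply_axis hU hr,
      mul_neg_one]
  have hlim : Tendsto (fun r : ℝ => U (r * Real.cos θ, r * Real.sin θ)) (𝓝[>] 0)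
      (𝓝 (U (0, 0))) := by
    simpa only [zero_mul, Function.comp_def] using
      ((hc.comp (f := fun r : ℝ => (r * Real.cos θ, r * Real.sin θ)) (by fun_prop)).tendsto
        0).mono_left nhdsWithin_le_nhds
  have hlim_neg : Tendsto (fun r : ℝ => -U (r, 0)) (𝓝[>] 0) (𝓝 (-U (0, 0))) :=
    ((hc.comp (f := fun r : ℝ => (r, (0 : ℝ))) (by fun_prop)).neg.tendsto 0).mono_left
      nhdsWithin_le_nhds
  refine self_eq_neg.1 (tendsto_nhds_unique (hlim.congr' ?_) hlim_neg)
  filter_upwards [self_mem_nhdsWithin] with r hr using hflip r hr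

end Equivariance

lemma IsCSS.exists_isRadialExtension {m : ℕ} (hm : 1 ≤ m) {I : Set ℝ} (hI : IsOpen I)
    {u : ℝ → ℝ → ℂ} (hu : IsCSS m I u) : ∃ v, IsRadialExtension I u v := by
  obtain ⟨U, hU, hUu⟩ := hu.equivariant
  refine ⟨fun t r => U t (r, 0), hI, ?_, fun t ht => ?_, fun t ht r hr => ?_⟩
  · exact hU.comp (f := fun p : ℝ × ℝ => (p.1, (p.2, (0 : ℝ)))) (by fun_prop)
      fun p hp => ⟨hp.1, mem_univ _⟩
  · refine equivariant_apply_zero hm (continuousOn_univ.1 ?_) (hUu t ht)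
    exact hU.continuousOn.comp (f := fun x : ℝ × ℝ => (t, x)) (by fun_prop)
      fun x _ => ⟨ht, mem_univ _⟩
  · exact (equivariant_apply_axis (hUu t ht) hr).symm

namespace IsRadialExtension

variable {m : ℕ} {I : Set ℝ} {u v : ℝ → ℝ → ℂ} {t r B : ℝ}

lemma hasDerivAt (h : IsRadialExtension I u v) (ht : t ∈ I) (r : ℝ) :
    HasDerivAt (v t) (deriv (v t) r) r :=
  (hasDerivAt_slice_radius h.isOpen h.contDiffOn ht).differentiableAt.hasDerivAt

lemma deriv_eq (h : IsRadialExtension I u v) (ht : t ∈ I) (hr : 0 < r) :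
    deriv (u t) r = deriv (v t) r :=
  EventuallyEq.deriv_eq (by filter_upwards [Ioi_mem_nhds hr] with s hs using h.eq t ht s hs)

lemma deriv_deriv_eq (h : IsRadialExtension I u v) (ht : t ∈ I) (hr : 0 < r) :
    deriv (deriv (u t)) r = deriv (deriv (v t)) r :=
  EventuallyEq.deriv_eq (by filter_upwards [Ioi_mem_nhds hr] with s hs using h.deriv_eq ht hs)

lemma deriv_time_eq (h : IsRadialExtension I u v) (ht : t ∈ I) (hr : 0 < r) :
    deriv (fun s => u s r) t = deriv (fun s => v s r) t :=
  EventuallyEq.deriv_eq (by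
    filter_upwards [h.isOpen.mem_nhds ht] with s hs using h.eq s hs r hr)

lemma Atheta_eq (h : IsRadialExtension I u v) (ht : t ∈ I) (hr : 0 ≤ r) :
    Atheta (u t) r = Atheta (v t) r := by
  unfold Atheta
  rw [intervalIntegral.integral_of_le hr, intervalIntegral.integral_of_le hr,
    setIntegral_congr_fun measurableSet_Ioc fun s hs => ?_]
  simp only [h.eq t ht s hs.1]

lemma At_eq (h : IsRadialExtension I u v) (ht : t ∈ I) (hr : 0 ≤ r) :
    At m (u t) r = At m (v t) r := by
  unfold At
  rw [setIntegral_congr_fun measurableSet_Ioi fun s hs => ?_]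
  have hs0 : 0 < s := hr.trans_lt hs
  simp only [h.eq t ht s hs0, h.Atheta_eq ht hs0.le]

lemma L2sq_eq (h : IsRadialExtension I u v) (ht : t ∈ I) : L2sq (u t) = L2sq (v t) := by
  unfold L2sq
  rw [setIntegral_congr_fun measurableSet_Ioi fun s hs => ?_]
  simp only [h.eq t ht s hs]

lemma H1msq_eq (h : IsRadialExtension I u v) (ht : t ∈ I) : H1msq m (u t) = H1msq m (v t) := by
  unfold H1msq
  rw [setIntegral_congr_fun measurableSet_Ioi fun s hs => ?_]
  simp only [h.eq t ht s hs, h.deriv_eq ht hs]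

lemma equation (h : IsRadialExtension I u v) (ht : t ∈ I) (hr : 0 < r) (hu : CSSeq m u t r)
    (hv : IsProfile m B (v t) (deriv (v t))) :
    Complex.I * deriv (fun s => v s r) t + deriv (deriv (v t)) r + deriv (v t) r / r -
      (((m : ℝ) ^ 2 / r ^ 2 + effPotential m (v t) r : ℝ) : ℂ) * v t r = 0 := by
  have hr' : (r : ℂ) ≠ 0 := by exact_mod_cast hr.ne'
  unfold CSSeq at hu
  rw [h.deriv_time_eq ht hr, h.deriv_eq ht hr, h.deriv_deriv_eq ht hr, h.Atheta_eq ht hr.le,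
    h.At_eq ht hr.le, h.eq t ht r hr, hv.At_eq hr, Atheta_eq_neg_halfMass] at hu
  rw [← hu, effPotential, centrifugalDefect]
  push_cast
  field_simp
  ring

lemma continuous (h : IsRadialExtension I u v) (ht : t ∈ I) : Continuous (v t) :=
  (contDiff_slice h.contDiffOn ht).continuous

lemma continuous_deriv (h : IsRadialExtension I u v) (ht : t ∈ I) : Continuous (deriv (v t)) :=
  (contDiff_slice (v := fun t => deriv (v t)) (contDiffOn_deriv_radius h.isOpen h.contDiffOn)
    ht).continuous

lemma integrableOn (h : IsRadialExtension I u v) (hu : IsCSS m I u) (ht : t ∈ I) :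
    IntegrableOn (fun r => ‖v t r‖ ^ 2 * r) (Ioi 0) :=
  (hu.integrable t ht).congr_fun (fun r hr => by simp only [h.eq t ht r hr]) measurableSet_Ioi

lemma integrableOn_deriv (h : IsRadialExtension I u v) (ht : t ∈ I)
    (hu' : IntegrableOn (fun r => ‖deriv (u t) r‖ ^ 2 * r) (Ioi 0)) :
    IntegrableOn (fun r => ‖deriv (v t) r‖ ^ 2 * r) (Ioi 0) :=
  hu'.congr_fun (fun r hr => by simp only [h.deriv_eq ht hr]) measurableSet_Ioi

lemma exists_isProfile (h : IsRadialExtension I u v) (hu : IsCSS m I u) (ht : t ∈ I)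
    (hu' : IntegrableOn (fun r => ‖deriv (u t) r‖ ^ 2 * r) (Ioi 0)) :
    ∃ B, IsProfile m B (v t) (deriv (v t)) :=
  IsProfile.exists_of_isRadialL2 m (h.hasDerivAt ht)
    ⟨h.continuous ht, h.integrableOn hu ht, le_rfl⟩
    ⟨h.continuous_deriv ht, h.integrableOn_deriv ht hu', le_rfl⟩ (h.apply_zero t ht)

end IsRadialExtension

lemma IsProfile.integral_norm_deriv_sq_le_H1msq {m : ℕ} {B : ℝ} {g : ℝ → ℂ}
    (hg : IsProfile m B g (deriv g)) :
    2 * Real.pi * ∫ r in Ioi (0 : ℝ), ‖deriv g r‖ ^ 2 * r ≤ H1msq m g := by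
  have hsplit : EqOn (fun r => (‖deriv g r‖ ^ 2 + (m : ℝ) ^ 2 * ‖g r‖ ^ 2 / r ^ 2) * r)
      (fun r => ‖deriv g r‖ ^ 2 * r + (m : ℝ) ^ 2 * (‖g r‖ ^ 2 / r)) (Ioi 0) := fun r hr => by
    have : r ≠ 0 := (mem_Ioi.1 hr).ne'
    field_simp
  rw [H1msq, setIntegral_congr_fun measurableSet_Ioi hsplit,
    integral_add hg.radialL2_deriv.integrable (hg.integrableOn_norm_sq_div.const_mul _)]
  refine mul_le_mul_of_nonneg_left (le_add_of_nonneg_right ?_) (by positivity)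
  exact setIntegral_nonneg measurableSet_Ioi fun r hr => by
    have : 0 < r := hr
    positivity

namespace IsRadialExtension

variable {m : ℕ} {I : Set ℝ} {u v : ℝ → ℝ → ℂ} {a b c : ℝ}

lemma exists_isRadialL2 (h : IsRadialExtension I u v) (hu : IsCSS m I u) (hab : Icc a b ⊆ I)
    (hu' : ∀ t ∈ Icc a b, IntegrableOn (fun r => ‖deriv (u t) r‖ ^ 2 * r) (Ioi 0)) :
    ∃ A, ∀ t ∈ Icc a b, IsRadialL2 A (v t) ∧ IsRadialL2 A (deriv (v t)) := by
  obtain ⟨C, hC⟩ := hu.bounded _ hab isCompact_Icc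
  refine ⟨C ^ 2 / (2 * Real.pi), fun t ht => ?_⟩
  have hL2 : √(L2sq (v t)) ≤ C := by
    rw [← h.L2sq_eq (hab ht)]
    linarith [hC t ht, Real.sqrt_nonneg (H1msq m (u t))]
  have hH1 : √(H1msq m (v t)) ≤ C := by
    rw [← h.H1msq_eq (hab ht)]
    linarith [hC t ht, Real.sqrt_nonneg (L2sq (u t))]
  obtain ⟨B, hprofile⟩ := h.exists_isProfile hu (hab ht) (hu' t ht)
  refine ⟨⟨h.continuous (hab ht), hprofile.radialL2.integrable, ?_⟩,
    h.continuous_deriv (hab ht), hprofile.radialL2_deriv.integrable, ?_⟩ <;>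
    rw [le_div_iff₀' (by positivity)]
  · exact (Real.sqrt_le_iff.1 hL2).2
  · exact hprofile.integral_norm_deriv_sq_le_H1msq.trans (Real.sqrt_le_iff.1 hH1).2

lemma exists_isRadialSolution (h : IsRadialExtension I u v) (hu : IsCSS m I u)
    (hab : Icc a b ⊆ I)
    (hu' : ∀ t ∈ Icc a b, IntegrableOn (fun r => ‖deriv (u t) r‖ ^ 2 * r) (Ioi 0))
    (hmass : ∀ t ∈ Icc a b, ∫ r in Ioi (0 : ℝ), ‖v t r‖ ^ 2 * r = c) :
    ∃ B, IsRadialSolution m B a b v (fun t r => deriv (fun s => v s r) t) (fun t => deriv (v t))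
      fun t => deriv (deriv (v t)) := by
  have hvr := contDiffOn_deriv_radius h.isOpen h.contDiffOn
  obtain ⟨A, hA⟩ := h.exists_isRadialL2 hu hab hu'
  obtain ⟨C, hC⟩ := exists_norm_le_of_contDiffOn (v := fun t => deriv (v t)) hvr hab 1
  have hlip := exists_norm_sub_le_mul_abs_sub (v := fun t => deriv (v t)) h.isOpen hvr hab
  obtain ⟨L, hL⟩ := hlip 1
  have hclosed : ∀ {t}, t ∈ Ioo a b → t ∈ Icc a b := fun ht => Ioo_subset_Icc_self ht
  have hI : Ioo a b ×ˢ univ ⊆ I ×ˢ (univ : Set ℝ) :=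
    prod_mono_left (Ioo_subset_Icc_self.trans hab)
  set B := max (4 * ((m : ℝ) + 1) + A + A + C + C ^ 2) L
  have hprofile : ∀ t ∈ Ioo a b, IsProfile m B (v t) (deriv (v t)) := fun t ht =>
    IsProfile.of_norm_deriv_le (h.hasDerivAt (hab (hclosed ht))) (hA t (hclosed ht)).1
      (hA t (hclosed ht)).2 (h.apply_zero t (hab (hclosed ht))) (hC t (hclosed ht))
      (le_max_left _ _)
  refine ⟨B, hprofile, fun s hs t ht => ?_, fun t ht r => ?_, fun t ht r => ?_,
    h.contDiffOn.continuousOn.mono hI,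
    (contDiffOn_deriv_time h.isOpen h.contDiffOn).continuousOn.mono hI, fun t ht => ?_,
    fun s hs t ht r hr => ?_, fun R => ?_, fun t ht r hr => ?_⟩
  · rw [hmass s (hclosed hs), hmass t (hclosed ht)]
  · exact (hasDerivAt_slice_time h.isOpen h.contDiffOn
      (hab (hclosed ht))).differentiableAt.hasDerivAt
  · exact (hasDerivAt_slice_radius (v := fun t => deriv (v t)) h.isOpen hvr
      (hab (hclosed ht))).differentiableAt.hasDerivAt
  · exact (contDiff_slice (v := fun t => deriv (deriv (v t)))
      (contDiffOn_deriv_radius (v := fun t => deriv (v t)) h.isOpen hvr)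
      (hab (hclosed ht))).continuous
  · exact (hL s (hclosed hs) t (hclosed ht) r hr).trans (by gcongr; exact le_max_right _ _)
  · obtain ⟨L, hL⟩ := hlip R
    exact ⟨L, fun s hs t ht => hL s (hclosed hs) t (hclosed ht)⟩
  · exact h.equation (hab (hclosed ht)) hr (hu.eq t (hab (hclosed ht)) r hr) (hprofile t ht)

lemma integral_norm_bogomolnyiDeriv_sq_eq (h : IsRadialExtension I u v) (hu : IsCSS m I u)
    (hab : Ioo a b ⊆ I)
    (hu' : ∀ t ∈ Ioo a b, IntegrableOn (fun r => ‖deriv (u t) r‖ ^ 2 * r) (Ioi 0))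
    (hmass : ∀ t ∈ Ioo a b, ∫ r in Ioi (0 : ℝ), ‖v t r‖ ^ 2 * r = c) {s t : ℝ}
    (hs : s ∈ Ioo a b) (ht : t ∈ Ioo a b) :
    ∫ r in Ioi (0 : ℝ), ‖bogomolnyiDeriv m (v s) (deriv (v s)) r‖ ^ 2 * r =
      ∫ r in Ioi (0 : ℝ), ‖bogomolnyiDeriv m (v t) (deriv (v t)) r‖ ^ 2 * r := by
  wlog hst : s ≤ t generalizing s t
  · exact (this ht hs (le_of_not_ge hst)).symm
  obtain ⟨a', haa', ha's⟩ := exists_between hs.1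
  obtain ⟨b', htb', hb'b⟩ := exists_between ht.2
  have hsub : Icc a' b' ⊆ Ioo a b := Icc_subset_Ioo haa' hb'b
  obtain ⟨B, hv⟩ := h.exists_isRadialSolution hu (hsub.trans hab) (fun τ hτ => hu' τ (hsub hτ))
    fun τ hτ => hmass τ (hsub hτ)
  rw [(hv.profile s ⟨ha's, hst.trans_lt htb'⟩).integral_norm_bogomolnyiDeriv_sq,
    (hv.profile t ⟨ha's.trans_le hst, htb'⟩).integral_norm_bogomolnyiDeriv_sq]
  exact hv.energy_conservation ha's hst htb'

end IsRadialExtension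

/-- A non-integrable function has integral `0`, so divergence of the norms forces integrability. -/
lemma exists_integrableOn_of_tendsto_sqrt_atTop {a b k : ℝ} (hab : a < b) {f : ℝ → ℝ → ℝ}
    {S : Set ℝ} (hf : Tendsto (fun t => √(k * ∫ r in S, f t r)) (𝓝[Ioo a b] b) atTop) :
    ∃ T ∈ Ico a b, ∀ t ∈ Ioo T b, IntegrableOn (f t) S := by
  have hpos := hf.eventually_gt_atTop 0
  rw [nhdsWithin_Ioo_eq_nhdsLT hab] at hpos
  obtain ⟨T, hT, hTpos⟩ := (mem_nhdsLT_iff_exists_Ioo_subset' hab).1 hpos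
  refine ⟨max T a, ⟨le_max_right _ _, max_lt hT hab⟩, fun t ht => ?_⟩
  by_contra hnot
  have hlt := hTpos ⟨(le_max_left _ _).trans_lt ht.1, ht.2⟩
  rw [mem_ofPred_eq, integral_undef hnot, mul_zero, Real.sqrt_zero] at hlt
  exact lt_irrefl 0 hlt

/-! ### Mass growth at bounded energy -/

lemma abs_re_mul_conj_le_half (a b : ℂ) : |(a * conj b).re| ≤ (‖a‖ ^ 2 + ‖b‖ ^ 2) / 2 := by
  refine (Complex.abs_re_le_norm _).trans ?_
  rw [norm_mul, Complex.norm_conj]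
  linarith [two_mul_le_add_sq ‖a‖ ‖b‖]

/-- The failure of `M = halfMass g` to solve the logistic equation `r M' = M (2 (m + 1) - M)`,
which holds for the Jackiw–Pi vortex; recall `r M' = r² ‖g‖² / 2`. -/
noncomputable def logisticDefect (m : ℕ) (g : ℝ → ℂ) (r : ℝ) : ℝ :=
  r ^ 2 * ‖g r‖ ^ 2 / 2 - halfMass g r * (2 * ((m : ℝ) + 1) - halfMass g r)

lemma re_bogomolnyiDeriv_mul_conj (m : ℕ) (g g' : ℝ → ℂ) (r : ℝ) :
    (bogomolnyiDeriv m g g' r * conj (g r)).re =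
      (g' r * conj (g r)).re - (m - halfMass g r) / r * ‖g r‖ ^ 2 := by
  rw [bogomolnyiDeriv, sub_mul, Complex.sub_re, mul_assoc, Complex.re_ofReal_mul,
    Complex.mul_conj, Complex.normSq_eq_norm_sq, Complex.ofReal_re]

lemma sq_mul_re_bogomolnyiDeriv_mul_conj (m : ℕ) (g g' : ℝ → ℂ) (r : ℝ) :
    r ^ 2 * (bogomolnyiDeriv m g g' r * conj (g r)).re =
      r ^ 2 * (g' r * conj (g r)).re - (m - halfMass g r) * ‖g r‖ ^ 2 * r := by
  rw [re_bogomolnyiDeriv_mul_conj]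
  rcases eq_or_ne r 0 with rfl | hr
  · simp
  · field_simp

lemma norm_deriv_sq_mul_le {m : ℕ} {g g' : ℝ → ℂ} {r R c : ℝ} (hR : 0 < R) (hRr : R ≤ r)
    (hc : |m - halfMass g r| ≤ c) :
    ‖g' r‖ ^ 2 * r ≤
      2 * (‖bogomolnyiDeriv m g g' r‖ ^ 2 * r) + 2 * c ^ 2 / R ^ 2 * (‖g r‖ ^ 2 * r) := by
  have hr : 0 < r := hR.trans_le hRr
  have hc0 : 0 ≤ c := (abs_nonneg _).trans hc
  have htri : ‖g' r‖ ≤ ‖bogomolnyiDeriv m g g' r‖ + c / R * ‖g r‖ :=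
    calc ‖g' r‖ = ‖bogomolnyiDeriv m g g' r + (((m - halfMass g r) / r : ℝ) : ℂ) * g r‖ := by
          rw [bogomolnyiDeriv, sub_add_cancel]
      _ ≤ ‖bogomolnyiDeriv m g g' r‖ + |m - halfMass g r| / r * ‖g r‖ := by
          refine (norm_add_le _ _).trans_eq ?_
          rw [norm_mul, Complex.norm_real, Real.norm_eq_abs, abs_div, abs_of_pos hr]
      _ ≤ ‖bogomolnyiDeriv m g g' r‖ + c / R * ‖g r‖ := by gcongr
  calc ‖g' r‖ ^ 2 * r ≤ 2 * (‖bogomolnyiDeriv m g g' r‖ ^ 2 + (c / R * ‖g r‖) ^ 2) * r :=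
        mul_le_mul_of_nonneg_right
          ((pow_le_pow_left₀ (norm_nonneg _) htri 2).trans add_sq_le) hr.le
    _ = 2 * (‖bogomolnyiDeriv m g g' r‖ ^ 2 * r) + 2 * c ^ 2 / R ^ 2 * (‖g r‖ ^ 2 * r) := by
        field_simp

namespace IsProfile

variable {m : ℕ} {B : ℝ} {g g' : ℝ → ℂ} {r R : ℝ}

lemma hasDerivAt_logisticDefect (hg : IsProfile m B g g') (r : ℝ) :
    HasDerivAt (logisticDefect m g)
      (r ^ 2 * (bogomolnyiDeriv m g g' r * conj (g r)).re) r := by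
  have hM := hasDerivAt_halfMass hg.continuous r
  refine ((((hasDerivAt_pow 2 r).mul (hasDerivAt_norm_sq (hg.hasDerivAt r))).div_const 2).sub
    (hM.mul (hM.const_sub (2 * ((m : ℝ) + 1))))).congr_deriv ?_
  rw [sq_mul_re_bogomolnyiDeriv_mul_conj]
  norm_num
  ring

lemma continuous_sq_mul_re_bogomolnyiDeriv_mul_conj (hg : IsProfile m B g g') :
    Continuous fun r => r ^ 2 * (bogomolnyiDeriv m g g' r * conj (g r)).re := by
  have := hg.continuous
  have := hg.radialL2_deriv.continuous
  have := continuous_halfMass hg.continuous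
  have : Continuous fun r => (g' r * conj (g r)).re := by fun_prop
  simp_rw [sq_mul_re_bogomolnyiDeriv_mul_conj]
  fun_prop

lemma abs_logisticDefect_le (hg : IsProfile m B g g') (hr : 0 ≤ r) :
    |logisticDefect m g r| ≤ r / 2 * ((∫ s in Ioi (0 : ℝ), ‖g s‖ ^ 2 * s) +
      ∫ s in Ioi (0 : ℝ), ‖bogomolnyiDeriv m g g' s‖ ^ 2 * s) := by
  have hmass := hg.radialL2.integrable
  have henergy := hg.integrableOn_norm_bogomolnyiDeriv_sq
  have hsub : Ioc 0 r ⊆ Ioi 0 := Ioc_subset_Ioi_self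
  have hftc := intervalIntegral.integral_eq_sub_of_hasDerivAt (a := 0) (b := r)
    (fun s _ => hg.hasDerivAt_logisticDefect s)
    (hg.continuous_sq_mul_re_bogomolnyiDeriv_mul_conj.intervalIntegrable _ _)
  have hbound : ∀ s ∈ Ioc 0 r, ‖s ^ 2 * (bogomolnyiDeriv m g g' s * conj (g s)).re‖ ≤
      r / 2 * (‖g s‖ ^ 2 * s + ‖bogomolnyiDeriv m g g' s‖ ^ 2 * s) := fun s hs => by
    have hs0 : 0 ≤ s := hs.1.le
    rw [norm_mul, Real.norm_of_nonneg (sq_nonneg s), Real.norm_eq_abs]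
    calc s ^ 2 * |(bogomolnyiDeriv m g g' s * conj (g s)).re|
        ≤ s ^ 2 * ((‖bogomolnyiDeriv m g g' s‖ ^ 2 + ‖g s‖ ^ 2) / 2) := by
          gcongr
          exact abs_re_mul_conj_le_half _ _
      _ = s / 2 * (‖g s‖ ^ 2 * s + ‖bogomolnyiDeriv m g g' s‖ ^ 2 * s) := by ring
      _ ≤ r / 2 * (‖g s‖ ^ 2 * s + ‖bogomolnyiDeriv m g g' s‖ ^ 2 * s) := by
          gcongr
          exact hs.2
  have hzero : logisticDefect m g 0 = 0 := by simp [logisticDefect]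
  rw [hzero, sub_zero, intervalIntegral.integral_of_le hr] at hftc
  rw [← hftc, ← Real.norm_eq_abs]
  refine (norm_integral_le_of_norm_le
    (((hmass.add henergy).const_mul (r / 2)).mono_measure (Measure.restrict_mono hsub le_rfl))
    ((ae_restrict_iff' measurableSet_Ioc).2 (Eventually.of_forall hbound))).trans ?_
  simp only [Pi.add_apply]
  rw [integral_const_mul, integral_add (hmass.mono_set hsub) (henergy.mono_set hsub)]
  exact mul_le_mul_of_nonneg_left (add_le_add (setIntegral_sq_norm_mul_self_le hsub hmass)
    (setIntegral_sq_norm_mul_self_le hsub henergy)) (by positivity)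

/-- Integrating `∂ᵣ ((m - M) ‖g‖²)` replaces the cross term of the Bogomol'nyi square by a boundary
term and the quartic term `r ‖g‖⁴ / 2`, which the centrifugal term absorbs. -/
lemma integral_Ioc_norm_deriv_sq_le (hg : IsProfile m B g g') (hR : 0 ≤ R)
    (hsmall : ∀ r ∈ Ioc 0 R, r ^ 2 * ‖g r‖ ^ 2 / 2 ≤ (m - halfMass g r) ^ 2) :
    ∫ r in Ioc 0 R, ‖g' r‖ ^ 2 * r ≤
      (∫ r in Ioc 0 R, ‖bogomolnyiDeriv m g g' r‖ ^ 2 * r) + (m - halfMass g R) * ‖g R‖ ^ 2 := by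
  have := hg.continuous
  have := hg.radialL2_deriv.continuous
  have := continuous_halfMass hg.continuous
  have hsub : Ioc 0 R ⊆ Ioi 0 := Ioc_subset_Ioi_self
  set flux : ℝ → ℝ := fun r => -(‖g r‖ ^ 2 * r / 2) * ‖g r‖ ^ 2 +
    (m - halfMass g r) * (2 * (g' r * conj (g r)).re)
  have hderiv : ∀ r, HasDerivAt (fun s => (m - halfMass g s) * ‖g s‖ ^ 2) (flux r) r := fun r =>
    ((hasDerivAt_halfMass hg.continuous r).const_sub (m : ℝ)).mul
      (hasDerivAt_norm_sq (hg.hasDerivAt r))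
  have hflux : Continuous flux := by
    have : Continuous fun r => (g' r * conj (g r)).re := by fun_prop
    fun_prop
  have hftc := intervalIntegral.integral_eq_sub_of_hasDerivAt (a := 0) (b := R)
    (fun r _ => hderiv r) (hflux.intervalIntegrable _ _)
  rw [intervalIntegral.integral_of_le hR, hg.apply_zero, norm_zero, zero_pow two_ne_zero, mul_zero,
    sub_zero] at hftc
  have henergy := hg.integrableOn_norm_bogomolnyiDeriv_sq.mono_set hsub
  rw [← hftc, ← integral_add henergy hflux.integrableOn_Ioc]
  refine setIntegral_mono_on (hg.radialL2_deriv.integrable.mono_set hsub)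
    (by exact henergy.add hflux.integrableOn_Ioc) measurableSet_Ioc fun r hr => ?_
  have hr0 : 0 < r := hr.1
  have habsorb : ‖g r‖ ^ 2 * r / 2 * ‖g r‖ ^ 2 ≤ (m - halfMass g r) ^ 2 * (‖g r‖ ^ 2 / r) :=
    calc ‖g r‖ ^ 2 * r / 2 * ‖g r‖ ^ 2 = r ^ 2 * ‖g r‖ ^ 2 / 2 * (‖g r‖ ^ 2 / r) := by field_simp
      _ ≤ (m - halfMass g r) ^ 2 * (‖g r‖ ^ 2 / r) := by
          gcongr
          exact hsmall r hr
  rw [norm_bogomolnyiDeriv_sq_mul m g g' hr0]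
  simp only [flux]
  linarith

lemma integral_Ioi_norm_deriv_sq_le (hg : IsProfile m B g g') (hR : 0 < R) {c : ℝ}
    (hc : ∀ r, R < r → |m - halfMass g r| ≤ c) :
    ∫ r in Ioi R, ‖g' r‖ ^ 2 * r ≤ 2 * (∫ r in Ioi R, ‖bogomolnyiDeriv m g g' r‖ ^ 2 * r) +
      2 * c ^ 2 / R ^ 2 * ∫ r in Ioi R, ‖g r‖ ^ 2 * r := by
  have hsub : Ioi R ⊆ Ioi 0 := Ioi_subset_Ioi hR.le
  have henergy := (hg.integrableOn_norm_bogomolnyiDeriv_sq.mono_set hsub).const_mul 2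
  have hmass := (hg.radialL2.integrable.mono_set hsub).const_mul (2 * c ^ 2 / R ^ 2)
  rw [← integral_const_mul, ← integral_const_mul, ← integral_add henergy hmass]
  exact setIntegral_mono_on (hg.radialL2_deriv.integrable.mono_set hsub)
    (by exact henergy.add hmass) measurableSet_Ioi
    fun r hr => norm_deriv_sq_mul_le hR (mem_Ioi.1 hr).le (hc r hr)

end IsProfile

/-! ### Concentration at the origin -/

/-- A profile with exactly the mass `8π(m + 1)` of the Jackiw–Pi vortex (the factor `2π` is divided
out) and with Bogomol'nyi energy at most `e`; `g'` is the radial derivative of `g`. -/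
structure IsThresholdProfile (m : ℕ) (e : ℝ) (g g' : ℝ → ℂ) : Prop where
  exists_isProfile : ∃ B, IsProfile m B g g'
  mass_eq : ∫ r in Ioi (0 : ℝ), ‖g r‖ ^ 2 * r = 4 * ((m : ℝ) + 1)
  energy_le : ∫ r in Ioi (0 : ℝ), ‖bogomolnyiDeriv m g g' r‖ ^ 2 * r ≤ e

namespace IsThresholdProfile

variable {m : ℕ} {e r r₀ r₁ : ℝ} {g g' : ℝ → ℂ}

lemma continuous (hg : IsThresholdProfile m e g g') : Continuous g :=
  let ⟨_, hB⟩ := hg.exists_isProfile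
  hB.continuous

lemma integrable (hg : IsThresholdProfile m e g g') :
    IntegrableOn (fun r => ‖g r‖ ^ 2 * r) (Ioi 0) :=
  let ⟨_, hB⟩ := hg.exists_isProfile
  hB.radialL2.integrable

lemma energy_nonneg (hg : IsThresholdProfile m e g g') : 0 ≤ e :=
  (setIntegral_sq_norm_mul_self_nonneg measurableSet_Ioi le_rfl _).trans hg.energy_le

lemma halfMass_le (hg : IsThresholdProfile m e g g') (hr : 0 ≤ r) :
    halfMass g r ≤ 2 * ((m : ℝ) + 1) := by
  linarith [_root_.halfMass_le hg.continuous hg.integrable hr, hg.mass_eq]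

lemma abs_sub_halfMass_le (hg : IsThresholdProfile m e g g') (hr : 0 ≤ r) :
    |m - halfMass g r| ≤ m + 2 := by
  have := hg.halfMass_le hr
  have := halfMass_nonneg (g := g) hr
  exact abs_le.2 ⟨by linarith, by linarith⟩

lemma abs_logisticDefect_le (hg : IsThresholdProfile m e g g') (hr : 0 ≤ r) :
    |logisticDefect m g r| ≤ (2 * ((m : ℝ) + 1) + e / 2) * r := by
  obtain ⟨B, hB⟩ := hg.exists_isProfile
  refine (hB.abs_logisticDefect_le hr).trans ?_
  rw [hg.mass_eq]
  nlinarith [hg.energy_le]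

/-- The logistic equation, integrated in `log r`: `M` leaves `[δ, 2 (m + 1) - η]` after a
logarithmic scale of bounded length. -/
lemma mul_log_sub_log_le (hg : IsThresholdProfile m e g g') {δ η : ℝ} (hδ : 0 ≤ δ) (hη : 0 ≤ η)
    (hr₀ : 0 < r₀) (hr : r₀ ≤ r₁) (hM₀ : δ ≤ halfMass g r₀)
    (hM₁ : halfMass g r₁ ≤ 2 * ((m : ℝ) + 1) - η) :
    δ * η * (Real.log r₁ - Real.log r₀) ≤
      2 * ((m : ℝ) + 1) + (2 * ((m : ℝ) + 1) + e / 2) * r₁ := by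
  set C : ℝ := 2 * ((m : ℝ) + 1) + e / 2
  have hpos : ∀ x ∈ Icc r₀ r₁, 0 < x := fun x hx => hr₀.trans_le hx.1
  have hderiv : ∀ x ∈ Icc r₀ r₁, HasDerivAt (fun s => halfMass g s - δ * η * Real.log s + C * s)
      (‖g x‖ ^ 2 * x / 2 - δ * η * x⁻¹ + C * 1) x := fun x hx =>
    ((hasDerivAt_halfMass hg.continuous x).sub
      ((Real.hasDerivAt_log (hpos x hx).ne').const_mul _)).add ((hasDerivAt_id x).const_mul C)
  have hmono : MonotoneOn (fun s => halfMass g s - δ * η * Real.log s + C * s) (Icc r₀ r₁) := by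
    refine monotoneOn_of_hasDerivWithinAt_nonneg (convex_Icc _ _)
      (fun x hx => (hderiv x hx).continuousAt.continuousWithinAt)
      (fun x hx => (hderiv x (interior_subset hx)).hasDerivWithinAt) fun x hx => ?_
    replace hx := interior_subset hx
    have hx0 := hpos x hx
    have hdefect : -(C * x) ≤ logisticDefect m g x :=
      (abs_le.1 (hg.abs_logisticDefect_le hx0.le)).1
    have hlower := monotoneOn_halfMass hg.continuous hr₀.le hx0.le hx.1
    have hupper := monotoneOn_halfMass hg.continuous hx0.le (hx0.le.trans hx.2) hx.2
    have hgrowth : δ * η ≤ halfMass g x * (2 * ((m : ℝ) + 1) - halfMass g x) :=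
      mul_le_mul (by linarith) (by linarith) hη (halfMass_nonneg hx0.le)
    have hmul : ‖g x‖ ^ 2 * x / 2 - δ * η * x⁻¹ + C * 1 =
        (x ^ 2 * ‖g x‖ ^ 2 / 2 - δ * η + C * x) / x := by field_simp
    rw [hmul]
    unfold logisticDefect at hdefect
    exact div_nonneg (by linarith) hx0.le
  have hends := hmono ⟨le_rfl, hr⟩ ⟨hr, le_rfl⟩ hr
  have hC : 0 ≤ C * r₀ := by have := hg.energy_nonneg; positivity
  have := halfMass_nonneg (g := g) hr₀.le
  have := hg.halfMass_le (hr₀.le.trans hr)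
  simp only at hends
  linarith

lemma sq_mul_norm_sq_le_and_halfMass_le (hg : IsThresholdProfile m e g g') (hr : 0 < r)
    (hr₀ : r ≤ r₀) (hC : (2 * ((m : ℝ) + 1) + e / 2) * r₀ ≤ 1 / 16)
    (hM : halfMass g r₀ ≤ 1 / (32 * ((m : ℝ) + 1))) :
    r ^ 2 * ‖g r‖ ^ 2 ≤ 1 / 4 ∧ halfMass g r ≤ 1 / 2 := by
  have he := hg.energy_nonneg
  have hM0 := halfMass_nonneg (g := g) hr.le
  have hMr : halfMass g r ≤ 1 / (32 * ((m : ℝ) + 1)) :=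
    (monotoneOn_halfMass hg.continuous hr.le (hr.le.trans hr₀) hr₀).trans hM
  have hMul : halfMass g r * (2 * ((m : ℝ) + 1)) ≤ 1 / 16 := by
    rw [le_div_iff₀ (by positivity)] at hMr
    linarith
  have hdefect := (abs_le.1 (hg.abs_logisticDefect_le hr.le)).2
  have hCr : (2 * ((m : ℝ) + 1) + e / 2) * r ≤ (2 * ((m : ℝ) + 1) + e / 2) * r₀ := by gcongr
  unfold logisticDefect at hdefect
  have : 0 ≤ halfMass g r * m := by positivity
  constructor <;> nlinarith

lemma integral_norm_deriv_sq_le (hm : 1 ≤ m) (hg : IsThresholdProfile m e g g') (hr₀ : 0 < r₀)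
    (hC : (2 * ((m : ℝ) + 1) + e / 2) * r₀ ≤ 1 / 16)
    (hM : halfMass g r₀ ≤ 1 / (32 * ((m : ℝ) + 1))) :
    ∫ r in Ioi (0 : ℝ), ‖g' r‖ ^ 2 * r ≤ (e + m / (4 * r₀ ^ 2)) +
      (2 * e + 2 * ((m : ℝ) + 2) ^ 2 / r₀ ^ 2 * (4 * ((m : ℝ) + 1))) := by
  have hm1 : (1 : ℝ) ≤ m := by exact_mod_cast hm
  obtain ⟨B, hB⟩ := hg.exists_isProfile
  have henergy : ∀ S ⊆ Ioi (0 : ℝ), ∫ r in S, ‖bogomolnyiDeriv m g g' r‖ ^ 2 * r ≤ e :=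
    fun S hS => (setIntegral_sq_norm_mul_self_le hS
      hB.integrableOn_norm_bogomolnyiDeriv_sq).trans hg.energy_le
  have hsmall := fun r (hr : r ∈ Ioc 0 r₀) => hg.sq_mul_norm_sq_le_and_halfMass_le hr.1 hr.2 hC hM
  rw [integral_Ioi_eq_add hr₀.le hB.radialL2_deriv.integrable]
  refine add_le_add ((hB.integral_Ioc_norm_deriv_sq_le hr₀.le fun r hr => ?_).trans
    (add_le_add (henergy _ Ioc_subset_Ioi_self) ?_))
    ((hB.integral_Ioi_norm_deriv_sq_le hr₀ fun r hr =>
      hg.abs_sub_halfMass_le (hr₀.trans hr).le).trans ?_)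
  · obtain ⟨hgr, hMr⟩ := hsmall r hr
    nlinarith
  · have hgr := (hsmall r₀ ⟨hr₀, le_rfl⟩).1
    have := halfMass_nonneg (g := g) hr₀.le
    rw [le_div_iff₀ (by positivity)]
    calc (m - halfMass g r₀) * ‖g r₀‖ ^ 2 * (4 * r₀ ^ 2)
        = (m - halfMass g r₀) * (4 * (r₀ ^ 2 * ‖g r₀‖ ^ 2)) := by ring
      _ ≤ (m : ℝ) * 1 := mul_le_mul (by linarith) (by linarith) (by positivity) (by positivity)
      _ = (m : ℝ) := mul_one _
  · have hmass := setIntegral_sq_norm_mul_self_le (Ioi_subset_Ioi hr₀.le) hg.integrable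
    rw [hg.mass_eq] at hmass
    have := henergy _ (Ioi_subset_Ioi hr₀.le)
    gcongr

end IsThresholdProfile

lemma norm_integral_mul_norm_sq_mul_self_le {g : ℝ → ℂ} {w : ℝ → ℝ} {r κ K : ℝ} (hr : 0 ≤ r)
    (hg : IntegrableOn (fun s => ‖g s‖ ^ 2 * s) (Ioi 0)) (hκ0 : 0 ≤ κ)
    (hκ : ∀ s ∈ Ioc 0 r, |w s| ≤ κ) (hK : ∀ s, 0 < s → |w s| ≤ K) :
    ‖∫ s in Ioi (0 : ℝ), w s * ‖g s‖ ^ 2 * s‖ ≤ κ * (∫ s in Ioi (0 : ℝ), ‖g s‖ ^ 2 * s) +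
      K * ((∫ s in Ioi (0 : ℝ), ‖g s‖ ^ 2 * s) - 2 * halfMass g r) := by
  have hsub : Ioi r ⊆ Ioi 0 := Ioi_subset_Ioi hr
  have houter : IntegrableOn ((Ioi r).indicator fun s => K * (‖g s‖ ^ 2 * s)) (Ioi 0) :=
    (hg.const_mul K).indicator measurableSet_Ioi
  have hbound : ∀ s, 0 < s → ‖w s * ‖g s‖ ^ 2 * s‖ ≤
      κ * (‖g s‖ ^ 2 * s) + (Ioi r).indicator (fun s => K * (‖g s‖ ^ 2 * s)) s := fun s hs => by
    rw [mul_assoc, norm_mul, Real.norm_eq_abs, Real.norm_of_nonneg (by positivity)]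
    rcases le_or_gt s r with hsr | hsr
    · rw [indicator_of_notMem (notMem_Ioi.2 hsr), add_zero]
      gcongr
      exact hκ s ⟨hs, hsr⟩
    · rw [indicator_of_mem (mem_Ioi.2 hsr)]
      refine le_add_of_nonneg_of_le (by positivity) ?_
      gcongr
      exact hK s hs
  refine (norm_integral_Ioi_le_of_norm_le ((hg.const_mul κ).add houter) hbound).trans_eq ?_
  have hinner : ∫ s in Ioc 0 r, ‖g s‖ ^ 2 * s = 2 * halfMass g r := by
    rw [halfMass, intervalIntegral.integral_of_le hr]
    ring
  simp only [Pi.add_apply]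
  rw [integral_add (hg.const_mul κ) houter, integral_const_mul,
    setIntegral_indicator measurableSet_Ioi, inter_eq_self_of_subset_right hsub,
    integral_const_mul, ← hinner, integral_Ioi_eq_add hr hg, add_sub_cancel_left]

section Concentration

variable {ι : Type*} {l : Filter ι} {m : ℕ} {e : ℝ} {v v' : ι → ℝ → ℂ}

lemma eventually_le_halfMass (hm : 1 ≤ m) (hv : ∀ᶠ i in l, IsThresholdProfile m e (v i) (v' i))
    (hgrad : Tendsto (fun i => ∫ r in Ioi (0 : ℝ), ‖v' i r‖ ^ 2 * r) l atTop) {r₀ : ℝ}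
    (hr₀ : 0 < r₀) (hC : (2 * ((m : ℝ) + 1) + e / 2) * r₀ ≤ 1 / 16) :
    ∀ᶠ i in l, 1 / (32 * ((m : ℝ) + 1)) ≤ halfMass (v i) r₀ := by
  filter_upwards [hv, hgrad.eventually_gt_atTop _] with i hi hlarge
  by_contra! hlt
  exact hlarge.not_ge (hi.integral_norm_deriv_sq_le hm hr₀ hC hlt.le)

lemma tendsto_halfMass (hm : 1 ≤ m) (hv : ∀ᶠ i in l, IsThresholdProfile m e (v i) (v' i))
    (hgrad : Tendsto (fun i => ∫ r in Ioi (0 : ℝ), ‖v' i r‖ ^ 2 * r) l atTop) {r₁ : ℝ}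
    (hr₁ : 0 < r₁) : Tendsto (fun i => halfMass (v i) r₁) l (𝓝 (2 * ((m : ℝ) + 1))) := by
  refine tendsto_order.2 ⟨fun a ha => ?_, fun a ha => hv.mono fun i hi =>
    (hi.halfMass_le hr₁.le).trans_lt ha⟩
  set N : ℝ := 2 * ((m : ℝ) + 1)
  set C : ℝ := N + e / 2
  set δ : ℝ := 1 / (32 * ((m : ℝ) + 1))
  have hδ : 0 < δ := by positivity
  have hη : 0 < N - a := sub_pos.2 ha
  have hsmall : ∀ᶠ r₀ : ℝ in 𝓝[>] 0, C * r₀ ≤ 1 / 16 := by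
    have : Tendsto (fun r₀ => C * r₀) (𝓝[>] 0) (𝓝 (C * 0)) :=
      ((continuous_const_mul C).tendsto 0).mono_left nhdsWithin_le_nhds
    exact this.eventually_le_const (by norm_num)
  have hlog : ∀ᶠ r₀ in 𝓝[>] 0, N + C * r₁ < δ * (N - a) * (Real.log r₁ - Real.log r₀) := by
    have : Tendsto (fun r₀ => δ * (N - a) * (Real.log r₁ - Real.log r₀)) (𝓝[>] 0) atTop :=
      (tendsto_atTop_add_const_left _ _ (tendsto_neg_atBot_atTop.comp
        Real.tendsto_log_nhdsGT_zero)).const_mul_atTop (mul_pos hδ hη)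
    exact this.eventually_gt_atTop _
  obtain ⟨r₀, hCr₀, hlogr₀, hr₀, hr₀₁⟩ :=
    (hsmall.and (hlog.and (Ioo_mem_nhdsGT hr₁))).exists
  filter_upwards [hv, eventually_le_halfMass hm hv hgrad hr₀ hCr₀] with i hi hM₀
  by_contra! hle
  exact hlogr₀.not_ge (hi.mul_log_sub_log_le hδ.le hη.le hr₀ hr₀₁.le hM₀ (by linarith))

lemma tendsto_integral_mul_norm_sq (hm : 1 ≤ m)
    (hv : ∀ᶠ i in l, IsThresholdProfile m e (v i) (v' i))
    (hgrad : Tendsto (fun i => ∫ r in Ioi (0 : ℝ), ‖v' i r‖ ^ 2 * r) l atTop) {w : ℝ → ℝ} {K : ℝ}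
    (hw0 : Tendsto w (𝓝[>] 0) (𝓝 0)) (hwK : ∀ r, 0 < r → |w r| ≤ K) :
    Tendsto (fun i => ∫ r in Ioi (0 : ℝ), w r * ‖v i r‖ ^ 2 * r) l (𝓝 0) := by
  set N : ℝ := 2 * ((m : ℝ) + 1) with hN
  have hN0 : 0 < N := by positivity
  refine Metric.tendsto_nhds.2 fun ε hε => ?_
  set κ : ℝ := ε / (4 * N)
  have hκ : 0 < κ := by positivity
  obtain ⟨r₁, hr₁, hwκ⟩ : ∃ r₁ > 0, ∀ r ∈ Ioc 0 r₁, |w r| ≤ κ := by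
    have hnear := hw0.abs.eventually_le_const (by rwa [abs_zero] : |(0 : ℝ)| < κ)
    exact mem_nhdsGT_iff_exists_Ioc_subset.1 hnear
  have htail : Tendsto (fun i => K * (2 * N - 2 * halfMass (v i) r₁)) l (𝓝 0) := by
    have := (((tendsto_halfMass hm hv hgrad hr₁).const_mul 2).const_sub (2 * N)).const_mul K
    rwa [← hN, sub_self, mul_zero] at this
  filter_upwards [hv, htail.eventually_lt_const (half_pos hε)] with i hi htaili
  have hmass : ∫ r in Ioi (0 : ℝ), ‖v i r‖ ^ 2 * r = 2 * N := by rw [hi.mass_eq, hN]; ring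
  have hle := norm_integral_mul_norm_sq_mul_self_le hr₁.le hi.integrable hκ.le hwκ hwK
  have hκN : κ * (2 * N) = ε / 2 := by simp only [κ]; field_simp; norm_num
  rw [hmass, hκN] at hle
  rw [dist_zero_right]
  linarith

end Concentration

lemma tendsto_atTop_of_tendsto_sqrt_const_mul {ι : Type*} {l : Filter ι} {f : ι → ℝ} {k : ℝ}
    (hk : 0 < k) (hf : Tendsto (fun i => √(k * f i)) l atTop) : Tendsto f l atTop := by
  refine (tendsto_const_mul_atTop_of_pos hk).1 (tendsto_atTop.2 fun c => ?_)
  filter_upwards [hf.eventually_gt_atTop √c] with i hi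
  exact (lt_imp_lt_of_le_imp_le Real.sqrt_le_sqrt hi).le

section Blowup

variable {m : ℕ} {a b : ℝ} {u v : ℝ → ℝ → ℂ}

lemma IsRadialExtension.integral_norm_sq_eq {I : Set ℝ} {t : ℝ} (h : IsRadialExtension I u v)
    (ht : t ∈ I) (hmass : L2sq (u t) = 8 * Real.pi * (m + 1)) :
    ∫ r in Ioi (0 : ℝ), ‖v t r‖ ^ 2 * r = 4 * ((m : ℝ) + 1) := by
  rw [h.L2sq_eq ht, L2sq] at hmass
  refine mul_left_cancel₀ Real.two_pi_pos.ne' (hmass.trans ?_)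
  ring

lemma IsRadialExtension.exists_eventually_isThresholdProfile
    (h : IsRadialExtension (Ioo a b) u v) (hab : a < b) (hu : IsCSS m (Ioo a b) u)
    (hmass : ∀ t ∈ Ioo a b, L2sq (u t) = 8 * Real.pi * (m + 1))
    (hblow : Tendsto (fun t => √(2 * Real.pi * ∫ r in Ioi (0 : ℝ), ‖deriv (u t) r‖ ^ 2 * r))
      (𝓝[Ioo a b] b) atTop) :
    ∃ e, ∀ᶠ t in 𝓝[Ioo a b] b, IsThresholdProfile m e (v t) (deriv (v t)) := by
  obtain ⟨T, hT, hu'⟩ := exists_integrableOn_of_tendsto_sqrt_atTop hab hblow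
  have hsub : Ioo T b ⊆ Ioo a b := Ioo_subset_Ioo_left hT.1
  have hmass' : ∀ t ∈ Ioo T b, ∫ r in Ioi (0 : ℝ), ‖v t r‖ ^ 2 * r = 4 * ((m : ℝ) + 1) :=
    fun t ht => h.integral_norm_sq_eq (hsub ht) (hmass t (hsub ht))
  obtain ⟨s, hs⟩ := exists_between hT.2
  refine ⟨∫ r in Ioi (0 : ℝ), ‖bogomolnyiDeriv m (v s) (deriv (v s)) r‖ ^ 2 * r, ?_⟩
  rw [nhdsWithin_Ioo_eq_nhdsLT hab]
  filter_upwards [Ioo_mem_nhdsLT hT.2] with t ht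
  exact ⟨h.exists_isProfile hu (hsub ht) (hu' t ht), hmass' t ht,
    (h.integral_norm_bogomolnyiDeriv_sq_eq hu hsub hu' hmass' ht hs).le⟩

theorem stmt10_general (hm : 1 ≤ m) (hab : a < b) (hu : IsCSS m (Ioo a b) u)
    (hmass : ∀ t ∈ Ioo a b, L2sq (u t) = 8 * Real.pi * (m + 1))
    (hblow : Tendsto (fun t => √(2 * Real.pi * ∫ r in Ioi (0 : ℝ), ‖deriv (u t) r‖ ^ 2 * r))
      (𝓝[Ioo a b] b) atTop)
    {w : ℝ → ℝ} {K : ℝ} (hw : Continuous w) (hw0 : w 0 = 0) (hwK : ∀ r, 0 < r → |w r| ≤ K) :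
    Tendsto (fun t => 2 * Real.pi * ∫ r in Ioi (0 : ℝ), w r * ‖u t r‖ ^ 2 * r)
      (𝓝[Ioo a b] b) (𝓝 0) := by
  obtain ⟨v, hv⟩ := hu.exists_isRadialExtension hm isOpen_Ioo
  obtain ⟨e, he⟩ := hv.exists_eventually_isThresholdProfile hab hu hmass hblow
  have hgrad : Tendsto (fun t => ∫ r in Ioi (0 : ℝ), ‖deriv (v t) r‖ ^ 2 * r)
      (𝓝[Ioo a b] b) atTop := by
    refine (tendsto_atTop_of_tendsto_sqrt_const_mul Real.two_pi_pos hblow).congr' ?_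
    filter_upwards [self_mem_nhdsWithin] with t ht
    exact setIntegral_congr_fun measurableSet_Ioi fun r hr => by simp only [hv.deriv_eq ht hr]
  have hwlim : Tendsto w (𝓝[>] 0) (𝓝 0) := (hw.tendsto' 0 0 hw0).mono_left nhdsWithin_le_nhds
  have hlim := (tendsto_integral_mul_norm_sq hm he hgrad hwlim hwK).const_mul (2 * Real.pi)
  rw [mul_zero] at hlim
  refine hlim.congr' ?_
  filter_upwards [self_mem_nhdsWithin] with t ht
  congr 1
  exact setIntegral_congr_fun measurableSet_Ioi fun r hr => by simp only [hv.eq t ht r hr]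

end Blowup

lemma abs_cutoff_sq_mul_sq_le {φ : ℝ → ℝ} (hφ : ∀ x, 0 ≤ x → φ x ∈ Icc (0 : ℝ) 1)
    (hφ0 : ∀ x, 2 ≤ x → φ x = 0) {r R : ℝ} (hR : 0 < R) (hr : 0 < r) :
    |φ (r / R) ^ 2 * r ^ 2| ≤ (2 * R) ^ 2 := by
  rw [abs_of_nonneg (by positivity)]
  rcases le_total (r / R) 2 with hle | hge
  · obtain ⟨hφr0, hφr1⟩ := hφ (r / R) (by positivity)
    calc φ (r / R) ^ 2 * r ^ 2 ≤ 1 ^ 2 * (2 * R) ^ 2 := by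
          gcongr
          exact (div_le_iff₀ hR).1 hle
      _ = (2 * R) ^ 2 := by rw [one_pow, one_mul]
  · rw [hφ0 _ hge, zero_pow two_ne_zero, zero_mul]
    positivity

/-- the localized weighted norm `‖φ(|x|/R) |x| u(t)‖_{L²}` vanishes at the
blowup time. -/
theorem stmt10 (m : ℕ) (hm : 1 ≤ m) (u : ℝ → ℝ → ℂ)
    (hu : IsCSS m (Set.Ioo (-1 : ℝ) 0) u)
    (hmass : ∀ t ∈ Set.Ioo (-1 : ℝ) 0, L2sq (u t) = 8 * Real.pi * (m + 1))
    (hblow : Tendsto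
      (fun t => Real.sqrt (2 * Real.pi * ∫ r in Set.Ioi (0:ℝ), ‖deriv (u t) r‖ ^ 2 * r))
      (nhdsWithin 0 (Set.Ioo (-1 : ℝ) 0)) atTop) :
    ∀ R : ℝ, 0 < R → ∀ φ : ℝ → ℝ, ContDiff ℝ (⊤ : ℕ∞) φ →
      (∀ x : ℝ, 0 ≤ x → φ x ∈ Set.Icc (0:ℝ) 1) →
      (∀ x ∈ Set.Icc (0:ℝ) 1, φ x = 1) → (∀ x : ℝ, 2 ≤ x → φ x = 0) →
      Tendsto (fun t => 2 * Real.pi * ∫ r in Set.Ioi (0:ℝ),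
          φ (r / R) ^ 2 * r ^ 2 * ‖u t r‖ ^ 2 * r)
        (nhdsWithin 0 (Set.Ioo (-1 : ℝ) 0)) (nhds 0) := by
  intro R hR φ hφ hφ01 _ hφ0
  exact stmt10_general hm neg_one_lt_zero hu hmass hblow
    (w := fun r => φ (r / R) ^ 2 * r ^ 2) (by have := hφ.continuous; fun_prop) (by simp)
    fun r hr => abs_cutoff_sq_mul_sq_le hφ01 hφ0 hR hr
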